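/- Let G be an identifiable graph of order n with girth at least 5 and with no isolated vertices. Then γ^ID(G) ≤ (5n + 2ℓ(G))/7, where ℓ(G) is the number of leaves. -/

import Mathlib

/-!
Write `C` for a code and `D` for its complement. In girth at least 5, call `C` strong (`SC`) if it
dominates `D`, no two vertices of `D` have the same vertex as their only neighbour in `C`, and every
component of the graph induced by `C` has at least three vertices. Strong codes are identifying,
because two vertices that are not separated would lie on a triangle or on a 4-cycle (`WC.sep`, for
the slightly weaker codes `WC`). If `w` is the number of vertices of degree at least 2, then without
isolated vertices `w = n - ℓ`, so the bound says exactly that `7 |D| ≥ 2 w` can be achieved.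

The core is `col_of_good`: if no component has at most three vertices or is an 8-cycle, there is a
strong code with `7 |D| ≥ 2 w`. Consider a minimal counterexample (`Cex`), where minimality refers to
removing vertices and deleting edges.

* Vertices of degree at least 3 are pairwise non-adjacent (`Cex.indep`). Otherwise delete an edge
  between two of them; this changes no `w`, and the exceptional components it may create are
  treated directly (`pendant_small`, `pendant_oct`).
* There is no hub (`Hub.false`): a small set with a strong code whose complement is large enough to
  pay also for the vertices outside whose degree drops below 2 when the set is removed.
  Exceptional components of the rest are absorbed into the code one by one (`Absorb.one`,
  `Absorb.two`, `Absorb.three`, `Absorb.eight`), and then minimality applies (`Cex.finish`).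
* Suitable hubs show that no five vertices of degree at most 2 form a path (`Cex.no_path`), and that
  every vertex of degree at least 3 has at least three neighbours of degree 2 whose neighbours all
  have degree at least 3 (`Cex.inner_three`).
* Let `B` be the set of vertices of degree at least 3 and `M` the set of vertices of degree 2 with
  both neighbours in `B`. Take the code `B ∪ F` for a minimal `F ⊆ M` dominating `B`. A charging
  argument (`Cex.exists_link`) gives `14 |F| + 4 |B| ≤ 10 |M|`, which is the required bound on
  `B ∪ M`. All that remains are paths on at most four vertices, which are absorbed one at a
  time (`Cex.grow`). This is a contradiction (`Cex.false`).

In the theorem itself, the exceptional components are only paths on three vertices and 8-cycles: an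
isolated vertex is excluded by hypothesis, a single edge by identifiability, a triangle by the girth.
For both kinds an independent set in which every other vertex has two neighbours does the job. This
is a weak code (`WC`) but not a strong one.
-/

open SimpleGraph

/-- The closed neighbourhood of a vertex. -/
def closedNbr {V : Type*} (G : SimpleGraph V) (v : V) : Set V := insert v (G.neighborSet v)

/-- `C` is an identifying code of `G`. -/
def IsIdCode {V : Type*} (G : SimpleGraph V) (C : Set V) : Prop :=
  (∀ v : V, (closedNbr G v ∩ C).Nonempty) ∧
  ∀ u v : V, closedNbr G u ∩ C = closedNbr G v ∩ C → u = v

/-- A vertex of degree 1. -/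
def IsLeaf {V : Type*} (G : SimpleGraph V) (v : V) : Prop := (G.neighborSet v).ncard = 1

/-- The set of leaves of `G`. -/
def leaves {V : Type*} (G : SimpleGraph V) : Set V := {v | IsLeaf G v}

/-- The set of support vertices of `G`. -/
def supports {V : Type*} (G : SimpleGraph V) : Set V := {v | ∃ u, IsLeaf G u ∧ G.Adj v u}

/-- `G` is identifiable: distinct vertices have distinct closed neighbourhoods. -/
def Identifiable {V : Type*} (G : SimpleGraph V) : Prop :=
  ∀ u v : V, closedNbr G u = closedNbr G v → u = v

/-- `G` is twin-free: no two distinct vertices share an open or closed neighbourhood. -/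
def TwinFree {V : Type*} (G : SimpleGraph V) : Prop :=
  ∀ u v : V, u ≠ v →
    G.neighborSet u ≠ G.neighborSet v ∧ closedNbr G u ≠ closedNbr G v

/-! ### Strong codes -/

section Girth5Codes

open Classical

variable {V : Type*}

/-- No cycles of length 3 or 4. -/
structure G5 (H : SimpleGraph V) : Prop where
  no3 : ∀ a b c, H.Adj a b → H.Adj b c → H.Adj a c → False
  no4 : ∀ a b c d, a ≠ c → b ≠ d → H.Adj a b → H.Adj b c → H.Adj c d → H.Adj d a → False

/-- Neighbours of `v` inside `U`. The pair `(H, U)` stands for the subgraph of `H` induced by `U`. -/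
noncomputable def nb (H : SimpleGraph V) (U : Finset V) (v : V) : Finset V :=
  U.filter (fun w => H.Adj v w)

/-- Degree of `v` in the subgraph induced by `U`. -/
noncomputable def dg (H : SimpleGraph V) (U : Finset V) (v : V) : ℕ := (nb H U v).card

/-- Number of vertices of `S` having degree at least 2 in the subgraph induced by `U`. -/
noncomputable def wt (H : SimpleGraph V) (U S : Finset V) : ℕ :=
  (S.filter (fun v => 2 ≤ dg H U v)).card

/-- `K` is a union of components of the subgraph induced by `U` (when `K ⊆ U`). -/
def ClosedIn (H : SimpleGraph V) (U K : Finset V) : Prop :=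
  ∀ a ∈ K, ∀ b ∈ U, H.Adj a b → b ∈ K

/-- A union of components with at most three vertices, or a 2-regular one with eight vertices
(in girth at least 5 the latter is an 8-cycle). -/
def BadSet (H : SimpleGraph V) (U K : Finset V) : Prop :=
  K ⊆ U ∧ K.Nonempty ∧ ClosedIn H U K ∧ (K.card ≤ 3 ∨ (K.card = 8 ∧ ∀ v ∈ K, dg H U v = 2))

/-- No component of the subgraph induced by `U` is exceptional. -/
def Good (H : SimpleGraph V) (U : Finset V) : Prop := ∀ K, ¬ BadSet H U K

/-- `c` lies on a path with three vertices inside `C`. -/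
def InP3 (H : SimpleGraph V) (C : Finset V) (c : V) : Prop :=
  (∃ a ∈ C, ∃ b ∈ C, a ≠ b ∧ H.Adj c a ∧ H.Adj c b) ∨
  (∃ a ∈ C, ∃ b ∈ C, H.Adj c a ∧ H.Adj a b ∧ b ≠ c)

/-- Strong code `C` with complement `D`: `C` dominates `D`, no two vertices of `D` have the same
vertex as their only neighbour in `C`, and every component of the graph induced by `C` has at
least three vertices. -/
structure SC (H : SimpleGraph V) (C D : Finset V) : Prop where
  disj : Disjoint C D
  dom : ∀ d ∈ D, ∃ c ∈ C, H.Adj d c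
  priv : ∀ d ∈ D, ∀ e ∈ D, ∀ c ∈ C, d ≠ e → H.Adj d c → H.Adj e c →
    (∃ b ∈ C, b ≠ c ∧ H.Adj d b) ∨ (∃ b ∈ C, b ≠ c ∧ H.Adj e b)
  comp : ∀ c ∈ C, InP3 H C c

/-- The subgraph induced by `U` has a strong code whose complement contains at least two sevenths
of the number of vertices of degree at least 2. -/
def Col (H : SimpleGraph V) (U : Finset V) : Prop :=
  ∃ C D, C ∪ D = U ∧ SC H C D ∧ 2 * wt H U U ≤ 7 * D.card

lemma InP3.mono {H H' : SimpleGraph V} (h : H ≤ H') {C C' : Finset V} (hC : C ⊆ C') {c : V}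
    (hc : InP3 H C c) : InP3 H' C' c := by
  rcases hc with ⟨a, ha, b, hb, hab, h1, h2⟩ | ⟨a, ha, b, hb, h1, h2, h3⟩
  · exact Or.inl ⟨a, hC ha, b, hC hb, hab, h h1, h h2⟩
  · exact Or.inr ⟨a, hC ha, b, hC hb, h h1, h h2, h3⟩

lemma SC.nbr {H : SimpleGraph V} {C D : Finset V} (h : SC H C D) {c : V} (hc : c ∈ C) :
    ∃ a ∈ C, H.Adj c a := by
  rcases h.comp c hc with ⟨a, ha, b, hb, hab, h1, h2⟩ | ⟨a, ha, b, hb, h1, h2, h3⟩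
  · exact ⟨a, ha, h1⟩
  · exact ⟨a, ha, h1⟩

end Girth5Codes

/-! ### Gluing strong codes, degrees and 8-cycles -/

section Girth5Codes
open Classical
variable {V : Type*}
variable {H : SimpleGraph V} {U : Finset V}

lemma SC.mono {H' : SimpleGraph V} (h : H ≤ H') {C D : Finset V} (hs : SC H C D) :
    SC H' C D where
  disj := hs.disj
  dom d hd := by
    obtain ⟨c, hc, h1⟩ := hs.dom d hd
    exact ⟨c, hc, h h1⟩
  priv d hd e he c hc hde h1 h2 := by
    obtain ⟨a, ha, h3⟩ := hs.dom d hd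
    obtain ⟨b, hb, h4⟩ := hs.dom e he
    by_cases hac : a = c
    · by_cases hbc : b = c
      · subst hac; subst hbc
        rcases hs.priv d hd e he _ hc hde h3 h4 with ⟨x, hx, h5, h6⟩ | ⟨x, hx, h5, h6⟩
        · exact Or.inl ⟨x, hx, h5, h h6⟩
        · exact Or.inr ⟨x, hx, h5, h h6⟩
      · exact Or.inr ⟨b, hb, hbc, h h4⟩
    · exact Or.inl ⟨a, ha, hac, h h3⟩
  comp c hc := (hs.comp c hc).mono h subset_rfl

lemma SC.anti {C D D' : Finset V} (hs : SC H C D) (hD : D' ⊆ D) : SC H C D' where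
  disj := hs.disj.mono_right hD
  dom d hd := hs.dom d (hD hd)
  priv d hd e he := hs.priv d (hD hd) e (hD he)
  comp := hs.comp

/-- A vertex adjacent to a strong code lies on a three-vertex path of the enlarged code. -/
lemma SC.attach {C D C' : Finset V} (hs : SC H C D) (hC : C ⊆ C') {a b : V} (hb : b ∈ C)
    (ha : a ∉ C) (hab : H.Adj a b) : InP3 H C' a := by
  obtain ⟨x, hx, h1⟩ := hs.nbr hb
  exact Or.inr ⟨b, hC hb, x, hC hx, hab, h1, fun h => ha (h ▸ hx)⟩

/-- Gluing: a strong code may be enlarged by a second piece whose code vertices only need to lie on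
three-vertex paths of the union. -/
lemma SC.glue {C₁ D₁ C₂ D₂ : Finset V} (h1 : SC H C₁ D₁) (hd : Disjoint (C₁ ∪ D₁) (C₂ ∪ D₂))
    (hd2 : Disjoint C₂ D₂) (hdom : ∀ d ∈ D₂, ∃ c ∈ C₂, H.Adj d c)
    (hpriv : ∀ d ∈ D₂, ∀ e ∈ D₂, ∀ c ∈ C₂, d ≠ e → H.Adj d c → H.Adj e c →
      (∃ b ∈ C₁ ∪ C₂, b ≠ c ∧ H.Adj d b) ∨ (∃ b ∈ C₁ ∪ C₂, b ≠ c ∧ H.Adj e b))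
    (hcomp : ∀ c ∈ C₂, InP3 H (C₁ ∪ C₂) c) : SC H (C₁ ∪ C₂) (D₁ ∪ D₂) := by
  have hne : ∀ x ∈ C₁, ∀ y ∈ C₂, x ≠ y := by
    rintro x hx y hy rfl
    exact Finset.disjoint_left.1 hd (Finset.mem_union_left _ hx) (Finset.mem_union_left _ hy)
  have key1 : ∀ d ∈ D₁, ∀ c ∈ C₂, ∃ b ∈ C₁ ∪ C₂, b ≠ c ∧ H.Adj d b := by
    intro d hd c hc
    obtain ⟨b, hb, h⟩ := h1.dom d hd
    exact ⟨b, Finset.mem_union_left _ hb, hne b hb c hc, h⟩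
  have key2 : ∀ d ∈ D₂, ∀ c ∈ C₁, ∃ b ∈ C₁ ∪ C₂, b ≠ c ∧ H.Adj d b := by
    intro d hd c hc
    obtain ⟨b, hb, h⟩ := hdom d hd
    exact ⟨b, Finset.mem_union_right _ hb, (hne c hc b hb).symm, h⟩
  refine ⟨?_, ?_, ?_, ?_⟩
  · have := h1.disj
    simp only [Finset.disjoint_left, Finset.mem_union] at *
    grind
  · intro d hd
    rcases Finset.mem_union.1 hd with hd | hd
    · obtain ⟨c, hc, h⟩ := h1.dom d hd
      exact ⟨c, Finset.mem_union_left _ hc, h⟩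
    · obtain ⟨c, hc, h⟩ := hdom d hd
      exact ⟨c, Finset.mem_union_right _ hc, h⟩
  · intro d hd e he c hc hde h3 h4
    rcases Finset.mem_union.1 hc with hc | hc
    · rcases Finset.mem_union.1 hd with hd | hd
      · rcases Finset.mem_union.1 he with he | he
        · rcases h1.priv d hd e he c hc hde h3 h4 with ⟨b, hb, h⟩ | ⟨b, hb, h⟩
          · exact Or.inl ⟨b, Finset.mem_union_left _ hb, h⟩
          · exact Or.inr ⟨b, Finset.mem_union_left _ hb, h⟩
        · exact Or.inr (key2 e he c hc)
      · exact Or.inl (key2 d hd c hc)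
    · rcases Finset.mem_union.1 hd with hd | hd
      · exact Or.inl (key1 d hd c hc)
      · rcases Finset.mem_union.1 he with he | he
        · exact Or.inr (key1 e he c hc)
        · exact hpriv d hd e he c hc hde h3 h4
  · intro c hc
    rcases Finset.mem_union.1 hc with hc | hc
    · exact (h1.comp c hc).mono le_rfl Finset.subset_union_left
    · exact hcomp c hc

lemma SC.empty : SC H ∅ ∅ := ⟨by simp, by simp, by simp, by simp⟩

/-- A vertex of the complement adjacent to the code may be moved into it. -/
lemma SC.flip {C D : Finset V} (hs : SC H C D) {y : V} (hy : y ∈ D) :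
    SC H (C ∪ {y}) (D.erase y) := by
  have hyC : y ∉ C := Finset.disjoint_right.1 hs.disj hy
  obtain ⟨b, hb, h⟩ := hs.dom y hy
  have := (hs.anti (D.erase_subset y)).glue (C₂ := {y}) (D₂ := ∅)
    (by have := hs.disj; simp only [Finset.disjoint_left] at *; grind) (by simp) (by simp)
    (by simp) (by
      intro c hc
      rw [Finset.mem_singleton.1 hc]
      exact hs.attach Finset.subset_union_left hb hyC h)
  simpa using this

lemma SC.single {C D : Finset V} (h : SC H C D) {C₂ : Finset V} {d : V}
    (hd : Disjoint (C ∪ D) (C₂ ∪ {d}))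
    (hd2 : d ∉ C₂) (hdom : ∃ c ∈ C₂, H.Adj d c)
    (hcomp : ∀ c ∈ C₂, InP3 H (C ∪ C₂) c) : SC H (C ∪ C₂) (D ∪ {d}) := by
  refine h.glue hd (by simpa using hd2) (by simpa using hdom) ?_ hcomp
  intro a ha b hb _ _ hab
  exact absurd ((Finset.mem_singleton.1 ha).trans (Finset.mem_singleton.1 hb).symm) hab

lemma mem_nb {v w : V} : w ∈ nb H U v ↔ w ∈ U ∧ H.Adj v w := by simp [nb]

lemma dg_le {R : Finset V} (h : R ⊆ U) (v : V) : dg H R v ≤ dg H U v :=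
  Finset.card_le_card fun w hw => by
    rw [mem_nb] at *
    exact ⟨h hw.1, hw.2⟩

lemma dg_eq_of {R : Finset V} (h : R ⊆ U) {v : V} (hv : ∀ w ∈ U, H.Adj v w → w ∈ R) :
    dg H R v = dg H U v := by
  unfold dg
  congr 1
  ext w
  rw [mem_nb, mem_nb]
  exact ⟨fun ⟨a, b⟩ => ⟨h a, b⟩, fun ⟨a, b⟩ => ⟨hv w a b, b⟩⟩

lemma dg_two_of {v a : V} (h : dg H U v = 2) (ha : a ∈ U) (hva : H.Adj v a) :
    ∃ b ∈ U, b ≠ a ∧ H.Adj v b ∧ ∀ w ∈ U, H.Adj v w → w = a ∨ w = b := by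
  obtain ⟨x, y, hxy, he⟩ := Finset.card_eq_two.1 h
  have hm : ∀ w, (w ∈ U ∧ H.Adj v w) ↔ w = x ∨ w = y := by
    intro w
    rw [← mem_nb, he]
    simp
  have h1 := (hm a).1 ⟨ha, hva⟩
  have h2 := (hm x).2 (Or.inl rfl)
  have h3 := (hm y).2 (Or.inr rfl)
  rcases h1 with rfl | rfl
  · exact ⟨y, h3.1, hxy.symm, h3.2, fun w hw hh => (hm w).1 ⟨hw, hh⟩⟩
  · exact ⟨x, h2.1, hxy, h2.2, fun w hw hh => ((hm w).1 ⟨hw, hh⟩).symm⟩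

lemma dg_two_le {v a b : V} (ha : a ∈ U) (hb : b ∈ U) (hab : a ≠ b) (h1 : H.Adj v a)
    (h2 : H.Adj v b) : 2 ≤ dg H U v := by
  rw [← Finset.card_pair hab]
  exact Finset.card_le_card (by
    intro w hw
    rw [mem_nb]
    grind)

lemma dg_three_le {v a b c : V} (ha : a ∈ U) (hb : b ∈ U) (hc : c ∈ U) (hab : a ≠ b)
    (hac : a ≠ c) (hbc : b ≠ c) (h1 : H.Adj v a)
    (h2 : H.Adj v b) (h3 : H.Adj v c) : 3 ≤ dg H U v := by
  have : ({a, b, c} : Finset V).card = 3 := by grind [Finset.card_eq_three]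
  rw [← this]
  exact Finset.card_le_card (by
    intro w hw
    rw [mem_nb]
    grind)

lemma dg_pos_of {v a : V} (ha : a ∈ U) (h1 : H.Adj v a) : 1 ≤ dg H U v :=
  Finset.card_pos.2 ⟨a, mem_nb.2 ⟨ha, h1⟩⟩

lemma dg_pos {v : V} (h : 1 ≤ dg H U v) : ∃ a ∈ U, H.Adj v a := by
  obtain ⟨a, ha⟩ := Finset.card_pos.1 h
  exact ⟨a, mem_nb.1 ha⟩

lemma dg_two {v : V} (h : 2 ≤ dg H U v) : ∃ a ∈ U, ∃ b ∈ U, a ≠ b ∧ H.Adj v a ∧ H.Adj v b := by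
  obtain ⟨a, ha, b, hb, hab⟩ := Finset.one_lt_card.1 h
  exact ⟨a, (mem_nb.1 ha).1, b, (mem_nb.1 hb).1, hab, (mem_nb.1 ha).2, (mem_nb.1 hb).2⟩

lemma dg_one_uniq {v : V} (h : dg H U v ≤ 1) {a b : V} (ha : a ∈ U) (hb : b ∈ U)
    (h1 : H.Adj v a) (h2 : H.Adj v b) : a = b := by
  by_contra hab
  have := dg_two_le ha hb hab h1 h2
  omega

lemma dg_two_uniq {v : V} (h : dg H U v ≤ 2) {a b c : V} (ha : a ∈ U) (hb : b ∈ U) (hc : c ∈ U)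
    (h1 : H.Adj v a) (h2 : H.Adj v b) (h3 : H.Adj v c) (hab : a ≠ b) : c = a ∨ c = b := by
  by_contra hcc
  push Not at hcc
  have := dg_three_le ha hb hc hab hcc.1.symm hcc.2.symm h1 h2 h3
  omega

lemma card_of_nodup {l : List V} {S : Finset V} (hS : S = l.toFinset) (h : l.Nodup) :
    S.card = l.length := hS ▸ List.toFinset_card_of_nodup h

/-- The vertices `c0, …, c7` of `K` form, in this cyclic order, an 8-cycle that is a component. -/
structure Oct (H : SimpleGraph V) (U K : Finset V) (c0 c1 c2 c3 c4 c5 c6 c7 : V) : Prop where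
  eq : K = {c0, c1, c2, c3, c4, c5, c6, c7}
  nodup : [c0, c1, c2, c3, c4, c5, c6, c7].Nodup
  a01 : H.Adj c0 c1
  a12 : H.Adj c1 c2
  a23 : H.Adj c2 c3
  a34 : H.Adj c3 c4
  a45 : H.Adj c4 c5
  a56 : H.Adj c5 c6
  a67 : H.Adj c6 c7
  a70 : H.Adj c7 c0
  n0 : ∀ w ∈ U, H.Adj c0 w → w = c1 ∨ w = c7
  n1 : ∀ w ∈ U, H.Adj c1 w → w = c0 ∨ w = c2
  n2 : ∀ w ∈ U, H.Adj c2 w → w = c1 ∨ w = c3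
  n3 : ∀ w ∈ U, H.Adj c3 w → w = c2 ∨ w = c4
  n4 : ∀ w ∈ U, H.Adj c4 w → w = c3 ∨ w = c5
  n5 : ∀ w ∈ U, H.Adj c5 w → w = c4 ∨ w = c6
  n6 : ∀ w ∈ U, H.Adj c6 w → w = c5 ∨ w = c7
  n7 : ∀ w ∈ U, H.Adj c7 w → w = c6 ∨ w = c0

/-- A nonempty closed 2-regular set contains a cycle, hence at least five vertices. -/
lemma five_le (g : G5 H) {K : Finset V} (hKU : K ⊆ U) (hne : K.Nonempty) (hc : ClosedIn H U K)
    (h2 : ∀ v ∈ K, dg H U v = 2) : 5 ≤ K.card := by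
  obtain ⟨v, hv⟩ := hne
  obtain ⟨a, ha⟩ := dg_pos (show 1 ≤ dg H U v by rw [h2 v hv]; omega)
  obtain ⟨b, hb, hba, hvb, -⟩ := dg_two_of (h2 v hv) ha.1 ha.2
  have haK := hc v hv a ha.1 ha.2
  have hbK := hc v hv b hb hvb
  obtain ⟨x, hx, hxv, hax, -⟩ := dg_two_of (h2 a haK) (hKU hv) ha.2.symm
  obtain ⟨y, hy, hyv, hby, -⟩ := dg_two_of (h2 b hbK) (hKU hv) hvb.symm
  have hxK := hc a haK x hx hax
  have hyK := hc b hbK y hy hby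
  have e1 : x ≠ b := by
    rintro rfl
    exact g.no3 v a x ha.2 hax hvb
  have e2 : y ≠ a := by
    rintro rfl
    exact g.no3 v b y hvb hby ha.2
  have e3 : x ≠ y := by
    rintro rfl
    exact g.no4 v a x b hxv.symm hba.symm ha.2 hax hby.symm hvb.symm
  have hcard : ({v, a, b, x, y} : Finset V).card = 5 := by
    have := ha.2.ne
    have := hvb.ne
    have := hax.ne
    have := hby.ne
    rw [Finset.card_insert_of_notMem, Finset.card_insert_of_notMem, Finset.card_insert_of_notMem,
      Finset.card_insert_of_notMem, Finset.card_singleton] <;> grind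
  rw [← hcard]
  exact Finset.card_le_card (by grind)

set_option maxHeartbeats 1000000 in
/-- A union of components with eight vertices, all of degree 2, is an 8-cycle: two or more cycles
would need at least ten vertices, since each has length at least 5. -/
lemma oct_exists (g : G5 H) {K : Finset V} (hKU : K ⊆ U) (hc : ClosedIn H U K)
    (h8 : K.card = 8) (h2 : ∀ v ∈ K, dg H U v = 2) {c0 : V} (h0 : c0 ∈ K) :
    ∃ c1 c2 c3 c4 c5 c6 c7, Oct H U K c0 c1 c2 c3 c4 c5 c6 c7 := by
  have hstep : ∀ v ∈ K, ∀ a ∈ K, H.Adj v a → ∃ b ∈ K, b ≠ a ∧ H.Adj v b ∧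
      ∀ w ∈ U, H.Adj v w → w = a ∨ w = b := by
    intro v hv a ha hva
    obtain ⟨b, hb, h⟩ := dg_two_of (h2 v hv) (hKU ha) hva
    exact ⟨b, hc v hv b hb h.2.1, h⟩
  -- a proper closed subset of `K` leaves a closed 2-regular complement with at least five vertices
  have hsub : ∀ S : Finset V, S ⊆ K → ClosedIn H U S → 4 ≤ S.card → S = K := by
    intro S hS hcl h4
    by_contra hne
    have hcard := Finset.card_sdiff_of_subset hS
    have h5 := five_le (U := U) (K := K \ S) g (Finset.sdiff_subset.trans hKU)
      (by rw [Finset.sdiff_nonempty]; exact fun h => hne (hS.antisymm h))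
      (by
        intro a ha b hb hab
        rw [Finset.mem_sdiff] at *
        exact ⟨hc a ha.1 b hb hab, fun h => ha.2 (hcl b h a (hKU ha.1) hab.symm)⟩)
      (fun v hv => h2 v (Finset.mem_sdiff.1 hv).1)
    omega
  obtain ⟨c1, hc1⟩ := dg_pos (show 1 ≤ dg H U c0 by rw [h2 c0 h0]; omega)
  have k1 := hc c0 h0 c1 hc1.1 hc1.2
  have a01 := hc1.2
  obtain ⟨c7, k7, e71, a07, n0⟩ := hstep c0 h0 c1 k1 a01
  obtain ⟨c2, k2, e20, a12, n1⟩ := hstep c1 k1 c0 h0 a01.symm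
  obtain ⟨c6, k6, e60, a76, n7⟩ := hstep c7 k7 c0 h0 a07.symm
  obtain ⟨c3, k3, e31, a23, n2⟩ := hstep c2 k2 c1 k1 a12.symm
  obtain ⟨c5, k5, e57, a65, n6⟩ := hstep c6 k6 c7 k7 a76.symm
  obtain ⟨c4, k4, e42, a34, n3⟩ := hstep c3 k3 c2 k2 a23.symm
  obtain ⟨c4', k4', e46, a54, n5⟩ := hstep c5 k5 c6 k6 a65.symm
  have d01 := a01.ne
  have d07 := a07.ne
  have d12 := a12.ne
  have d76 := a76.ne
  have d23 := a23.ne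
  have d65 := a65.ne
  have d34 := a34.ne
  have d54 := a54.ne
  have e27 : c2 ≠ c7 := by rintro rfl; exact g.no3 _ _ _ a01 a12 a07
  have e61 : c6 ≠ c1 := by rintro rfl; exact g.no3 _ _ _ a07 a76 a01
  have e26 : c2 ≠ c6 := by
    rintro rfl; exact g.no4 _ _ _ _ e20.symm e71.symm a01 a12 a76.symm a07.symm
  have e30 : c3 ≠ c0 := by rintro rfl; exact g.no3 _ _ _ a12 a23 a01.symm
  have e37 : c3 ≠ c7 := by
    rintro rfl; exact g.no4 _ _ _ _ e20.symm e31.symm a01 a12 a23 a07.symm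
  have e36 : c3 ≠ c6 := by
    rintro rfl
    have h5c : ({c0, c1, c2, c3, c7} : Finset V).card = 5 :=
      card_of_nodup (l := [c0, c1, c2, c3, c7]) (by simp) (by
        simp only [List.nodup_cons, List.mem_cons, List.not_mem_nil, or_false, not_or,
          not_false_iff, List.nodup_nil, and_true]
        and_intros <;> first | assumption | (apply Ne.symm; assumption))
    have hn3 : ∀ w ∈ U, H.Adj c3 w → w = c2 ∨ w = c7 := by
      intro w hw h
      exact dg_two_uniq (h2 c3 k3).le (hKU k2) (hKU k7) hw a23.symm a76.symm h e27
    have := hsub {c0, c1, c2, c3, c7} (by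
      simp only [Finset.insert_subset_iff, Finset.singleton_subset_iff]
      exact ⟨h0, k1, k2, k3, k7⟩) (by
      intro a ha b hb hab
      simp only [Finset.mem_insert, Finset.mem_singleton] at ha ⊢
      rcases ha with rfl | rfl | rfl | rfl | rfl
      · rcases n0 b hb hab with rfl | rfl <;> simp
      · rcases n1 b hb hab with rfl | rfl <;> simp
      · rcases n2 b hb hab with rfl | rfl <;> simp
      · rcases hn3 b hb hab with rfl | rfl <;> simp
      · rcases n7 b hb hab with rfl | rfl <;> simp
      ) (by omega)
    rw [this] at h5c
    omega
  have e50 : c5 ≠ c0 := by rintro rfl; exact g.no3 _ _ _ a76 a65 a07.symm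
  have e51 : c5 ≠ c1 := by
    rintro rfl; exact (n1 c6 (hKU k6) a65.symm).elim e60 e26.symm
  have e52 : c5 ≠ c2 := by
    rintro rfl; exact (n2 c6 (hKU k6) a65.symm).elim e61 e36.symm
  have e53 : c5 ≠ c3 := by
    rintro rfl
    have h5c : ({c0, c1, c2, c5, c6, c7} : Finset V).card = 6 :=
      card_of_nodup (l := [c0, c1, c2, c5, c6, c7]) (by simp) (by
        simp only [List.nodup_cons, List.mem_cons, List.not_mem_nil, or_false, not_or,
          not_false_iff, List.nodup_nil, and_true]
        and_intros <;> first | assumption | (apply Ne.symm; assumption))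
    have hn3 : ∀ w ∈ U, H.Adj c5 w → w = c2 ∨ w = c6 := by
      intro w hw h
      exact dg_two_uniq (h2 c5 k5).le (hKU k2) (hKU k6) hw a23.symm a65.symm h e26
    have := hsub {c0, c1, c2, c5, c6, c7} (by
      simp only [Finset.insert_subset_iff, Finset.singleton_subset_iff]
      exact ⟨h0, k1, k2, k5, k6, k7⟩) (by
      intro a ha b hb hab
      simp only [Finset.mem_insert, Finset.mem_singleton] at ha ⊢
      rcases ha with rfl | rfl | rfl | rfl | rfl | rfl
      · rcases n0 b hb hab with rfl | rfl <;> simp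
      · rcases n1 b hb hab with rfl | rfl <;> simp
      · rcases n2 b hb hab with rfl | rfl <;> simp
      · rcases hn3 b hb hab with rfl | rfl <;> simp
      · rcases n6 b hb hab with rfl | rfl <;> simp
      · rcases n7 b hb hab with rfl | rfl <;> simp
      ) (by omega)
    rw [this] at h5c
    omega
  have e40 : c4 ≠ c0 := by rintro rfl; exact (n0 c3 (hKU k3) a34.symm).elim e31 e37
  have e41 : c4 ≠ c1 := by rintro rfl; exact (n1 c3 (hKU k3) a34.symm).elim e30 d23.symm
  have e47 : c4 ≠ c7 := by rintro rfl; exact (n7 c3 (hKU k3) a34.symm).elim e30 e36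
  have e46' : c4 ≠ c6 := by rintro rfl; exact (n6 c3 (hKU k3) a34.symm).elim e37 e53.symm
  have e45 : c4 ≠ c5 := by
    rintro rfl
    have h5c : ({c0, c1, c2, c3, c4, c6, c7} : Finset V).card = 7 :=
      card_of_nodup (l := [c0, c1, c2, c3, c4, c6, c7]) (by simp) (by
        simp only [List.nodup_cons, List.mem_cons, List.not_mem_nil, or_false, not_or,
          not_false_iff, List.nodup_nil, and_true]
        and_intros <;> first | assumption | (apply Ne.symm; assumption))
    have hn4 : ∀ w ∈ U, H.Adj c4 w → w = c3 ∨ w = c6 := by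
      intro w hw h
      exact dg_two_uniq (h2 c4 k4).le (hKU k3) (hKU k6) hw a34.symm a65.symm h e36
    have := hsub {c0, c1, c2, c3, c4, c6, c7} (by
      simp only [Finset.insert_subset_iff, Finset.singleton_subset_iff]
      exact ⟨h0, k1, k2, k3, k4, k6, k7⟩) (by
      intro a ha b hb hab
      simp only [Finset.mem_insert, Finset.mem_singleton] at ha ⊢
      rcases ha with rfl | rfl | rfl | rfl | rfl | rfl | rfl
      · rcases n0 b hb hab with rfl | rfl <;> simp
      · rcases n1 b hb hab with rfl | rfl <;> simp
      · rcases n2 b hb hab with rfl | rfl <;> simp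
      · rcases n3 b hb hab with rfl | rfl <;> simp
      · rcases hn4 b hb hab with rfl | rfl <;> simp
      · rcases n6 b hb hab with rfl | rfl <;> simp
      · rcases n7 b hb hab with rfl | rfl <;> simp
      ) (by omega)
    rw [this] at h5c
    omega
  have nd : [c0, c1, c2, c3, c4, c5, c6, c7].Nodup := by
    simp only [List.nodup_cons, List.mem_cons, List.not_mem_nil, or_false, not_or, not_false_iff,
      List.nodup_nil, and_true]
    and_intros <;> first | assumption | (apply Ne.symm; assumption)
  have hKeq : K = {c0, c1, c2, c3, c4, c5, c6, c7} := by
    symm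
    apply Finset.eq_of_subset_of_card_le
    · simp only [Finset.insert_subset_iff, Finset.singleton_subset_iff]
      exact ⟨h0, k1, k2, k3, k4, k5, k6, k7⟩
    · rw [h8]
      exact (card_of_nodup (by simp) nd).ge
  have e44 : c4' = c4 := by
    obtain ⟨z, hz, hz3, hz4, nz⟩ := hstep c4 k4 c3 k3 a34.symm
    have hzc : z = c5 := by
      rw [hKeq] at hz
      simp only [Finset.mem_insert, Finset.mem_singleton] at hz
      have h := hz4.symm
      rcases hz with rfl | rfl | rfl | rfl | rfl | rfl | rfl | rfl
      · exact ((n0 c4 (hKU k4) h).elim e41 e47).elim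
      · exact ((n1 c4 (hKU k4) h).elim e40 e42).elim
      · exact ((n2 c4 (hKU k4) h).elim e41 d34.symm).elim
      · exact (hz3 rfl).elim
      · exact (hz4.ne rfl).elim
      · rfl
      · exact ((n6 c4 (hKU k4) h).elim e47 e45).elim
      · exact ((n7 c4 (hKU k4) h).elim e40 e46').elim
    rw [hzc] at hz4
    exact ((n5 c4 (hKU k4) hz4.symm).resolve_left e46').symm
  subst e44
  obtain ⟨z, hz, hz3, hz4, nz⟩ := hstep c4' k4 c3 k3 a34.symm
  have : z = c5 := ((nz c5 (hKU k5) a54.symm).resolve_left e53).symm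
  subst this
  refine ⟨c1, c2, c3, c4', z, c6, c7, hKeq, nd, a01, a12, a23, a34, a54.symm, a65.symm, a76.symm,
    a07.symm, n0, n1, n2, n3, nz, ?_, ?_, ?_⟩
  · intro w hw h; exact (n5 w hw h).symm
  · intro w hw h; exact (n6 w hw h).symm
  · intro w hw h; exact (n7 w hw h).symm

end Girth5Codes

/-! ### Minimal counterexamples -/

section Girth5Codes
open Classical
variable {V : Type*}
variable {H : SimpleGraph V} {U : Finset V}

lemma wt_union {S T : Finset V} (h : Disjoint S T) : wt H U (S ∪ T) = wt H U S + wt H U T := by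
  unfold wt
  rw [Finset.filter_union, Finset.card_union_of_disjoint]
  exact Finset.disjoint_filter_filter h

lemma wt_le (S : Finset V) : wt H U S ≤ S.card := Finset.card_filter_le _ _

lemma wt_mono {S T : Finset V} (h : S ⊆ T) : wt H U S ≤ wt H U T :=
  Finset.card_le_card (Finset.filter_subset_filter _ h)

lemma wt_single (v : V) : wt H U {v} = if 2 ≤ dg H U v then 1 else 0 := by
  unfold wt
  rw [Finset.filter_singleton]
  split_ifs <;> simp

lemma wt_insert {v : V} {S : Finset V} (h : v ∉ S) :
    wt H U (insert v S) = (if 2 ≤ dg H U v then 1 else 0) + wt H U S := by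
  rw [Finset.insert_eq, wt_union (by simpa using h), wt_single]

lemma wt_congr {U' S : Finset V} (h : ∀ v ∈ S, dg H U v = dg H U' v) : wt H U S = wt H U' S := by
  unfold wt
  congr 1
  exact Finset.filter_congr fun v hv => by rw [h v hv]

lemma ClosedIn.compl {K : Finset V} (h : ClosedIn H U K) (hK : K ⊆ U) : ClosedIn H U (U \ K) := by
  intro a ha b hb hab
  rw [Finset.mem_sdiff] at *
  exact ⟨hb, fun hbK => ha.2 (h b hbK a ha.1 hab.symm)⟩

lemma ClosedIn.dg {K : Finset V} (h : ClosedIn H U K) (hK : K ⊆ U) {v : V} (hv : v ∈ K) :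
    dg H K v = dg H U v := dg_eq_of hK fun w hw hvw => h v hv w hw hvw

lemma ClosedIn.trans {K L : Finset V} (h : ClosedIn H U K) (hK : K ⊆ U) (hL : L ⊆ K)
    (h' : ClosedIn H K L) : ClosedIn H U L :=
  fun a ha b hb hab => h' a ha b (h a (hL ha) b hb hab) hab

lemma BadSet.lift {K L : Finset V} (h : ClosedIn H U K) (hK : K ⊆ U) (hL : BadSet H K L) :
    BadSet H U L := by
  obtain ⟨h1, h2, h3, h4⟩ := hL
  refine ⟨h1.trans hK, h2, h.trans hK h1 h3, h4.imp_right fun h5 => ⟨h5.1, fun v hv => ?_⟩⟩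
  rw [← h.dg hK (h1 hv)]
  exact h5.2 v hv

lemma Good.sub {K : Finset V} (hg : Good H U) (h : ClosedIn H U K) (hK : K ⊆ U) : Good H K :=
  fun L hL => hg L (hL.lift h hK)

lemma good_empty : Good H ∅ := fun K hK => hK.2.1.ne_empty (Finset.subset_empty.1 hK.1)

/-- Strong codes of a union of components and of the rest together form a strong code. -/
lemma Col.union {K : Finset V} (h : ClosedIn H U K) (hK : K ⊆ U) (h1 : Col H K)
    (h2 : Col H (U \ K)) : Col H U := by
  obtain ⟨C, D, rfl, hs, hw⟩ := h1
  obtain ⟨C', D', he, hs', hw'⟩ := h2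
  refine ⟨C ∪ C', D ∪ D', ?_, hs.glue ?_ hs'.disj hs'.dom ?_ ?_, ?_⟩
  · rw [Finset.union_union_union_comm, he]
    exact Finset.union_sdiff_of_subset hK
  · rw [he]
    exact Finset.disjoint_sdiff
  · intro d hd e he c hc hde h3 h4
    rcases hs'.priv d hd e he c hc hde h3 h4 with ⟨b, hb, h⟩ | ⟨b, hb, h⟩
    · exact Or.inl ⟨b, Finset.mem_union_right _ hb, h⟩
    · exact Or.inr ⟨b, Finset.mem_union_right _ hb, h⟩
  · intro c hc
    exact (hs'.comp c hc).mono le_rfl Finset.subset_union_right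
  · have e1 : wt H U (C ∪ D) = wt H (C ∪ D) (C ∪ D) := wt_congr fun v hv => (h.dg hK hv).symm
    have e2 : wt H U (U \ (C ∪ D)) = wt H (U \ (C ∪ D)) (U \ (C ∪ D)) :=
      wt_congr fun v hv => ((h.compl hK).dg Finset.sdiff_subset hv).symm
    have e3 := wt_union (H := H) (U := U) (Finset.disjoint_sdiff (s := C ∪ D) (t := U))
    rw [Finset.union_sdiff_of_subset hK] at e3
    have e4 : (D ∪ D').card = D.card + D'.card := by
      apply Finset.card_union_of_disjoint
      have : Disjoint (C ∪ D) (C' ∪ D') := by rw [he]; exact Finset.disjoint_sdiff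
      exact (this.mono_left Finset.subset_union_right).mono_right Finset.subset_union_right
    omega

/-- A minimal graph without exceptional components and without a large-complement strong code. -/
structure Cex (H : SimpleGraph V) (U : Finset V) : Prop where
  g : G5 H
  good : Good H U
  ncol : ¬ Col H U
  ihR : ∀ R, R ⊂ U → Good H R → Col H R
  ihE : ∀ H' : SimpleGraph V, H' ≤ H → (∃ u ∈ U, ∃ v ∈ U, H.Adj u v ∧ ¬ H'.Adj u v) →
    Good H' U → Col H' U

/-- A minimal counterexample is connected. -/
lemma Cex.conn (h : Cex H U) {K : Finset V} (hK : K ⊆ U) (hne : K.Nonempty)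
    (hc : ClosedIn H U K) : K = U := by
  by_contra hKU
  refine h.ncol (Col.union hc hK (h.ihR K ?_ (h.good.sub hc hK))
    (h.ihR (U \ K) ?_ (h.good.sub (hc.compl hK) Finset.sdiff_subset)))
  · exact hK.ssubset_of_ne hKU
  · exact Finset.sdiff_ssubset hK hne

lemma Cex.four_le (h : Cex H U) : 4 ≤ U.card := by
  by_contra hlt
  have hne : U.Nonempty := by
    rw [Finset.nonempty_iff_ne_empty]
    rintro rfl
    exact h.ncol ⟨∅, ∅, by simp, SC.empty, by simp [wt]⟩
  exact h.good U ⟨subset_rfl, hne, fun a _ b hb _ => hb, Or.inl (by omega)⟩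

/-- If a strong code of `T` pays for `T` and for all vertices outside `T` whose degree drops below 2
when `T` is removed, the remaining graph must have exceptional components. -/
lemma Cex.finish (h : Cex H U) {C D : Finset V} (hT : C ∪ D ⊆ U) (hne : (C ∪ D).Nonempty)
    (hs : SC H C D) (hg : Good H (U \ (C ∪ D)))
    (hw : 2 * wt H U (C ∪ D) + 2 * ((U \ (C ∪ D)).filter
      (fun v => 2 ≤ dg H U v ∧ dg H (U \ (C ∪ D)) v ≤ 1)).card ≤ 7 * D.card) : False := by
  obtain ⟨C', D', he, hs', hw'⟩ := h.ihR _ (Finset.sdiff_ssubset hT hne) hg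
  apply h.ncol
  refine ⟨C ∪ C', D ∪ D', ?_, hs.glue ?_ hs'.disj hs'.dom ?_ ?_, ?_⟩
  · rw [Finset.union_union_union_comm, he]
    exact Finset.union_sdiff_of_subset hT
  · rw [he]
    exact Finset.disjoint_sdiff
  · intro d hd e he c hc hde h3 h4
    rcases hs'.priv d hd e he c hc hde h3 h4 with ⟨b, hb, h⟩ | ⟨b, hb, h⟩
    · exact Or.inl ⟨b, Finset.mem_union_right _ hb, h⟩
    · exact Or.inr ⟨b, Finset.mem_union_right _ hb, h⟩
  · intro c hc
    exact (hs'.comp c hc).mono le_rfl Finset.subset_union_right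
  · have e3 := wt_union (H := H) (U := U) (Finset.disjoint_sdiff (s := C ∪ D) (t := U))
    rw [Finset.union_sdiff_of_subset hT] at e3
    have e4 : (D ∪ D').card = D.card + D'.card := by
      apply Finset.card_union_of_disjoint
      have : Disjoint (C ∪ D) (C' ∪ D') := by rw [he]; exact Finset.disjoint_sdiff
      exact (this.mono_left Finset.subset_union_right).mono_right Finset.subset_union_right
    have e5 : wt H U (U \ (C ∪ D)) ≤ wt H (U \ (C ∪ D)) (U \ (C ∪ D)) +
        ((U \ (C ∪ D)).filter (fun v => 2 ≤ dg H U v ∧ dg H (U \ (C ∪ D)) v ≤ 1)).card := by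
      unfold wt
      refine (Finset.card_le_card ?_).trans (Finset.card_union_le _ _)
      intro v hv
      rw [Finset.mem_filter] at hv
      rw [Finset.mem_union, Finset.mem_filter, Finset.mem_filter]
      by_cases h2 : 2 ≤ dg H (U \ (C ∪ D)) v
      · exact Or.inl ⟨hv.1, h2⟩
      · exact Or.inr ⟨hv.1, hv.2, by omega⟩
    omega

/-- Once `T = C ∪ D` is all of `U`, only the count on `T` matters. -/
lemma Cex.full (h : Cex H U) {C D : Finset V} (hT : C ∪ D = U) (hs : SC H C D)
    (hw : 2 * wt H U U ≤ 7 * D.card) : False := h.ncol ⟨C, D, hT, hs, hw⟩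

end Girth5Codes

/-! ### Vertices of large degree are independent -/

section Girth5Codes
open Classical
variable {V : Type*}
variable {H : SimpleGraph V} {U : Finset V}

lemma G5.mono {H' : SimpleGraph V} (g : G5 H) (h : H' ≤ H) : G5 H' :=
  ⟨fun a b c h1 h2 h3 => g.no3 a b c (h h1) (h h2) (h h3),
    fun a b c d h1 h2 h3 h4 h5 h6 => g.no4 a b c d h1 h2 (h h3) (h h4) (h h5) (h h6)⟩

/-- A set whose only outgoing edge is `uv`, with `u` of degree at least 3, has more than three
vertices: otherwise `u` would carry two leaves, one of which could be removed. -/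
lemma Cex.pendant_small (h : Cex H U) {K : Finset V} (hK : K ⊆ U) {u v : V} (hu : u ∈ K)
    (hv : v ∈ U) (hvK : v ∉ K) (huv : H.Adj u v)
    (hcl : ∀ a ∈ K, ∀ b ∈ U, H.Adj a b → b ∈ K ∨ (a = u ∧ b = v))
    (hdu : 3 ≤ dg H U u) (hdv : 3 ≤ dg H U v) (hc : K.card ≤ 3) : False := by
  have h2 : 2 ≤ ((nb H U u).erase v).card := by
    rw [Finset.card_erase_of_mem (mem_nb.2 ⟨hv, huv⟩)]
    unfold dg at hdu
    omega
  obtain ⟨a, ha, b, hb, hab⟩ := Finset.one_lt_card.1 h2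
  simp only [Finset.mem_erase, mem_nb] at ha hb
  have haK : a ∈ K := (hcl u hu a ha.2.1 ha.2.2).resolve_right fun h => ha.1 h.2
  have hbK : b ∈ K := (hcl u hu b hb.2.1 hb.2.2).resolve_right fun h => hb.1 h.2
  have hKe : ∀ x ∈ K, x = u ∨ x = a ∨ x = b := by
    have hs : ({u, a, b} : Finset V) ⊆ K := by
      simp only [Finset.insert_subset_iff, Finset.singleton_subset_iff]
      exact ⟨hu, haK, hbK⟩
    have hcard : ({u, a, b} : Finset V).card = 3 :=
      Finset.card_eq_three.2 ⟨u, a, b, ha.2.2.ne, hb.2.2.ne, hab, rfl⟩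
    have := Finset.eq_of_subset_of_card_le hs (by omega)
    intro x hx
    rw [← this] at hx
    simpa using hx
  have hnab : ¬ H.Adj a b := fun hh => h.g.no3 u a b ha.2.2 hh hb.2.2
  have hau : ∀ w ∈ U, H.Adj a w → w = u := by
    intro w hw haw
    have hwK := (hcl a haK w hw haw).resolve_right fun h => ha.2.2.ne h.1.symm
    rcases hKe w hwK with rfl | rfl | rfl
    · rfl
    · exact (haw.ne rfl).elim
    · exact (hnab haw).elim
  have hbu : ∀ w ∈ U, H.Adj b w → w = u := by
    intro w hw hbw
    have hwK := (hcl b hbK w hw hbw).resolve_right fun h => hb.2.2.ne h.1.symm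
    rcases hKe w hwK with rfl | rfl | rfl
    · rfl
    · exact (hnab hbw.symm).elim
    · exact (hbw.ne rfl).elim
  have hsub : U \ {b} ⊆ U := Finset.sdiff_subset
  have hmem : ∀ x, x ∈ U \ {b} ↔ x ∈ U ∧ x ≠ b := by simp
  have hbv : b ≠ v := fun e => hvK (e ▸ hbK)
  have hav : a ≠ v := fun e => hvK (e ▸ haK)
  have hvR : v ∈ U \ {b} := (hmem v).2 ⟨hv, hbv.symm⟩
  have haR : a ∈ U \ {b} := (hmem a).2 ⟨ha.2.1, hab⟩
  have huR : u ∈ U \ {b} := (hmem u).2 ⟨hK hu, hb.2.2.ne⟩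
  have hdeg : ∀ w ∈ U \ {b}, w ≠ u → dg H (U \ {b}) w = dg H U w := by
    intro w hw hwu
    refine dg_eq_of hsub fun x hx hwx => (hmem x).2 ⟨hx, ?_⟩
    rintro rfl
    exact hwu (hbu w (hsub hw) hwx.symm)
  have hgood : Good H (U \ {b}) := by
    intro L ⟨hL, hLne, hLc, hL8⟩
    by_cases huL : u ∈ L
    · have haL := hLc u huL a haR ha.2.2
      have hvL := hLc u huL v hvR huv
      have hd2 : 2 ≤ ((nb H U v).erase u).card := by
        rw [Finset.card_erase_of_mem (mem_nb.2 ⟨hK hu, huv.symm⟩)]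
        unfold dg at hdv
        omega
      obtain ⟨x, hx, y, hy, hxy⟩ := Finset.one_lt_card.1 hd2
      simp only [Finset.mem_erase, mem_nb] at hx hy
      have hL' : ∀ x ∈ U, H.Adj v x → x ≠ u → x ∈ L := by
        intro x hx hvx hxu
        refine hLc v hvL x ((hmem x).2 ⟨hx, ?_⟩) hvx
        rintro rfl
        exact huv.ne (hbu v hv hvx.symm).symm
      have hxa : x ≠ a := by rintro rfl; exact huv.ne (hau v hv hx.2.2.symm).symm
      have hya : y ≠ a := by rintro rfl; exact huv.ne (hau v hv hy.2.2.symm).symm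
      have h4 : ({u, a, x, y} : Finset V) ⊆ L := by
        simp only [Finset.insert_subset_iff, Finset.singleton_subset_iff]
        exact ⟨huL, haL, hL' x hx.2.1 hx.2.2 hx.1, hL' y hy.2.1 hy.2.2 hy.1⟩
      have h4c : ({u, a, x, y} : Finset V).card = 4 :=
        card_of_nodup (l := [u, a, x, y]) (by simp) (by
          simp only [List.nodup_cons, List.mem_cons, List.not_mem_nil, or_false, not_or,
            not_false_iff, List.nodup_nil, and_true]
          exact ⟨⟨ha.2.2.ne, hx.1.symm, hy.1.symm⟩, ⟨hxa.symm, hya.symm⟩, hxy⟩)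
      have := Finset.card_le_card h4
      rcases hL8 with h3 | ⟨-, h8⟩
      · omega
      · have := h8 a haL
        obtain ⟨p, hp, q, hq, hpq, h5, h6⟩ := dg_two this.ge
        exact hpq ((hau p (hsub hp) h5).trans (hau q (hsub hq) h6).symm)
    · have hne : ∀ w ∈ L, w ≠ u := fun w hw e => huL (e ▸ hw)
      refine h.good L ⟨hL.trans hsub, hLne, ?_, hL8.imp_right fun h8 => ⟨h8.1, fun w hw => ?_⟩⟩
      · intro x hx y hy hxy
        refine hLc x hx y ((hmem y).2 ⟨hy, ?_⟩) hxy
        rintro rfl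
        exact hne x hx (hbu x (hsub (hL hx)) hxy.symm)
      · rw [← hdeg w (hL hw) (hne w hw)]
        exact h8.2 w hw
  obtain ⟨C, D, he, hs, hw⟩ := h.ihR (U \ {b})
    (Finset.sdiff_ssubset (by simpa using hK hbK) (by simp)) hgood
  have huC : u ∈ C := by
    have : a ∈ C ∪ D := by rw [he]; exact haR
    have hsb : C ⊆ U := fun x hx => hsub (he ▸ Finset.mem_union_left D hx)
    rcases Finset.mem_union.1 this with hh | hh
    · obtain ⟨c, hc, hac⟩ := hs.nbr hh
      rwa [hau c (hsb hc) hac] at hc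
    · obtain ⟨c, hc, hac⟩ := hs.dom a hh
      rwa [hau c (hsb hc) hac] at hc
  have hbCD : b ∉ C ∪ D := by rw [he]; simp
  have hbC : b ∉ C := fun hh => hbCD (Finset.mem_union_left _ hh)
  have hs' : SC H (C ∪ {b}) (D ∪ ∅) := by
    refine hs.glue (by simpa using hbCD) (by simp) (by simp) (by simp) ?_
    intro c hc
    rw [Finset.mem_singleton.1 hc]
    exact hs.attach Finset.subset_union_left huC hbC hb.2.2.symm
  rw [Finset.union_empty] at hs'
  refine h.full ?_ hs' ?_
  · rw [Finset.union_right_comm, he]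
    exact Finset.sdiff_union_of_subset (by simpa using hK hbK)
  · refine le_trans ?_ hw
    apply Nat.mul_le_mul_left
    apply Finset.card_le_card
    intro w hwU
    rw [Finset.mem_filter] at hwU ⊢
    have hwb : w ≠ b := by
      rintro rfl
      obtain ⟨p, hp, q, hq, hpq, h5, h6⟩ := dg_two hwU.2
      exact hpq ((hbu p hp h5).trans (hbu q hq h6).symm)
    refine ⟨(hmem w).2 ⟨hwU.1, hwb⟩, ?_⟩
    by_cases hwu : w = u
    · subst hwu
      exact dg_two_le haR hvR hav ha.2.2 huv
    · rw [hdeg w ((hmem w).2 ⟨hwU.1, hwb⟩) hwu]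
      exact hwU.2

/-- The four inner vertices of a path on six vertices form a strong code, with the two ends as
complement, provided that the ends have no common neighbour among them. -/
lemma sc_path6 {c2 c3 c4 c5 c6 c7 : V} (nd : [c2, c3, c4, c5, c6, c7].Nodup) (a23 : H.Adj c2 c3)
    (a34 : H.Adj c3 c4) (a45 : H.Adj c4 c5) (a56 : H.Adj c5 c6) (a67 : H.Adj c6 c7)
    (key : ∀ c, c = c3 ∨ c = c4 ∨ c = c5 ∨ c = c6 → H.Adj c2 c → H.Adj c7 c → False) :
    SC H {c3, c4, c5, c6} {c2, c7} := by
  simp only [List.nodup_cons, List.mem_cons, List.not_mem_nil, or_false, not_or, not_false_iff,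
    List.nodup_nil, and_true] at nd
  obtain ⟨⟨e23, e24, e25, e26, e27⟩, ⟨e34, e35, e36, e37⟩, ⟨e45, e46, e47⟩, ⟨e56, e57⟩, e67⟩ := nd
  refine ⟨?_, ?_, ?_, ?_⟩
  · rw [Finset.disjoint_left]
    simp only [Finset.mem_insert, Finset.mem_singleton]
    rintro d (rfl | rfl | rfl | rfl) (hd | hd)
    exacts [e23 hd.symm, e37 hd, e24 hd.symm, e47 hd, e25 hd.symm, e57 hd, e26 hd.symm, e67 hd]
  · simp only [Finset.mem_insert, Finset.mem_singleton]
    rintro d (rfl | rfl)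
    · exact ⟨c3, by simp, a23⟩
    · exact ⟨c6, by simp, a67.symm⟩
  · simp only [Finset.mem_insert, Finset.mem_singleton]
    rintro d (rfl | rfl) e (rfl | rfl) c hc hde h1 h2
    · exact (hde rfl).elim
    · exact (key c hc h1 h2).elim
    · exact (key c hc h2 h1).elim
    · exact (hde rfl).elim
  · simp only [Finset.mem_insert, Finset.mem_singleton]
    rintro c (rfl | rfl | rfl | rfl)
    · exact Or.inr ⟨c4, by simp, c5, by simp, a34, a45, Ne.symm e35⟩
    · exact Or.inl ⟨c3, by simp, c5, by simp, e35, a34.symm, a45⟩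
    · exact Or.inl ⟨c4, by simp, c6, by simp, e46, a45.symm, a56⟩
    · exact Or.inr ⟨c5, by simp, c4, by simp, a56.symm, a45.symm, e46⟩

/-- A set whose only outgoing edge is `uv` is not an 8-cycle through `u`. -/
lemma Cex.pendant_oct (h : Cex H U) {K : Finset V} (hK : K ⊆ U) {v : V}
    {c0 c1 c2 c3 c4 c5 c6 c7 : V} (hv : v ∈ U) (hvK : v ∉ K) (huv : H.Adj c0 v)
    {H' : SimpleGraph V} (hle : H' ≤ H)
    (hH : ∀ a ∈ K, ∀ b ∈ U, H.Adj a b → H'.Adj a b ∨ (a = c0 ∧ b = v))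
    (ho : Oct H' U K c0 c1 c2 c3 c4 c5 c6 c7) (hdv : 3 ≤ dg H U v) : False := by
  have hKm : ∀ x, x ∈ K ↔ x = c0 ∨ x = c1 ∨ x = c2 ∨ x = c3 ∨ x = c4 ∨ x = c5 ∨ x = c6 ∨
      x = c7 := by
    intro x
    rw [ho.eq]
    simp
  have m0 : c0 ∈ K := by simp [hKm]
  have m1 : c1 ∈ K := by simp [hKm]
  have m2 : c2 ∈ K := by simp [hKm]
  have m3 : c3 ∈ K := by simp [hKm]
  have m4 : c4 ∈ K := by simp [hKm]
  have m5 : c5 ∈ K := by simp [hKm]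
  have m6 : c6 ∈ K := by simp [hKm]
  have m7 : c7 ∈ K := by simp [hKm]
  have nd := ho.nodup
  simp only [List.nodup_cons, List.mem_cons, List.not_mem_nil, or_false, not_or, not_false_iff,
    List.nodup_nil, and_true] at nd
  obtain ⟨⟨e01, e02, e03, e04, e05, e06, e07⟩, ⟨e12, e13, e14, e15, e16, e17⟩,
    ⟨e23, e24, e25, e26, e27⟩, ⟨e34, e35, e36, e37⟩, ⟨e45, e46, e47⟩, ⟨e56, e57⟩, e67⟩ := nd
  have hH1 : ∀ a ∈ K, a ≠ c0 → ∀ b ∈ U, H.Adj a b → H'.Adj a b := fun a ha h0 b hb hab =>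
    (hH a ha b hb hab).resolve_right fun hh => h0 hh.1
  have n1 : ∀ w ∈ U, H.Adj c1 w → w = c0 ∨ w = c2 := fun w hw hh =>
    ho.n1 w hw (hH1 c1 m1 (Ne.symm e01) w hw hh)
  have n2 : ∀ w ∈ U, H.Adj c2 w → w = c1 ∨ w = c3 := fun w hw hh =>
    ho.n2 w hw (hH1 c2 m2 (Ne.symm e02) w hw hh)
  have n3 : ∀ w ∈ U, H.Adj c3 w → w = c2 ∨ w = c4 := fun w hw hh =>
    ho.n3 w hw (hH1 c3 m3 (Ne.symm e03) w hw hh)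
  have n4 : ∀ w ∈ U, H.Adj c4 w → w = c3 ∨ w = c5 := fun w hw hh =>
    ho.n4 w hw (hH1 c4 m4 (Ne.symm e04) w hw hh)
  have n5 : ∀ w ∈ U, H.Adj c5 w → w = c4 ∨ w = c6 := fun w hw hh =>
    ho.n5 w hw (hH1 c5 m5 (Ne.symm e05) w hw hh)
  have n6 : ∀ w ∈ U, H.Adj c6 w → w = c5 ∨ w = c7 := fun w hw hh =>
    ho.n6 w hw (hH1 c6 m6 (Ne.symm e06) w hw hh)
  have n7 : ∀ w ∈ U, H.Adj c7 w → w = c6 ∨ w = c0 := fun w hw hh =>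
    ho.n7 w hw (hH1 c7 m7 (Ne.symm e07) w hw hh)
  -- the part of the cycle that is removed; `c0` and `c1` stay attached to `v`
  obtain ⟨T, hT⟩ : ∃ T : Finset V, T = {c3, c4, c5, c6} ∪ {c2, c7} := ⟨_, rfl⟩
  have hTm : ∀ x, x ∈ T ↔ x = c2 ∨ x = c3 ∨ x = c4 ∨ x = c5 ∨ x = c6 ∨ x = c7 := by
    intro x
    rw [hT]
    simp only [Finset.mem_union, Finset.mem_insert, Finset.mem_singleton]
    tauto
  have hTK : T ⊆ K := fun x hx => (hKm x).2 (Or.inr (Or.inr ((hTm x).1 hx)))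
  have hTn : ∀ x ∈ T, ∀ w ∈ U, H.Adj x w → w ∈ T ∨ w = c0 ∨ w = c1 := by
    intro x hx w hw hxw
    have hx' := (hTm x).1 hx
    have hwK : w ∈ K := by
      rcases hx' with rfl | rfl | rfl | rfl | rfl | rfl
      · rcases n2 w hw hxw with rfl | rfl <;> assumption
      · rcases n3 w hw hxw with rfl | rfl <;> assumption
      · rcases n4 w hw hxw with rfl | rfl <;> assumption
      · rcases n5 w hw hxw with rfl | rfl <;> assumption
      · rcases n6 w hw hxw with rfl | rfl <;> assumption
      · rcases n7 w hw hxw with rfl | rfl <;> assumption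
    rcases (hKm w).1 hwK with hh | hh | hh
    · exact Or.inr (Or.inl hh)
    · exact Or.inr (Or.inr hh)
    · exact Or.inl ((hTm w).2 hh)
  have h0T : c0 ∉ T := by
    rw [hTm]
    simp only [e02, e03, e04, e05, e06, e07, or_self, not_false_iff]
  have h1T : c1 ∉ T := by
    rw [hTm]
    simp only [e12, e13, e14, e15, e16, e17, or_self, not_false_iff]
  have hmem : ∀ x, x ∈ U \ T ↔ x ∈ U ∧ x ∉ T := by simp
  have h0R : c0 ∈ U \ T := (hmem _).2 ⟨hK m0, h0T⟩
  have h1R : c1 ∈ U \ T := (hmem _).2 ⟨hK m1, h1T⟩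
  have hvR : v ∈ U \ T := (hmem _).2 ⟨hv, fun hh => hvK (hTK hh)⟩
  have h1v : c1 ≠ v := fun e => hvK (e ▸ m1)
  have hRdeg : ∀ w ∈ U \ T, w ≠ c0 → w ≠ c1 → dg H (U \ T) w = dg H U w := by
    intro w hw h0 h1
    refine dg_eq_of Finset.sdiff_subset fun x hx hwx => (hmem x).2 ⟨hx, fun hxT => ?_⟩
    rcases hTn x hxT w ((hmem w).1 hw).1 hwx.symm with hh | hh | hh
    · exact ((hmem w).1 hw).2 hh
    · exact h0 hh
    · exact h1 hh
  have h1n : ∀ w ∈ U \ T, H.Adj c1 w → w = c0 := by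
    intro w hw hh
    refine (n1 w ((hmem w).1 hw).1 hh).resolve_right ?_
    rintro rfl
    exact ((hmem w).1 hw).2 (by simp [hTm])
  have hgood : Good H (U \ T) := by
    intro L ⟨hL, hLne, hLc, hL8⟩
    by_cases huL : c0 ∈ L
    · have haL := hLc c0 huL c1 h1R (hle ho.a01)
      have hvL := hLc c0 huL v hvR huv
      have hd2 : 2 ≤ ((nb H U v).erase c0).card := by
        rw [Finset.card_erase_of_mem (mem_nb.2 ⟨hK m0, huv.symm⟩)]
        unfold dg at hdv
        omega
      obtain ⟨x, hx, y, hy, hxy⟩ := Finset.one_lt_card.1 hd2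
      simp only [Finset.mem_erase, mem_nb] at hx hy
      have hnK : ∀ x ∈ U, H.Adj v x → x ≠ c0 → x ∉ K := by
        intro x hx hvx hx0 hxK
        rcases hH x hxK v hv hvx.symm with hh | hh
        · rcases (hKm x).1 hxK with rfl | rfl | rfl | rfl | rfl | rfl | rfl | rfl
          · exact hx0 rfl
          · rcases n1 v hv hvx.symm with rfl | rfl <;> contradiction
          · rcases n2 v hv hvx.symm with rfl | rfl <;> contradiction
          · rcases n3 v hv hvx.symm with rfl | rfl <;> contradiction
          · rcases n4 v hv hvx.symm with rfl | rfl <;> contradiction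
          · rcases n5 v hv hvx.symm with rfl | rfl <;> contradiction
          · rcases n6 v hv hvx.symm with rfl | rfl <;> contradiction
          · rcases n7 v hv hvx.symm with rfl | rfl <;> contradiction
        · exact hx0 hh.1
      have hL' : ∀ x ∈ U, H.Adj v x → x ≠ c0 → x ∈ L := by
        intro x hx hvx hxu
        exact hLc v hvL x ((hmem x).2 ⟨hx, fun hh => hnK x hx hvx hxu (hTK hh)⟩) hvx
      have hxa : x ≠ c1 := fun e => hnK x hx.2.1 hx.2.2 hx.1 (e ▸ m1)
      have hya : y ≠ c1 := fun e => hnK y hy.2.1 hy.2.2 hy.1 (e ▸ m1)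
      have h4 : ({c0, c1, x, y} : Finset V) ⊆ L := by
        simp only [Finset.insert_subset_iff, Finset.singleton_subset_iff]
        exact ⟨huL, haL, hL' x hx.2.1 hx.2.2 hx.1, hL' y hy.2.1 hy.2.2 hy.1⟩
      have h4c : ({c0, c1, x, y} : Finset V).card = 4 :=
        card_of_nodup (l := [c0, c1, x, y]) (by simp) (by
          simp only [List.nodup_cons, List.mem_cons, List.not_mem_nil, or_false, not_or,
            not_false_iff, List.nodup_nil, and_true]
          exact ⟨⟨e01, hx.1.symm, hy.1.symm⟩, ⟨hxa.symm, hya.symm⟩, hxy⟩)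
      have := Finset.card_le_card h4
      rcases hL8 with h3 | ⟨-, h8⟩
      · omega
      · obtain ⟨p, hp, q, hq, hpq, h5, h6⟩ := dg_two (h8 c1 haL).ge
        exact hpq ((h1n p hp h5).trans (h1n q hq h6).symm)
    · have hne0 : ∀ w ∈ L, w ≠ c0 := fun w hw e => huL (e ▸ hw)
      have hne1 : ∀ w ∈ L, w ≠ c1 := fun w hw e =>
        huL (hLc w hw c0 h0R (e ▸ (hle ho.a01).symm))
      refine h.good L ⟨hL.trans Finset.sdiff_subset, hLne, ?_,
        hL8.imp_right fun h8 => ⟨h8.1, fun w hw => ?_⟩⟩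
      · intro x hx y hy hxy
        refine hLc x hx y ((hmem y).2 ⟨hy, fun hyT => ?_⟩) hxy
        rcases hTn y hyT x ((hmem x).1 (hL hx)).1 hxy.symm with hh | hh | hh
        · exact ((hmem x).1 (hL hx)).2 hh
        · exact hne0 x hx hh
        · exact hne1 x hx hh
      · rw [← hRdeg w (hL hw) (hne0 w hw) (hne1 w hw)]
        exact h8.2 w hw
  have hs : SC H {c3, c4, c5, c6} {c2, c7} := by
    have key : ∀ c, c = c3 ∨ c = c4 ∨ c = c5 ∨ c = c6 → H.Adj c2 c → H.Adj c7 c → False := by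
      intro c hc h2 h7
      have hcU : c ∈ U := hK (by rw [hKm]; tauto)
      rcases n2 c hcU h2 with rfl | rfl
      · rcases hc with hc | hc | hc | hc <;> contradiction
      · rcases n7 c hcU h7 with hc | hc
        · exact e36 hc
        · exact e03 hc.symm
    refine sc_path6 ?_ (hle ho.a23) (hle ho.a34) (hle ho.a45) (hle ho.a56) (hle ho.a67) key
    have := ho.nodup
    simp only [List.nodup_cons] at this ⊢
    exact this.2.2
  refine h.finish (by rw [← hT]; exact hTK.trans hK) (by simp) hs (by rwa [← hT]) ?_
  rw [← hT]
  have h6 : T.card = 6 := by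
    refine card_of_nodup (l := [c2, c3, c4, c5, c6, c7]) ?_ ?_
    · ext x
      simp [hTm]
    · have := ho.nodup
      simp only [List.nodup_cons] at this ⊢
      exact this.2.2
  have hw := wt_le (H := H) (U := U) T
  have hb : ((U \ T).filter (fun v => 2 ≤ dg H U v ∧ dg H (U \ T) v ≤ 1)).card ≤ 1 := by
    rw [← Finset.card_singleton c1]
    apply Finset.card_le_card
    intro w hw
    rw [Finset.mem_filter] at hw
    have hw2 : 2 ≤ dg H U w ∧ dg H (U \ T) w ≤ 1 := hw.2
    rw [Finset.mem_singleton]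
    by_contra h1
    by_cases h0 : w = c0
    · subst h0
      have := dg_two_le h1R hvR h1v (hle ho.a01) huv
      omega
    · have := hRdeg w hw.1 h0 h1
      omega
  have hD : ({c2, c7} : Finset V).card = 2 := Finset.card_pair e27
  omega

/-- Deleting an edge between two vertices of degree at least 3 does not change the number of
vertices of degree at least 2, so in a minimal counterexample no such edge exists. -/
lemma Cex.indep (h : Cex H U) {u v : V} (hu : u ∈ U) (hv : v ∈ U) (hdu : 3 ≤ dg H U u)
    (hdv : 3 ≤ dg H U v) : ¬ H.Adj u v := by
  intro huv
  obtain ⟨H', hadj⟩ : ∃ H' : SimpleGraph V, ∀ a b, H'.Adj a b ↔ H.Adj a b ∧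
      ¬ ((a = u ∧ b = v) ∨ (a = v ∧ b = u)) := by
    refine ⟨H.deleteEdges {s(u, v)}, fun a b => ?_⟩
    simp [SimpleGraph.deleteEdges_adj]
  have hle : H' ≤ H := fun a b hab => ((hadj a b).1 hab).1
  have hdw : ∀ w, w ≠ u → w ≠ v → dg H' U w = dg H U w := by
    intro w h1 h2
    unfold dg
    congr 1
    ext x
    rw [mem_nb, mem_nb, hadj]
    tauto
  have hdu2 : 2 ≤ dg H' U u := by
    have : nb H' U u = (nb H U u).erase v := by
      ext x
      rw [Finset.mem_erase, mem_nb, mem_nb, hadj]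
      have := huv.ne
      tauto
    unfold dg at *
    rw [this, Finset.card_erase_of_mem (mem_nb.2 ⟨hv, huv⟩)]
    omega
  have hdv2 : 2 ≤ dg H' U v := by
    have : nb H' U v = (nb H U v).erase u := by
      ext x
      rw [Finset.mem_erase, mem_nb, mem_nb, hadj]
      have := huv.ne
      tauto
    unfold dg at *
    rw [this, Finset.card_erase_of_mem (mem_nb.2 ⟨hu, huv.symm⟩)]
    omega
  have hnot : ¬ Good H' U := by
    intro hg
    obtain ⟨C, D, he, hs, hw⟩ := h.ihE H' hle ⟨u, hu, v, hv, huv, by simp [hadj]⟩ hg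
    refine h.full he (hs.mono hle) (le_trans ?_ hw)
    apply Nat.mul_le_mul_left
    apply Finset.card_le_card
    intro w hw
    rw [Finset.mem_filter] at hw ⊢
    refine ⟨hw.1, ?_⟩
    by_cases h1 : w = u
    · rw [h1]; exact hdu2
    · by_cases h2 : w = v
      · rw [h2]; exact hdv2
      · rw [hdw w h1 h2]; exact hw.2
  unfold Good at hnot
  push Not at hnot
  obtain ⟨K, hK, hKne, hKc, hK8⟩ := hnot
  have g' := h.g.mono hle
  -- a bad set containing exactly one of the two ends
  have one : ∀ x y, x ∈ K → y ∈ U → y ∉ K → H.Adj x y → 3 ≤ dg H U x → 3 ≤ dg H U y →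
      ((x = u ∧ y = v) ∨ (x = v ∧ y = u)) → False := by
    intro x y hx hy hyK hxy hdx hdy hor
    have hcl : ∀ a ∈ K, ∀ b ∈ U, H.Adj a b → H'.Adj a b ∨ (a = x ∧ b = y) := by
      intro a ha b hb hab
      by_cases hh : H'.Adj a b
      · exact Or.inl hh
      · rw [hadj] at hh
        have hay : a ≠ y := fun e => hyK (e ▸ ha)
        grind
    rcases hK8 with h3 | ⟨h8, h2⟩
    · refine h.pendant_small hK hx hy hyK hxy (fun a ha b hb hab => ?_) hdx hdy h3
      exact (hcl a ha b hb hab).imp_left (hKc a ha b hb)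
    · obtain ⟨c1, c2, c3, c4, c5, c6, c7, ho⟩ := oct_exists g' hK hKc h8 h2 hx
      exact h.pendant_oct hK hy hyK hxy hle hcl ho hdy
  by_cases huK : u ∈ K
  · by_cases hvK : v ∈ K
    · have hcl : ClosedIn H U K := by
        intro a ha b hb hab
        by_cases hh : H'.Adj a b
        · exact hKc a ha b hb hh
        · rw [hadj] at hh
          have : (a = u ∧ b = v) ∨ (a = v ∧ b = u) := by tauto
          rcases this with ⟨-, rfl⟩ | ⟨-, rfl⟩ <;> assumption
      have hKU := h.conn hK hKne hcl
      have := h.four_le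
      rcases hK8 with h3 | ⟨h8, h2⟩
      · rw [hKU] at h3
        omega
      · obtain ⟨c1, c2, c3, c4, c5, c6, c7, ho⟩ := oct_exists g' hK hKc h8 h2 huK
        have nd := ho.nodup
        simp only [List.nodup_cons, List.mem_cons, List.not_mem_nil, or_false, not_or,
          not_false_iff, List.nodup_nil, and_true] at nd
        obtain ⟨⟨e01, e02, e03, e04, e05, e06, e07⟩, ⟨e12, e13, e14, e15, e16, e17⟩,
          ⟨e23, e24, e25, e26, e27⟩, ⟨e34, e35, e36, e37⟩, ⟨e45, e46, e47⟩, ⟨e56, e57⟩, e67⟩ := nd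
        have b01 := hle ho.a01
        have b12 := hle ho.a12
        have b23 := hle ho.a23
        have b34 := hle ho.a34
        have b45 := hle ho.a45
        have b56 := hle ho.a56
        have b67 := hle ho.a67
        have b70 := hle ho.a70
        -- girth at least 5 forces the chord to join antipodal vertices
        have hv4 : v = c4 := by
          have hv' := hvK
          rw [ho.eq] at hv'
          simp only [Finset.mem_insert, Finset.mem_singleton] at hv'
          rcases hv' with rfl | rfl | rfl | rfl | rfl | rfl | rfl | rfl
          · exact (huv.ne rfl).elim
          · exact (((hadj _ _).1 ho.a01).2 (by simp)).elim
          · exact (h.g.no3 _ _ _ b01 b12 huv).elim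
          · exact (h.g.no4 _ _ _ _ e02 e13 b01 b12 b23 huv.symm).elim
          · rfl
          · exact (h.g.no4 _ _ _ _ e06 e57 huv b56 b67 b70).elim
          · exact (h.g.no3 _ _ _ b67 b70 huv.symm).elim
          · exact (((hadj _ _).1 ho.a70).2 (by simp)).elim
        subst hv4
        have hs : SC H {u, c3, v, c5, c7} {c1, c2, c6} := by
          refine ⟨?_, ?_, ?_, ?_⟩
          · rw [Finset.disjoint_left]
            simp only [Finset.mem_insert, Finset.mem_singleton]
            rintro d (rfl | rfl | rfl | rfl | rfl) (hd | hd | hd)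
            exacts [e01 hd, e02 hd, e06 hd, e13 hd.symm, e23 hd.symm, e36 hd, e14 hd.symm,
              e24 hd.symm, e46 hd, e15 hd.symm, e25 hd.symm, e56 hd, e17 hd.symm, e27 hd.symm,
              e67 hd.symm]
          · simp only [Finset.mem_insert, Finset.mem_singleton]
            rintro d (rfl | rfl | rfl)
            · exact ⟨u, by simp, b01.symm⟩
            · exact ⟨c3, by simp, b23⟩
            · exact ⟨c5, by simp, b56.symm⟩
          · have h6 : ∀ c, ∃ b ∈ ({u, c3, v, c5, c7} : Finset V), b ≠ c ∧ H.Adj c6 b := by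
              intro c
              by_cases hc : c = c7
              · exact ⟨c5, by simp, by rwa [hc], b56.symm⟩
              · exact ⟨c7, by simp, fun e => hc e.symm, b67⟩
            intro d hd e he c hc hde h1 h2
            simp only [Finset.mem_insert, Finset.mem_singleton] at hd he
            rcases hd with rfl | rfl | rfl
            · rcases he with rfl | rfl | rfl
              · exact (hde rfl).elim
              · exact (h.g.no3 _ _ _ b12 h2 h1).elim
              · exact Or.inr (h6 c)
            · rcases he with rfl | rfl | rfl
              · exact (h.g.no3 _ _ _ b12 h1 h2).elim
              · exact (hde rfl).elim
              · exact Or.inr (h6 c)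
            · exact Or.inl (h6 c)
          · simp only [Finset.mem_insert, Finset.mem_singleton]
            rintro c (rfl | rfl | rfl | rfl | rfl)
            · exact Or.inl ⟨v, by simp, c7, by simp, e47, huv, b70.symm⟩
            · exact Or.inr ⟨v, by simp, c5, by simp, b34, b45, Ne.symm e35⟩
            · exact Or.inl ⟨c3, by simp, c5, by simp, e35, b34.symm, b45⟩
            · exact Or.inr ⟨v, by simp, c3, by simp, b45.symm, b34.symm, e35⟩
            · exact Or.inr ⟨u, by simp, v, by simp, b70, huv, e47⟩
        refine h.full ?_ hs ?_
        · rw [← hKU, ho.eq]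
          ext x
          simp only [Finset.mem_union, Finset.mem_insert, Finset.mem_singleton]
          tauto
        · have hw := wt_le (H := H) (U := U) U
          rw [← hKU] at hw
          have : ({c1, c2, c6} : Finset V).card = 3 :=
            Finset.card_eq_three.2 ⟨c1, c2, c6, e12, e16, e26, rfl⟩
          rw [← hKU]
          omega
    · exact one u v huK hv hvK huv hdu hdv (Or.inl ⟨rfl, rfl⟩)
  · by_cases hvK : v ∈ K
    · exact one v u hvK hu huK huv.symm hdv hdu (Or.inr ⟨rfl, rfl⟩)
    · have hne : ∀ w ∈ K, w ≠ u ∧ w ≠ v := fun w hw => ⟨fun e => huK (e ▸ hw), fun e => hvK (e ▸ hw)⟩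
      refine h.good K ⟨hK, hKne, ?_, hK8.imp_right fun h8 => ⟨h8.1, fun w hw => ?_⟩⟩
      · intro a ha b hb hab
        refine hKc a ha b hb ((hadj a b).2 ⟨hab, ?_⟩)
        have := hne a ha
        tauto
      · rw [← hdw w (hne w hw).1 (hne w hw).2]
        exact h8.2 w hw

end Girth5Codes

/-! ### Hubs and absorption -/

section Girth5Codes
open Classical
variable {V : Type*}
variable {H : SimpleGraph V} {U : Finset V}

/-- A bad set of minimal cardinality is a single vertex, an edge, a path on three vertices or an
8-cycle. -/
lemma bad_shape (g : G5 H) {K : Finset V} (hK : BadSet H U K)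
    (hmin : ∀ L, BadSet H U L → K.card ≤ L.card) :
    (∃ z, K = {z}) ∨ (∃ a b, a ≠ b ∧ K = {a, b} ∧ H.Adj a b) ∨
    (∃ a b c, a ≠ b ∧ a ≠ c ∧ b ≠ c ∧ K = {a, b, c} ∧ H.Adj a b ∧ H.Adj b c ∧ ¬ H.Adj a c) ∨
    (K.card = 8 ∧ ∀ v ∈ K, dg H U v = 2) := by
  obtain ⟨hKU, hne, hc, h38⟩ := hK
  rcases h38 with h3 | h8
  · have hsub : ∀ L ⊆ K, L.Nonempty → ClosedIn H U L → K.card ≤ L.card := fun L hL hLne hLc =>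
      hmin L ⟨hL.trans hKU, hLne, hLc, Or.inl ((Finset.card_le_card hL).trans h3)⟩
    have hpos := Finset.card_pos.2 hne
    obtain h | h | h : K.card = 1 ∨ K.card = 2 ∨ K.card = 3 := by omega
    · exact Or.inl (Finset.card_eq_one.1 h)
    · obtain ⟨a, b, hab, rfl⟩ := Finset.card_eq_two.1 h
      refine Or.inr (Or.inl ⟨a, b, hab, rfl, ?_⟩)
      by_contra hn
      have := hsub {a} (by simp) (by simp) (by
        intro x hx y hy hxy
        obtain rfl := Finset.mem_singleton.1 hx
        have := hc x (by simp) y hy hxy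
        simp only [Finset.mem_insert, Finset.mem_singleton] at this ⊢
        rcases this with rfl | rfl
        · rfl
        · exact absurd hxy hn)
      simp at this
      omega
    · -- each vertex of a three-element `K` has a neighbour in `K`
      have hnb : ∀ x ∈ K, ∃ y ∈ K, H.Adj x y := by
        intro x hx
        by_contra hn
        push Not at hn
        have := hsub {x} (by simpa using hx) (by simp) (by
          intro x' hx' y hy hxy
          obtain rfl := Finset.mem_singleton.1 hx'
          exact absurd hxy (hn y (hc _ hx y hy hxy)))
        simp at this
        omega
      obtain ⟨x, y, z, hxy, hxz, hyz, rfl⟩ := Finset.card_eq_three.1 h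
      have hx := hnb x (by simp)
      have hy := hnb y (by simp)
      have hz := hnb z (by simp)
      have h3 := g.no3 x y z
      simp only [Finset.mem_insert, Finset.mem_singleton, exists_eq_or_imp, exists_eq_left,
        SimpleGraph.irrefl, false_or, or_false, H.adj_comm y x, H.adj_comm z x, H.adj_comm z y]
        at hx hy hz
      refine Or.inr (Or.inr (Or.inl ?_))
      by_cases hxy' : H.Adj x y
      · by_cases hyz' : H.Adj y z
        · exact ⟨x, y, z, hxy, hxz, hyz, rfl, hxy', hyz', fun h => h3 hxy' hyz' h⟩
        · have hxz' : H.Adj x z := hz.resolve_right hyz'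
          refine ⟨y, x, z, hxy.symm, hyz, hxz, ?_, hxy'.symm, hxz', hyz'⟩
          exact Finset.insert_comm _ _ _
      · have hxz' : H.Adj x z := hx.resolve_left hxy'
        have hyz' : H.Adj y z := hy.resolve_left hxy'
        refine ⟨x, z, y, hxz, hxy, hyz.symm, ?_, hxz', hyz'.symm, hxy'⟩
        rw [Finset.pair_comm]
  · exact Or.inr (Or.inr (Or.inr h8))

/-- The charged legs that still have a neighbour in `R`. -/
noncomputable def legs (H : SimpleGraph V) (Y O R : Finset V) : Finset V :=
  (Y ∪ O).filter (fun e => ∃ r ∈ R, H.Adj e r)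

/-- A strong code `C₀` of a set `C₀ ∪ D₀` whose vertices with neighbours outside are divided into
legs `Y` in the complement and `O`, each of which carries a charge `lam` in the count `phi`, and
uncharged legs `A` in the code. -/
structure Hub (H : SimpleGraph V) (U : Finset V) (lam : ℕ) (C₀ D₀ Y A O : Finset V) : Prop where
  sub : C₀ ∪ D₀ ⊆ U
  ne : (C₀ ∪ D₀).Nonempty
  sc : SC H C₀ D₀
  hY : Y ⊆ D₀
  hA : A ⊆ C₀
  one : ∀ e, (e ∈ Y ∨ e ∈ A ∨ e ∈ O) → ∀ a ∈ U, ∀ b ∈ U, a ∉ C₀ ∪ D₀ → b ∉ C₀ ∪ D₀ →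
    H.Adj e a → H.Adj e b → a = b
  big : ∀ r ∈ U, r ∉ C₀ ∪ D₀ → ∀ e, (e ∈ A ∨ e ∈ O) → H.Adj r e → 3 ≤ dg H U r
  uniq : ∀ r ∈ U, r ∉ C₀ ∪ D₀ → ∀ e f, (e ∈ A ∨ e ∈ O) → (f ∈ A ∨ f ∈ O) →
    H.Adj r e → H.Adj r f → e = f
  out : ∀ s ∈ C₀ ∪ D₀, ∀ r ∈ U, r ∉ C₀ ∪ D₀ → H.Adj r s → s ∈ Y ∨ s ∈ A ∨ s ∈ O
  phi : 2 * wt H U (C₀ ∪ D₀) + lam * (legs H Y O (U \ (C₀ ∪ D₀))).card ≤ 7 * D₀.card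
  two_le : 2 ≤ lam
  p3 : 4 ≤ lam ∨ ∀ y ∈ Y, ∀ a ∈ U, ∀ b ∈ U, ∀ c ∈ U, a ∉ C₀ ∪ D₀ → b ∉ C₀ ∪ D₀ →
    c ∉ C₀ ∪ D₀ → a ≠ c → H.Adj y a → H.Adj a b → H.Adj b c → dg H U a = 2 →
    dg H U b = 2 → (dg H U c = 1 ∨ (dg H U c = 2 ∧ ∃ y' ∈ Y, y' ≠ y ∧ H.Adj c y')) → False

/-- A strong code of a larger set `C ∪ D` obtained from a hub by absorbing components of the rest. -/
structure Absorb (H : SimpleGraph V) (U : Finset V) (lam : ℕ) (C₀ D₀ Y A O C D : Finset V) :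
    Prop where
  sc : SC H C D
  hC : C₀ ⊆ C
  hS : C₀ ∪ D₀ ⊆ C ∪ D
  sub : C ∪ D ⊆ U
  no : ∀ t ∈ C ∪ D, t ∉ C₀ ∪ D₀ → ∀ r ∈ U, r ∉ C ∪ D → ¬ H.Adj r t
  hYD : ∀ y ∈ Y, ∀ r ∈ U, r ∉ C ∪ D → H.Adj y r → y ∈ D
  phi : 2 * wt H U (C ∪ D) + lam * (legs H Y O (U \ (C ∪ D))).card ≤ 7 * D.card

variable {lam : ℕ} {C₀ D₀ Y A O C D : Finset V}

/-- Absorbing one component `K` of the rest. -/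
lemma Absorb.step (hub : Hub H U lam C₀ D₀ Y A O) (ab : Absorb H U lam C₀ D₀ Y A O C D)
    {K C' D' : Finset V} (hK : K ⊆ U \ (C ∪ D)) (hc : ClosedIn H (U \ (C ∪ D)) K)
    (hT : C' ∪ D' = (C ∪ D) ∪ K) (hs : SC H C' D') (hC : C ⊆ C')
    (hD : ∀ y ∈ D, y ∈ D' ∨ ∃ k ∈ K, H.Adj y k)
    (hw : 2 * wt H U K + 7 * D.card ≤ 7 * D'.card + lam * (legs H Y O K).card) :
    Absorb H U lam C₀ D₀ Y A O C' D' := by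
  have hKU : ∀ k ∈ K, k ∈ U ∧ k ∉ C ∪ D := fun k hk => Finset.mem_sdiff.1 (hK hk)
  refine ⟨hs, ab.hC.trans hC, ?_, ?_, ?_, ?_, ?_⟩
  · rw [hT]
    exact ab.hS.trans Finset.subset_union_left
  · rw [hT]
    exact Finset.union_subset ab.sub (fun k hk => (hKU k hk).1)
  · rw [hT]
    intro t ht ht0 r hr hrT hrt
    rw [Finset.mem_union, not_or] at hrT
    rcases Finset.mem_union.1 ht with ht | ht
    · exact ab.no t ht ht0 r hr hrT.1 hrt
    · exact hrT.2 (hc t ht r (Finset.mem_sdiff.2 ⟨hr, hrT.1⟩) hrt.symm)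
  · rw [hT]
    intro y hy r hr hrT hyr
    rw [Finset.mem_union, not_or] at hrT
    rcases hD y (ab.hYD y hy r hr hrT.1 hyr) with h | ⟨k, hk, hyk⟩
    · exact h
    · have := hub.one y (Or.inl hy) r hr k (hKU k hk).1 (fun h => hrT.1 (ab.hS h))
        (fun h => (hKU k hk).2 (ab.hS h)) hyr hyk
      exact absurd (this ▸ hk) hrT.2
  · have e1 : wt H U (C' ∪ D') = wt H U (C ∪ D) + wt H U K := by
      rw [hT]
      exact wt_union (Finset.disjoint_right.2 fun k hk => (hKU k hk).2)
    have e2 : (legs H Y O (U \ (C' ∪ D'))).card + (legs H Y O K).card ≤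
        (legs H Y O (U \ (C ∪ D))).card := by
      rw [← Finset.card_union_of_disjoint]
      · apply Finset.card_le_card
        intro e he
        rw [Finset.mem_union] at he
        unfold legs at *
        simp only [Finset.mem_filter] at he ⊢
        rcases he with ⟨h1, r, hr, h2⟩ | ⟨h1, r, hr, h2⟩
        · refine ⟨h1, r, ?_, h2⟩
          rw [hT, Finset.mem_sdiff, Finset.mem_union, not_or] at hr
          exact Finset.mem_sdiff.2 ⟨hr.1, hr.2.1⟩
        · exact ⟨h1, r, hK hr, h2⟩
      · rw [Finset.disjoint_left]
        unfold legs
        intro e he he'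
        simp only [Finset.mem_filter] at he he'
        obtain ⟨h1, r, hr, h2⟩ := he
        obtain ⟨_, k, hk, h3⟩ := he'
        rw [hT, Finset.mem_sdiff, Finset.mem_union, not_or] at hr
        have := hub.one e ((Finset.mem_union.1 h1).imp_right Or.inr) r hr.1 k (hKU k hk).1
          (fun h => hr.2.1 (ab.hS h)) (fun h => (hKU k hk).2 (ab.hS h)) h2 h3
        exact hr.2.2 (this ▸ hk)
    have e3 := ab.phi
    have e4 : lam * (legs H Y O (U \ (C' ∪ D'))).card + lam * (legs H Y O K).card ≤
        lam * (legs H Y O (U \ (C ∪ D))).card := by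
      rw [← mul_add]
      exact Nat.mul_le_mul_left _ e2
    omega

lemma Absorb.nbr (hub : Hub H U lam C₀ D₀ Y A O) (ab : Absorb H U lam C₀ D₀ Y A O C D)
    {r t : V} (hr : r ∈ U) (hrT : r ∉ C ∪ D) (ht : t ∈ C ∪ D) (h : H.Adj r t) :
    t ∈ Y ∨ t ∈ A ∨ t ∈ O := by
  by_cases h0 : t ∈ C₀ ∪ D₀
  · exact hub.out t h0 r hr (fun h' => hrT (ab.hS h')) h
  · exact absurd h (ab.no t ht h0 r hr hrT)

/-- A vertex of the rest losing all but at most one of its neighbours is attached to a leg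
in `Y`. -/
lemma Absorb.leg (hub : Hub H U lam C₀ D₀ Y A O) (ab : Absorb H U lam C₀ D₀ Y A O C D)
    {r t : V} (hr : r ∈ U) (hrT : r ∉ C ∪ D) (ht : t ∈ C ∪ D) (h : H.Adj r t)
    (hdr : dg H (U \ (C ∪ D)) r ≤ 1) : ∃ y ∈ Y, y ∈ D ∧ H.Adj r y := by
  suffices ∃ y ∈ Y, H.Adj r y by
    obtain ⟨y, hy, hry⟩ := this
    exact ⟨y, hy, ab.hYD y hy r hr hrT hry.symm, hry⟩
  by_contra hn
  push Not at hn
  have hr0 : r ∉ C₀ ∪ D₀ := fun h' => hrT (ab.hS h')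
  have hAO : ∀ t ∈ C ∪ D, H.Adj r t → t ∈ A ∨ t ∈ O := fun t ht h =>
    (ab.nbr hub hr hrT ht h).resolve_left fun hy => hn t hy h
  have h3 := hub.big r hr hr0 t (hAO t ht h) h
  have h4 : nb H U r ⊆ nb H (U \ (C ∪ D)) r ∪ {t} := by
    intro w hw
    rw [mem_nb] at hw
    rw [Finset.mem_union, mem_nb, Finset.mem_sdiff, Finset.mem_singleton]
    by_cases hwT : w ∈ C ∪ D
    · exact Or.inr (hub.uniq r hr hr0 w t (hAO w hwT hw.2) (hAO t ht h) hw.2 h)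
    · exact Or.inl ⟨⟨hw.1, hwT⟩, hw.2⟩
  have h5 := (Finset.card_le_card h4).trans (Finset.card_union_le _ _)
  rw [Finset.card_singleton] at h5
  unfold dg at h3 hdr
  omega

lemma Absorb.leg' (hub : Hub H U lam C₀ D₀ Y A O) (ab : Absorb H U lam C₀ D₀ Y A O C D)
    {r : V} (hr : r ∈ U) (hrT : r ∉ C ∪ D) (h2 : 2 ≤ dg H U r)
    (hdr : dg H (U \ (C ∪ D)) r ≤ 1) : ∃ y ∈ Y, y ∈ D ∧ H.Adj r y := by
  have : ∃ t ∈ C ∪ D, H.Adj r t := by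
    by_contra hn
    push Not at hn
    have := dg_eq_of (H := H) (U := U) (R := U \ (C ∪ D)) Finset.sdiff_subset (v := r)
      (fun w hw hrw => Finset.mem_sdiff.2 ⟨hw, fun h => hn w h hrw⟩)
    omega
  obtain ⟨t, ht, h⟩ := this
  exact ab.leg hub hr hrT ht h hdr

/-- Distinct vertices of the rest are attached to distinct legs. -/
lemma Absorb.count (hub : Hub H U lam C₀ D₀ Y A O) (ab : Absorb H U lam C₀ D₀ Y A O C D)
    {K S : Finset V} (hK : K ⊆ U \ (C ∪ D)) (hS : S ⊆ K)
    (h : ∀ s ∈ S, ∃ e, (e ∈ Y ∨ e ∈ O) ∧ H.Adj s e) : S.card ≤ (legs H Y O K).card := by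
  choose! f hf hf' using h
  refine Finset.card_le_card_of_injOn f ?_ ?_
  · intro s hs
    unfold legs
    rw [Finset.mem_coe, Finset.mem_filter, Finset.mem_union]
    exact ⟨hf s hs, s, hS hs, (hf' s hs).symm⟩
  · intro s hs t ht hst
    have h1 := Finset.mem_sdiff.1 (hK (hS hs))
    have h2 := Finset.mem_sdiff.1 (hK (hS ht))
    refine hub.one (f s) ((hf s hs).imp_right Or.inr) s h1.1 t h2.1 (fun h => h1.2 (ab.hS h))
      (fun h => h2.2 (ab.hS h)) (hf' s hs).symm ?_
    have := (hf' t ht).symm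
    rwa [← hst] at this

end Girth5Codes

/-! ### Absorbing one or two vertices -/

section Girth5Codes
open Classical
variable {V : Type*}
variable {H : SimpleGraph V} {U : Finset V}
variable {lam : ℕ} {C₀ D₀ Y A O C D : Finset V}

lemma dg_le_card {S : Finset V} {v : V} (h : ∀ w ∈ U, H.Adj v w → w ∈ S) : dg H U v ≤ S.card :=
  Finset.card_le_card fun w hw => h w (mem_nb.1 hw).1 (mem_nb.1 hw).2

/-- By connectivity, every component of the rest has a neighbour in the set treated so far. -/
lemma Absorb.attached (h : Cex H U) (hub : Hub H U lam C₀ D₀ Y A O)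
    (ab : Absorb H U lam C₀ D₀ Y A O C D) {K : Finset V} (hK : K ⊆ U \ (C ∪ D))
    (hne : K.Nonempty) (hc : ClosedIn H (U \ (C ∪ D)) K) :
    ∃ k ∈ K, ∃ t ∈ C ∪ D, H.Adj k t := by
  by_contra hn
  push Not at hn
  have := h.conn (hK.trans Finset.sdiff_subset) hne (fun a ha b hb hab =>
    hc a ha b (Finset.mem_sdiff.2 ⟨hb, fun hbT => hn a ha b hbT hab⟩) hab)
  obtain ⟨s, hs⟩ := hub.ne
  have hs' := hub.sub hs
  rw [← this] at hs'
  exact (Finset.mem_sdiff.1 (hK hs')).2 (ab.hS hs)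

/-- The weight of a component of the rest in which every vertex has degree at most one is covered
by the charges of its legs. -/
lemma Absorb.wt_le_legs (hub : Hub H U lam C₀ D₀ Y A O) (ab : Absorb H U lam C₀ D₀ Y A O C D)
    {K : Finset V} (hK : K ⊆ U \ (C ∪ D)) (hd : ∀ k ∈ K, dg H (U \ (C ∪ D)) k ≤ 1) :
    wt H U K ≤ (legs H Y O K).card := by
  refine ab.count hub hK (Finset.filter_subset _ _) ?_
  intro s hs
  rw [Finset.mem_filter] at hs
  have h1 := Finset.mem_sdiff.1 (hK hs.1)
  obtain ⟨y, hy, _, h2⟩ := ab.leg' hub h1.1 h1.2 hs.2 (hd s hs.1)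
  exact ⟨y, Or.inl hy, h2⟩

/-- Absorbing an isolated vertex of the rest. -/
lemma Absorb.one (h : Cex H U) (hub : Hub H U lam C₀ D₀ Y A O)
    (ab : Absorb H U lam C₀ D₀ Y A O C D) {z : V} (hK : {z} ⊆ U \ (C ∪ D))
    (hc : ClosedIn H (U \ (C ∪ D)) {z}) :
    ∃ C' D', Absorb H U lam C₀ D₀ Y A O C' D' ∧ C' ∪ D' = (C ∪ D) ∪ {z} := by
  have hzU := Finset.mem_sdiff.1 (hK (Finset.mem_singleton_self z))
  obtain ⟨k, hk, t, ht, hkt⟩ := ab.attached h hub hK (by simp) hc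
  obtain rfl := Finset.mem_singleton.1 hk
  have hd : dg H (U \ (C ∪ D)) k ≤ 1 := by
    rw [← Finset.card_singleton k]
    exact dg_le_card fun w hw hkw => hc k hk w hw hkw
  obtain ⟨y, hy, hyD, hky⟩ := ab.leg hub hzU.1 hzU.2 ht hkt hd
  have hyC : y ∉ C := Finset.disjoint_right.1 ab.sc.disj hyD
  obtain ⟨c, hcC, hyc⟩ := ab.sc.dom y hyD
  have hkT := hzU.2
  rw [Finset.mem_union, not_or] at hkT
  have hs : SC H (C ∪ {y}) (D.erase y ∪ {k}) := by
    refine (ab.sc.anti (Finset.erase_subset y D)).single ?_ ?_ ⟨y, by simp, hky⟩ ?_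
    · rw [Finset.disjoint_right]
      simp only [Finset.mem_union, Finset.mem_singleton, Finset.mem_erase, not_or, not_and]
      rintro x (rfl | rfl)
      · exact ⟨hyC, fun hh => absurd rfl hh⟩
      · exact ⟨hkT.1, fun _ => hkT.2⟩
    · rw [Finset.mem_singleton]
      rintro rfl
      exact hkT.2 hyD
    · intro x hx
      obtain rfl := Finset.mem_singleton.1 hx
      exact ab.sc.attach Finset.subset_union_left hcC hyC hyc
  have hT : C ∪ {y} ∪ (D.erase y ∪ {k}) = C ∪ D ∪ {k} := by
    conv_rhs => rw [← Finset.insert_erase hyD]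
    ext x
    simp only [Finset.mem_union, Finset.mem_insert, Finset.mem_singleton, Finset.mem_erase]
    tauto
  refine ⟨_, _, ab.step hub hK hc hT hs Finset.subset_union_left ?_ ?_, hT⟩
  · intro x hx
    by_cases hxy : x = y
    · exact Or.inr ⟨k, by simp, hxy ▸ hky.symm⟩
    · exact Or.inl (Finset.mem_union_left _ (Finset.mem_erase.2 ⟨hxy, hx⟩))
  · have h1 := ab.wt_le_legs hub hK (fun x hx => by
      obtain rfl := Finset.mem_singleton.1 hx
      exact hd)
    have h2 := Nat.mul_le_mul hub.two_le h1
    have h3 : (D.erase y ∪ {k}).card = D.card := by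
      rw [Finset.card_union_of_disjoint (by
        rw [Finset.disjoint_singleton_right]
        exact fun hh => hkT.2 (Finset.mem_of_mem_erase hh)), Finset.card_singleton,
        Finset.card_erase_add_one hyD]
    rw [h3]
    omega

/-- Absorbing a component of the rest consisting of one edge. -/
lemma Absorb.two (h : Cex H U) (hub : Hub H U lam C₀ D₀ Y A O)
    (ab : Absorb H U lam C₀ D₀ Y A O C D) {a b : V} (hK : {a, b} ⊆ U \ (C ∪ D))
    (hc : ClosedIn H (U \ (C ∪ D)) {a, b}) (hab : H.Adj a b) :
    ∃ C' D', Absorb H U lam C₀ D₀ Y A O C' D' ∧ C' ∪ D' = (C ∪ D) ∪ {a, b} := by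
  have hd : ∀ k ∈ ({a, b} : Finset V), dg H (U \ (C ∪ D)) k ≤ 1 := by
    intro k hk
    have : (({a, b} : Finset V).erase k).card = 1 := by
      have := Finset.card_erase_add_one hk
      rw [Finset.card_pair hab.ne] at this
      omega
    rw [← this]
    exact dg_le_card fun w hw hkw => Finset.mem_erase.2 ⟨hkw.ne', hc k hk w hw hkw⟩
  have key : ∀ k e : V, ({a, b} : Finset V) = {k, e} → H.Adj k e → (∃ t ∈ C ∪ D, H.Adj k t) →
      ∃ C' D', Absorb H U lam C₀ D₀ Y A O C' D' ∧ C' ∪ D' = (C ∪ D) ∪ {a, b} := by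
    rintro k e he hke ⟨t, ht, hkt⟩
    have hkm : k ∈ ({a, b} : Finset V) := by rw [he]; simp
    have hem : e ∈ ({a, b} : Finset V) := by rw [he]; simp
    have hkU := Finset.mem_sdiff.1 (hK hkm)
    have heU := Finset.mem_sdiff.1 (hK hem)
    obtain ⟨y, hy, hyD, hky⟩ := ab.leg hub hkU.1 hkU.2 ht hkt (hd k hkm)
    have hyC : y ∉ C := Finset.disjoint_right.1 ab.sc.disj hyD
    obtain ⟨c, hcC, hyc⟩ := ab.sc.dom y hyD
    have hkT := hkU.2
    have heT := heU.2
    rw [Finset.mem_union, not_or] at hkT heT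
    have hs : SC H (C ∪ {y, k}) (D.erase y ∪ {e}) := by
      refine (ab.sc.anti (Finset.erase_subset y D)).single ?_ ?_ ⟨k, by simp, hke.symm⟩ ?_
      · rw [Finset.disjoint_right]
        simp only [Finset.mem_union, Finset.mem_singleton, Finset.mem_erase, not_or, not_and,
          Finset.mem_insert]
        rintro x ((rfl | rfl) | rfl)
        · exact ⟨hyC, fun hh => absurd rfl hh⟩
        · exact ⟨hkT.1, fun _ => hkT.2⟩
        · exact ⟨heT.1, fun _ => heT.2⟩
      · rw [Finset.mem_insert, Finset.mem_singleton]
        rintro (rfl | rfl)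
        · exact heT.2 hyD
        · exact hke.ne rfl
      · intro x hx
        rw [Finset.mem_insert, Finset.mem_singleton] at hx
        rcases hx with rfl | rfl
        · exact ab.sc.attach Finset.subset_union_left hcC hyC hyc
        · exact Or.inr ⟨y, by simp, c, by simp [hcC], hky, hyc, fun hh => hkT.1 (hh ▸ hcC)⟩
    have hT : C ∪ {y, k} ∪ (D.erase y ∪ {e}) = C ∪ D ∪ {a, b} := by
      rw [he]
      conv_rhs => rw [← Finset.insert_erase hyD]
      ext x
      simp only [Finset.mem_union, Finset.mem_insert, Finset.mem_singleton, Finset.mem_erase]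
      tauto
    refine ⟨_, _, ab.step hub hK hc hT hs Finset.subset_union_left ?_ ?_, hT⟩
    · intro x hx
      by_cases hxy : x = y
      · exact Or.inr ⟨k, hkm, hxy ▸ hky.symm⟩
      · exact Or.inl (Finset.mem_union_left _ (Finset.mem_erase.2 ⟨hxy, hx⟩))
    · have h1 := ab.wt_le_legs hub hK hd
      have h2 := Nat.mul_le_mul hub.two_le h1
      have h3 : (D.erase y ∪ {e}).card = D.card := by
        rw [Finset.card_union_of_disjoint (by
          rw [Finset.disjoint_singleton_right]
          exact fun hh => heT.2 (Finset.mem_of_mem_erase hh)), Finset.card_singleton,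
          Finset.card_erase_add_one hyD]
      rw [h3]
      omega
  obtain ⟨k, hk, ht⟩ := ab.attached h hub hK (by simp) hc
  rw [Finset.mem_insert, Finset.mem_singleton] at hk
  rcases hk with rfl | rfl
  · exact key k b rfl hab ht
  · exact key k a (Finset.pair_comm _ _) hab.symm ht

end Girth5Codes

/-! ### Absorbing three-vertex paths -/

section Girth5Codes
open Classical
variable {V : Type*}
variable {H : SimpleGraph V} {U : Finset V}
variable {lam : ℕ} {C₀ D₀ Y A O C D : Finset V}

lemma wt_eq_of {S : Finset V} (h : ∀ v ∈ S, 2 ≤ dg H U v) : wt H U S = S.card := by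
  unfold wt
  rw [Finset.filter_true_of_mem h]

/-- Absorbing a three-vertex path into the code, at no cost when its weight is covered. -/
lemma Absorb.path_all (hub : Hub H U lam C₀ D₀ Y A O)
    (ab : Absorb H U lam C₀ D₀ Y A O C D) {a b c : V} (hac : a ≠ c)
    (hK : {a, b, c} ⊆ U \ (C ∪ D)) (hc : ClosedIn H (U \ (C ∪ D)) {a, b, c}) (h1 : H.Adj a b)
    (h2 : H.Adj b c)
    (hw : 2 * wt H U {a, b, c} ≤ lam * (legs H Y O {a, b, c}).card) :
    ∃ C' D', Absorb H U lam C₀ D₀ Y A O C' D' ∧ C' ∪ D' = (C ∪ D) ∪ {a, b, c} := by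
  have hs : SC H (C ∪ {a, b, c}) (D ∪ ∅) := by
    refine ab.sc.glue ?_ (by simp) (by simp) (by simp) ?_
    · rw [Finset.union_empty, Finset.disjoint_right]
      exact fun x hx => (Finset.mem_sdiff.1 (hK hx)).2
    · intro x hx
      simp only [Finset.mem_insert, Finset.mem_singleton] at hx
      rcases hx with rfl | rfl | rfl
      · exact Or.inr ⟨b, by simp, c, by simp, h1, h2, hac.symm⟩
      · exact Or.inl ⟨a, by simp, c, by simp, hac, h1.symm, h2⟩
      · exact Or.inr ⟨b, by simp, a, by simp, h2.symm, h1.symm, hac⟩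
  have hT : C ∪ {a, b, c} ∪ (D ∪ ∅) = C ∪ D ∪ {a, b, c} := by
    rw [Finset.union_empty, Finset.union_right_comm]
  refine ⟨_, _, ab.step hub hK hc hT hs Finset.subset_union_left ?_ ?_, hT⟩
  · intro x hx
    exact Or.inl (Finset.mem_union_left _ hx)
  · rw [Finset.union_empty]
    omega

/-- A three-vertex path attached to the code at `t`: the end `e` goes to the complement. -/
lemma Absorb.path_att (hub : Hub H U lam C₀ D₀ Y A O)
    (ab : Absorb H U lam C₀ D₀ Y A O C D) {K : Finset V} (hK : K ⊆ U \ (C ∪ D))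
    (hc : ClosedIn H (U \ (C ∪ D)) K) {t s e x : V} (he : K = {t, s, e}) (hts : H.Adj t s)
    (het : e ≠ t) (hes : e ≠ s) (hadj : H.Adj e t ∨ H.Adj e s) (hx : x ∈ C) (htx : H.Adj t x) :
    ∃ C' D', Absorb H U lam C₀ D₀ Y A O C' D' ∧ C' ∪ D' = (C ∪ D) ∪ K := by
  have hKT : ∀ k ∈ K, k ∉ C ∪ D := fun k hk => (Finset.mem_sdiff.1 (hK hk)).2
  have htC : t ∉ C := fun hh => hKT t (by rw [he]; simp) (Finset.mem_union_left _ hh)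
  have heT : e ∉ C ∪ D := hKT e (by rw [he]; simp)
  have hK2 : K = {t, s} ∪ {e} := by
    rw [he]
    ext
    simp only [Finset.mem_union, Finset.mem_insert, Finset.mem_singleton, or_assoc]
  have hs : SC H (C ∪ {t, s}) (D ∪ {e}) := by
    refine ab.sc.single ?_ ?_ ?_ ?_
    · rw [← hK2, Finset.disjoint_right]
      exact hKT
    · simp [het, hes]
    · rcases hadj with hh | hh
      · exact ⟨t, by simp, hh⟩
      · exact ⟨s, by simp, hh⟩
    · intro y hy
      simp only [Finset.mem_insert, Finset.mem_singleton] at hy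
      rcases hy with rfl | rfl
      · exact ab.sc.attach Finset.subset_union_left hx htC htx
      · refine Or.inr ⟨t, by simp, x, by simp [hx], hts.symm, htx, ?_⟩
        rintro rfl
        exact hKT x (by rw [he]; simp) (Finset.mem_union_left _ hx)
  have hT : C ∪ {t, s} ∪ (D ∪ {e}) = C ∪ D ∪ K := by
    rw [hK2, Finset.union_union_union_comm]
  refine ⟨_, _, ab.step hub hK hc hT hs Finset.subset_union_left ?_ ?_, hT⟩
  · intro x hx
    exact Or.inl (Finset.mem_union_left _ hx)
  · have h1 : wt H U K ≤ 3 := (wt_le K).trans (by rw [he]; exact Finset.card_le_three)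
    have h3 : (D ∪ {e}).card = D.card + 1 := by
      rw [Finset.card_union_of_disjoint (by
        rw [Finset.disjoint_singleton_right]
        exact fun hh => heT (Finset.mem_union_right _ hh)), Finset.card_singleton]
    rw [h3]
    omega

set_option maxHeartbeats 1000000 in
/-- Absorbing a component of the rest that is a path on three vertices. -/
lemma Absorb.three (h : Cex H U) (hub : Hub H U lam C₀ D₀ Y A O)
    (ab : Absorb H U lam C₀ D₀ Y A O C D) {a b c : V} (hac : a ≠ c)
    (hK : {a, b, c} ⊆ U \ (C ∪ D)) (hc : ClosedIn H (U \ (C ∪ D)) {a, b, c}) (h1 : H.Adj a b)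
    (h2 : H.Adj b c) (h3 : ¬ H.Adj a c) :
    ∃ C' D', Absorb H U lam C₀ D₀ Y A O C' D' ∧ C' ∪ D' = (C ∪ D) ∪ {a, b, c} := by
  by_contra hno
  have hKU : ∀ k ∈ ({a, b, c} : Finset V), k ∈ U ∧ k ∉ C ∪ D := fun k hk =>
    Finset.mem_sdiff.1 (hK hk)
  obtain ⟨haU, haT⟩ := hKU a (by simp)
  obtain ⟨hbU, hbT⟩ := hKU b (by simp)
  obtain ⟨hcU, hcT⟩ := hKU c (by simp)
  have ha0 : a ∉ C₀ ∪ D₀ := fun hh => haT (ab.hS hh)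
  have hb0 : b ∉ C₀ ∪ D₀ := fun hh => hbT (ab.hS hh)
  have hc0 : c ∉ C₀ ∪ D₀ := fun hh => hcT (ab.hS hh)
  have hab := h1.ne
  have hbc := h2.ne
  -- no vertex of the path is attached to a leg in the code
  have hAno : ∀ k ∈ ({a, b, c} : Finset V), ∀ x ∈ A, ¬ H.Adj k x := by
    intro k hk x hx hkx
    have hxC := ab.hC (hub.hA hx)
    simp only [Finset.mem_insert, Finset.mem_singleton] at hk
    rcases hk with rfl | rfl | rfl
    · exact hno (ab.path_att hub hK hc rfl h1 hac.symm hbc.symm (Or.inr h2.symm) hxC hkx)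
    · exact hno (ab.path_att hub hK hc (Finset.insert_comm _ _ _) h1.symm hbc.symm hac.symm
        (Or.inl h2.symm) hxC hkx)
    · refine hno (ab.path_att hub hK hc ?_ h2.symm hac hab (Or.inr h1) hxC hkx)
      ext
      simp only [Finset.mem_insert, Finset.mem_singleton]
      tauto
  have hleg : ∀ k ∈ ({a, b, c} : Finset V), ∀ t ∈ U, t ∉ ({a, b, c} : Finset V) → H.Adj k t →
      t ∈ Y ∨ t ∈ O := by
    intro k hk t ht htK hkt
    have htT : t ∈ C ∪ D := by
      by_contra hh
      exact htK (hc k hk t (Finset.mem_sdiff.2 ⟨ht, hh⟩) hkt)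
    rcases ab.nbr hub (hKU k hk).1 (hKU k hk).2 htT hkt with hh | hh | hh
    · exact Or.inl hh
    · exact absurd hkt (hAno k hk t hh)
    · exact Or.inr hh
  have hmw : ¬ 2 * wt H U {a, b, c} ≤ lam * (legs H Y O {a, b, c}).card := fun hh =>
    hno (ab.path_all hub hac hK hc h1 h2 hh)
  have hw3 : wt H U {a, b, c} ≤ 3 := (wt_le _).trans Finset.card_le_three
  have hda : dg H (U \ (C ∪ D)) a ≤ 1 := by
    rw [← Finset.card_singleton b]
    refine dg_le_card fun w hw haw => ?_
    have := hc a (by simp) w hw haw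
    simp only [Finset.mem_insert, Finset.mem_singleton] at this ⊢
    rcases this with rfl | rfl | rfl
    · exact absurd haw H.irrefl
    · rfl
    · exact absurd haw h3
  have hdc : dg H (U \ (C ∪ D)) c ≤ 1 := by
    rw [← Finset.card_singleton b]
    refine dg_le_card fun w hw haw => ?_
    have := hc c (by simp) w hw haw
    simp only [Finset.mem_insert, Finset.mem_singleton] at this ⊢
    rcases this with rfl | rfl | rfl
    · exact absurd haw.symm h3
    · rfl
    · exact absurd haw H.irrefl
  -- two ends: legs at `a` and `c`
  have hla : 2 ≤ dg H U a → ∃ y ∈ Y, H.Adj a y := fun hh => by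
    obtain ⟨y, hy, _, hay⟩ := ab.leg' hub haU haT hh hda
    exact ⟨y, hy, hay⟩
  have hlc : 2 ≤ dg H U c → ∃ y ∈ Y, H.Adj c y := fun hh => by
    obtain ⟨y, hy, _, hay⟩ := ab.leg' hub hcU hcT hh hdc
    exact ⟨y, hy, hay⟩
  have hlegmem : ∀ k ∈ ({a, b, c} : Finset V), ∀ e, (e ∈ Y ∨ e ∈ O) → H.Adj k e →
      e ∈ legs H Y O {a, b, c} := by
    intro k hk e he hke
    unfold legs
    rw [Finset.mem_filter, Finset.mem_union]
    exact ⟨he, k, hk, hke.symm⟩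
  have hdisj : ∀ k ∈ ({a, b, c} : Finset V), ∀ k' ∈ ({a, b, c} : Finset V), ∀ e, (e ∈ Y ∨ e ∈ O) →
      H.Adj k e → H.Adj k' e → k = k' := by
    intro k hk k' hk' e he h1 h2
    exact hub.one e (he.imp_right Or.inr) k (hKU k hk).1 k' (hKU k' hk').1
      (fun hh => (hKU k hk).2 (ab.hS hh)) (fun hh => (hKU k' hk').2 (ab.hS hh)) h1.symm h2.symm
  have hm1 : 1 ≤ (legs H Y O {a, b, c}).card := by
    obtain ⟨k, hk, t, ht, hkt⟩ := ab.attached h hub hK (by simp) hc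
    exact Finset.card_pos.2 ⟨t, hlegmem k hk t (hleg k hk t (ab.sub ht) (fun hh =>
      (hKU t hh).2 ht) hkt) hkt⟩
  have hmul := Nat.mul_le_mul_right (legs H Y O {a, b, c}).card hub.two_le
  have hm3 : ¬ 3 ≤ (legs H Y O {a, b, c}).card := by
    intro hh
    omega
  have hwm : ¬ wt H U {a, b, c} ≤ (legs H Y O {a, b, c}).card := by
    intro hh
    omega
  -- the middle vertex has no leg
  have hbno : ∀ e, (e ∈ Y ∨ e ∈ O) → ¬ H.Adj b e := by
    intro e he hbe
    refine hwm (ab.count hub hK (Finset.filter_subset _ _) ?_)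
    intro s hs
    rw [Finset.mem_filter] at hs
    obtain ⟨hs1, hs2⟩ := hs
    simp only [Finset.mem_insert, Finset.mem_singleton] at hs1
    rcases hs1 with rfl | rfl | rfl
    · obtain ⟨y, hy, hh⟩ := hla hs2
      exact ⟨y, Or.inl hy, hh⟩
    · exact ⟨e, he, hbe⟩
    · obtain ⟨y, hy, hh⟩ := hlc hs2
      exact ⟨y, Or.inl hy, hh⟩
  have hdb : dg H U b = 2 := by
    refine le_antisymm ?_ (dg_two_le haU hcU hac h1.symm h2)
    rw [← Finset.card_pair hac]
    refine dg_le_card fun w hw hbw => ?_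
    by_contra hh
    refine hbno w (hleg b (by simp) w hw ?_ hbw) hbw
    simp only [Finset.mem_insert, Finset.mem_singleton, not_or] at hh ⊢
    exact ⟨hh.1, hbw.ne', hh.2⟩
  have hp3 := hub.p3
  rcases hp3 with h4 | hp3
  · have hmul := Nat.mul_le_mul_right (legs H Y O {a, b, c}).card h4
    by_cases hm2 : 2 ≤ (legs H Y O {a, b, c}).card
    · omega
    · -- one leg only: one of the two ends is a leaf
      have : wt H U {a, b, c} ≤ 2 := by
        by_contra hh
        have hcard : ({a, b, c} : Finset V).card = 3 := Finset.card_eq_three.2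
          ⟨a, b, c, hab, hac, hbc, rfl⟩
        have heq : ({a, b, c} : Finset V).filter (fun v => 2 ≤ dg H U v) = {a, b, c} :=
          Finset.eq_of_subset_of_card_le (Finset.filter_subset _ _) (by unfold wt at hh; omega)
        have ha2 : a ∈ ({a, b, c} : Finset V).filter (fun v => 2 ≤ dg H U v) := by rw [heq]; simp
        have hc2 : c ∈ ({a, b, c} : Finset V).filter (fun v => 2 ≤ dg H U v) := by rw [heq]; simp
        obtain ⟨y, hy, hay⟩ := hla (Finset.mem_filter.1 ha2).2
        obtain ⟨y', hy', hcy⟩ := hlc (Finset.mem_filter.1 hc2).2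
        have hne : y ≠ y' := by
          rintro rfl
          exact hac (hdisj a (by simp) c (by simp) y (Or.inl hy) hay hcy)
        apply hm2
        rw [← Finset.card_pair hne]
        apply Finset.card_le_card
        simp only [Finset.insert_subset_iff, Finset.singleton_subset_iff]
        exact ⟨hlegmem a (by simp) y (Or.inl hy) hay, hlegmem c (by simp) y' (Or.inl hy') hcy⟩
      omega
  · have hle2 : ∀ k k' : V, ({a, b, c} : Finset V) = {k, b, k'} → k ≠ k' → ¬ H.Adj k k' →
        2 ≤ dg H U k → (∃ y ∈ Y, H.Adj k y) →
        (2 ≤ dg H U k' → ∃ y ∈ Y, H.Adj k' y) → H.Adj k b → H.Adj b k' → dg H U k = 2 := by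
      intro k k' he hkk hnk hk2 ⟨y, hy, hky⟩ hk' hkb hbk
      by_contra hne
      have hkm : k ∈ ({a, b, c} : Finset V) := by rw [he]; simp
      have hkm' : k' ∈ ({a, b, c} : Finset V) := by rw [he]; simp
      have hbm : b ∈ ({a, b, c} : Finset V) := by simp
      -- a second leg at `k`
      have : ∃ e, e ≠ y ∧ (e ∈ Y ∨ e ∈ O) ∧ H.Adj k e := by
        by_contra hh
        push Not at hh
        have : dg H U k ≤ ({b, y} : Finset V).card := dg_le_card fun w hw hkw => by
          by_contra hwn
          simp only [Finset.mem_insert, Finset.mem_singleton, not_or] at hwn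
          refine hh w hwn.2 (hleg k hkm w hw ?_ hkw) hkw
          rw [he]
          simp only [Finset.mem_insert, Finset.mem_singleton, not_or]
          exact ⟨hkw.ne', hwn.1, fun hh => hnk (hh ▸ hkw)⟩
        have := this.trans Finset.card_le_two
        omega
      obtain ⟨e, hey, heYO, hke⟩ := this
      by_cases hk2' : 2 ≤ dg H U k'
      · obtain ⟨y', hy', hky'⟩ := hk' hk2'
        have hne1 : y' ≠ y := by
          rintro rfl
          exact hkk (hdisj k hkm k' hkm' _ (Or.inl hy) hky hky')
        have hne2 : y' ≠ e := by
          rintro rfl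
          exact hkk (hdisj k hkm k' hkm' _ heYO hke hky')
        apply hm3
        rw [← Finset.card_eq_three.2 ⟨y', y, e, hne1, hne2, hey.symm, rfl⟩]
        apply Finset.card_le_card
        simp only [Finset.insert_subset_iff, Finset.singleton_subset_iff]
        exact ⟨hlegmem k' hkm' y' (Or.inl hy') hky', hlegmem k hkm y (Or.inl hy) hky,
          hlegmem k hkm e heYO hke⟩
      · apply hwm
        have hw2 : wt H U {a, b, c} ≤ 2 := by
          refine (Finset.card_le_card (t := {k, b}) ?_).trans Finset.card_le_two
          intro v hv
          rw [Finset.mem_filter, he] at hv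
          simp only [Finset.mem_insert, Finset.mem_singleton] at hv ⊢
          rcases hv with ⟨rfl | rfl | rfl, hv⟩
          · exact Or.inl rfl
          · exact Or.inr rfl
          · exact absurd hv hk2'
        refine hw2.trans ?_
        rw [← Finset.card_pair hey]
        apply Finset.card_le_card
        simp only [Finset.insert_subset_iff, Finset.singleton_subset_iff]
        exact ⟨hlegmem k hkm e heYO hke, hlegmem k hkm y (Or.inl hy) hky⟩
    have hda1 := dg_pos_of hbU h1
    have hdc1 := dg_pos_of hbU h2.symm
    have heac : ({a, b, c} : Finset V) = {c, b, a} := by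
      ext
      simp only [Finset.mem_insert, Finset.mem_singleton]
      tauto
    by_cases ha2 : 2 ≤ dg H U a
    · have hda2 := hle2 a c rfl hac h3 ha2 (hla ha2) hlc h1 h2
      obtain ⟨y, hy, hay⟩ := hla ha2
      by_cases hc2 : 2 ≤ dg H U c
      · have hdc2 := hle2 c a heac hac.symm (fun hh => h3 hh.symm) hc2 (hlc hc2) hla h2.symm h1.symm
        obtain ⟨y', hy', hcy⟩ := hlc hc2
        refine hp3 y hy a haU b hbU c hcU ha0 hb0 hc0 hac hay.symm h1 h2 hda2 hdb
          (Or.inr ⟨hdc2, y', hy', ?_, hcy⟩)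
        rintro rfl
        exact hac (hdisj a (by simp) c (by simp) _ (Or.inl hy) hay hcy)
      · exact hp3 y hy a haU b hbU c hcU ha0 hb0 hc0 hac hay.symm h1 h2 hda2 hdb
          (Or.inl (by omega))
    · by_cases hc2 : 2 ≤ dg H U c
      · have hdc2 := hle2 c a heac hac.symm (fun hh => h3 hh.symm) hc2 (hlc hc2) hla h2.symm h1.symm
        obtain ⟨y', hy', hcy⟩ := hlc hc2
        exact hp3 y' hy' c hcU b hbU a haU hc0 hb0 ha0 hac.symm hcy.symm h2.symm h1.symm hdc2 hdb
          (Or.inl (by omega))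
      · apply hwm
        refine le_trans (le_trans (Finset.card_le_card (t := {b}) ?_) (Finset.card_singleton b).le) hm1
        intro v hv
        rw [Finset.mem_filter] at hv
        simp only [Finset.mem_insert, Finset.mem_singleton] at hv ⊢
        rcases hv with ⟨rfl | rfl | rfl, hv⟩
        · exact absurd hv ha2
        · rfl
        · exact absurd hv hc2

end Girth5Codes

/-! ### Absorbing 8-cycles -/

section Girth5Codes
open Classical
variable {V : Type*}
variable {H : SimpleGraph V} {U : Finset V}
variable {lam : ℕ} {C₀ D₀ Y A O C D : Finset V}

lemma eight_perm₁ (a b c d e f g h : V) : ({a, b, c, d, e, f, g, h} : Finset V) =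
    {d, e, f, g, h, a} ∪ {b, c} := by
  ext v
  simp only [Finset.mem_union, Finset.mem_insert, Finset.mem_singleton]
  tauto

lemma eight_perm₂ (a b c d e f g h : V) : ({a, b, c, d, e, f, g, h} : Finset V) =
    {a, h, d, e, f} ∪ {b, c, g} := by
  ext v
  simp only [Finset.mem_union, Finset.mem_insert, Finset.mem_singleton]
  tauto

set_option maxHeartbeats 1000000 in
/-- Absorbing an 8-cycle: two vertices go to the complement, and three if the cycle is attached to
the code. -/
lemma Absorb.eight (h : Cex H U) (hub : Hub H U lam C₀ D₀ Y A O)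
    (ab : Absorb H U lam C₀ D₀ Y A O C D) {K : Finset V} (hK : K ⊆ U \ (C ∪ D))
    (hc : ClosedIn H (U \ (C ∪ D)) K) (h8 : K.card = 8)
    (h2 : ∀ v ∈ K, dg H (U \ (C ∪ D)) v = 2) :
    ∃ C' D', Absorb H U lam C₀ D₀ Y A O C' D' ∧ C' ∪ D' = (C ∪ D) ∪ K := by
  have hKU : ∀ k ∈ K, k ∈ U ∧ k ∉ C ∪ D := fun k hk => Finset.mem_sdiff.1 (hK hk)
  obtain ⟨k, hk, t, ht, hkt⟩ := ab.attached h hub hK (Finset.card_pos.1 (by omega)) hc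
  obtain ⟨c1, c2, c3, c4, c5, c6, c7, ho⟩ := oct_exists h.g hK hc h8 h2 hk
  have hw8 : wt H U K ≤ 8 := h8 ▸ wt_le K
  have hnd := ho.nodup
  simp only [List.nodup_cons, List.mem_cons, List.not_mem_nil, or_false, not_or, not_false_iff,
    List.nodup_nil, and_true] at hnd
  obtain ⟨⟨e01, e02, e03, e04, e05, e06, e07⟩, ⟨e12, e13, e14, e15, e16, e17⟩,
    ⟨e23, e24, e25, e26, e27⟩, ⟨e34, e35, e36, e37⟩, ⟨e45, e46, e47⟩, ⟨e56, e57⟩, e67⟩ := hnd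
  have hD8 : Disjoint D K := Finset.disjoint_right.2 fun v hv hvD =>
    (hKU v hv).2 (Finset.mem_union_right _ hvD)
  by_cases hm : 1 ≤ (legs H Y O K).card
  · have hKeq : K = {c3, c4, c5, c6, c7, k} ∪ {c1, c2} := ho.eq.trans (eight_perm₁ _ _ _ _ _ _ _ _)
    have hs : SC H (C ∪ {c3, c4, c5, c6, c7, k}) (D ∪ {c1, c2}) := by
      refine ab.sc.glue ?_ ?_ ?_ ?_ ?_
      · rw [← hKeq, Finset.disjoint_right]
        exact fun v hv => (hKU v hv).2
      · rw [Finset.disjoint_right]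
        simp only [Finset.mem_insert, Finset.mem_singleton, not_or]
        rintro v (rfl | rfl)
        · exact ⟨e13, e14, e15, e16, e17, Ne.symm e01⟩
        · exact ⟨e23, e24, e25, e26, e27, Ne.symm e02⟩
      · simp only [Finset.mem_insert, Finset.mem_singleton, forall_eq_or_imp, forall_eq]
        exact ⟨⟨k, by simp, ho.a01.symm⟩, ⟨c3, by simp, ho.a23⟩⟩
      · have key : ∀ c ∈ ({c3, c4, c5, c6, c7, k} : Finset V), H.Adj c1 c → H.Adj c2 c → False :=
          fun c _ hh1 hh2 => h.g.no3 c1 c2 c ho.a12 hh2 hh1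
        intro d hd e he c hcc hde hdc hec
        simp only [Finset.mem_insert, Finset.mem_singleton] at hd he
        rcases hd with rfl | rfl <;> rcases he with rfl | rfl
        · exact absurd rfl hde
        · exact absurd hec (key c hcc hdc)
        · exact absurd hdc (key c hcc hec)
        · exact absurd rfl hde
      · intro c hcc
        simp only [Finset.mem_insert, Finset.mem_singleton] at hcc
        rcases hcc with rfl | rfl | rfl | rfl | rfl | rfl
        · exact Or.inr ⟨c4, by simp, c5, by simp, ho.a34, ho.a45, Ne.symm e35⟩
        · exact Or.inl ⟨c3, by simp, c5, by simp, e35, ho.a34.symm, ho.a45⟩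
        · exact Or.inl ⟨c4, by simp, c6, by simp, e46, ho.a45.symm, ho.a56⟩
        · exact Or.inl ⟨c5, by simp, c7, by simp, e57, ho.a56.symm, ho.a67⟩
        · exact Or.inr ⟨c6, by simp, c5, by simp, ho.a67.symm, ho.a56.symm, e57⟩
        · exact Or.inr ⟨c7, by simp, c6, by simp, ho.a70.symm, ho.a67.symm, Ne.symm e06⟩
    have hT : C ∪ {c3, c4, c5, c6, c7, k} ∪ (D ∪ {c1, c2}) = C ∪ D ∪ K := by
      rw [hKeq, Finset.union_union_union_comm]
    refine ⟨_, _, ab.step hub hK hc hT hs Finset.subset_union_left ?_ ?_, hT⟩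
    · exact fun x hx => Or.inl (Finset.mem_union_left _ hx)
    · have h3 : (D ∪ {c1, c2}).card = D.card + 2 := by
        rw [Finset.card_union_of_disjoint, Finset.card_pair e12]
        exact hD8.mono_right (by rw [hKeq]; exact Finset.subset_union_right)
      have := Nat.mul_le_mul hub.two_le hm
      omega
  · -- the neighbour `t` of `k` is an uncharged leg, so it lies in the code
    have htA : t ∈ C := by
      have hne : ¬ (t ∈ Y ∨ t ∈ O) := fun hh => hm (Finset.card_pos.2 ⟨t, by
        unfold legs
        rw [Finset.mem_filter, Finset.mem_union]
        exact ⟨hh, k, hk, hkt.symm⟩⟩)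
      rcases ab.nbr hub (hKU k hk).1 (hKU k hk).2 ht hkt with hh | hh | hh
      · exact absurd (Or.inl hh) hne
      · exact ab.hC (hub.hA hh)
      · exact absurd (Or.inr hh) hne
    have htK : ∀ v ∈ K, v ≠ t := fun v hv hvt => (hKU v hv).2 (hvt ▸ ht)
    have hKeq : K = {k, c7, c3, c4, c5} ∪ {c1, c2, c6} := ho.eq.trans (eight_perm₂ _ _ _ _ _ _ _ _)
    have hs : SC H (C ∪ {k, c7, c3, c4, c5}) (D ∪ {c1, c2, c6}) := by
      refine ab.sc.glue ?_ ?_ ?_ ?_ ?_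
      · rw [← hKeq, Finset.disjoint_right]
        exact fun v hv => (hKU v hv).2
      · rw [Finset.disjoint_right]
        simp only [Finset.mem_insert, Finset.mem_singleton, not_or]
        rintro v (rfl | rfl | rfl)
        · exact ⟨Ne.symm e01, e17, e13, e14, e15⟩
        · exact ⟨Ne.symm e02, e27, e23, e24, e25⟩
        · exact ⟨Ne.symm e06, e67, Ne.symm e36, Ne.symm e46, Ne.symm e56⟩
      · simp only [Finset.mem_insert, Finset.mem_singleton, forall_eq_or_imp, forall_eq]
        exact ⟨⟨k, by simp, ho.a01.symm⟩, ⟨c3, by simp, ho.a23⟩, ⟨c7, by simp, ho.a67⟩⟩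
      · have k12 : ∀ c, c ∈ ({k, c7, c3, c4, c5} : Finset V) → H.Adj c1 c → H.Adj c2 c → False :=
          fun c _ hh1 hh2 => h.g.no3 c1 c2 c ho.a12 hh2 hh1
        have hsub : ∀ c ∈ ({k, c7, c3, c4, c5} : Finset V), c ∈ U \ (C ∪ D) := fun c hcc =>
          hK (by rw [hKeq]; exact Finset.mem_union_left _ hcc)
        have k16 : ∀ c, c ∈ ({k, c7, c3, c4, c5} : Finset V) → H.Adj c1 c → H.Adj c6 c →
            False := by
          intro c hcc hh1 hh2
          rcases ho.n6 c (hsub c hcc) hh2 with rfl | rfl <;>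
            rcases ho.n1 _ (hsub _ hcc) hh1 with hh | hh
          · exact e05 hh.symm
          · exact e25 hh.symm
          · exact e07 hh.symm
          · exact e27 hh.symm
        have k26 : ∀ c, c ∈ ({k, c7, c3, c4, c5} : Finset V) → H.Adj c2 c → H.Adj c6 c →
            False := by
          intro c hcc hh1 hh2
          rcases ho.n6 c (hsub c hcc) hh2 with rfl | rfl <;>
            rcases ho.n2 _ (hsub _ hcc) hh1 with hh | hh
          · exact e15 hh.symm
          · exact e35 hh.symm
          · exact e17 hh.symm
          · exact e37 hh.symm
        intro d hd e he c hcc hde hdc hec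
        simp only [Finset.mem_insert, Finset.mem_singleton] at hd he
        rcases hd with rfl | rfl | rfl <;> rcases he with rfl | rfl | rfl
        · exact absurd rfl hde
        · exact absurd hec (k12 c hcc hdc)
        · exact absurd hec (k16 c hcc hdc)
        · exact absurd hdc (k12 c hcc hec)
        · exact absurd rfl hde
        · exact absurd hec (k26 c hcc hdc)
        · exact absurd hdc (k16 c hcc hec)
        · exact absurd hdc (k26 c hcc hec)
        · exact absurd rfl hde
      · intro c hcc
        simp only [Finset.mem_insert, Finset.mem_singleton] at hcc
        rcases hcc with rfl | rfl | rfl | rfl | rfl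
        · exact ab.sc.attach Finset.subset_union_left htA
            (fun hh => (hKU c hk).2 (Finset.mem_union_left _ hh)) hkt
        · exact Or.inr ⟨k, by simp, t, by simp [htA], ho.a70, hkt,
            (htK c (by rw [ho.eq]; simp)).symm⟩
        · exact Or.inr ⟨c4, by simp, c5, by simp, ho.a34, ho.a45, Ne.symm e35⟩
        · exact Or.inl ⟨c3, by simp, c5, by simp, e35, ho.a34.symm, ho.a45⟩
        · exact Or.inr ⟨c4, by simp, c3, by simp, ho.a45.symm, ho.a34.symm, e35⟩
    have hT : C ∪ {k, c7, c3, c4, c5} ∪ (D ∪ {c1, c2, c6}) = C ∪ D ∪ K := by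
      rw [hKeq, Finset.union_union_union_comm]
    refine ⟨_, _, ab.step hub hK hc hT hs Finset.subset_union_left ?_ ?_, hT⟩
    · exact fun x hx => Or.inl (Finset.mem_union_left _ hx)
    · have h3 : (D ∪ {c1, c2, c6}).card = D.card + 3 := by
        rw [Finset.card_union_of_disjoint, Finset.card_eq_three.2 ⟨c1, c2, c6, e12, e16, e26, rfl⟩]
        exact hD8.mono_right (by rw [hKeq]; exact Finset.subset_union_right)
      omega

/-- No minimal counterexample contains a hub: absorb exceptional components of the rest until none
are left, and then use minimality. -/
lemma Hub.false (h : Cex H U) (hub : Hub H U lam C₀ D₀ Y A O) : False := by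
  have main : ∀ n, ∀ C D, Absorb H U lam C₀ D₀ Y A O C D → (U \ (C ∪ D)).card = n → False := by
    intro n
    induction n using Nat.strong_induction_on with
    | _ n ih =>
    intro C D ab hn
    by_cases hg : Good H (U \ (C ∪ D))
    · refine h.finish ab.sub (hub.ne.mono ab.hS) ab.sc hg ?_
      have h1 : ((U \ (C ∪ D)).filter
          (fun v => 2 ≤ dg H U v ∧ dg H (U \ (C ∪ D)) v ≤ 1)).card ≤
          (legs H Y O (U \ (C ∪ D))).card := by
        refine ab.count hub subset_rfl (Finset.filter_subset _ _) ?_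
        intro s hs
        rw [Finset.mem_filter, Finset.mem_sdiff] at hs
        obtain ⟨y, hy, _, hsy⟩ := ab.leg' hub hs.1.1 hs.1.2 hs.2.1 hs.2.2
        exact ⟨y, Or.inl hy, hsy⟩
      have h2 := Nat.mul_le_mul hub.two_le h1
      have h3 := ab.phi
      omega
    · have hex : ∃ n K, BadSet H (U \ (C ∪ D)) K ∧ K.card = n := by
        unfold Good at hg
        push Not at hg
        obtain ⟨K, hK⟩ := hg
        exact ⟨_, K, hK, rfl⟩
      obtain ⟨K, hK, hKn⟩ := Nat.find_spec hex
      have hmin : ∀ L, BadSet H (U \ (C ∪ D)) L → K.card ≤ L.card := fun L hL => by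
        rw [hKn]
        exact Nat.find_min' hex ⟨L, hL, rfl⟩
      have hfin : (∃ C' D', Absorb H U lam C₀ D₀ Y A O C' D' ∧ C' ∪ D' = (C ∪ D) ∪ K) →
          False := by
        rintro ⟨C', D', ab', hT⟩
        refine ih _ ?_ C' D' ab' rfl
        rw [← hn, hT]
        apply Finset.card_lt_card
        refine (Finset.ssubset_iff_of_subset ?_).2 ?_
        · intro x hx
          simp only [Finset.mem_union, Finset.mem_sdiff, not_or] at hx ⊢
          exact ⟨hx.1, hx.2.1⟩
        · obtain ⟨k, hk⟩ := hK.2.1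
          refine ⟨k, hK.1 hk, ?_⟩
          simp only [Finset.mem_union, Finset.mem_sdiff, not_or]
          exact fun hh => hh.2.2 hk
      apply hfin
      have hsh := bad_shape h.g hK hmin
      obtain ⟨hKR, hne, hc, _⟩ := hK
      rcases hsh with ⟨z, rfl⟩ | ⟨a, b, _, rfl, hab⟩ | ⟨a, b, c, _, hac, _, rfl, h1, h2, h3⟩ |
        ⟨h8, h2⟩
      · exact ab.one h hub hKR hc
      · exact ab.two h hub hKR hc hab
      · exact ab.three h hub hac hKR hc h1 h2 h3
      · exact ab.eight h hub hKR hc h8 h2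
  exact main _ C₀ D₀ ⟨hub.sc, subset_rfl, subset_rfl, hub.sub, fun t ht ht' => absurd ht ht',
    fun y hy _ _ _ _ => hub.hY hy, hub.phi⟩ rfl

end Girth5Codes

/-! ### No path on five vertices of small degree -/

section Girth5Codes
open Classical
variable {V : Type*}
variable {H : SimpleGraph V} {U : Finset V}

lemma dg_two_eq {v a b : V} (h : dg H U v ≤ 2) (ha : a ∈ U) (hb : b ∈ U) (hab : a ≠ b)
    (h1 : H.Adj v a) (h2 : H.Adj v b) : dg H U v = 2 := le_antisymm h (dg_two_le ha hb hab h1 h2)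

/-- Eight vertices of degree at most 2 cannot form a cycle, as it would be an exceptional component. -/
lemma Good.no_cycle8 (hg : Good H U) {p0 p1 p2 p3 p4 p5 p6 p7 : V}
    (nd : [p0, p1, p2, p3, p4, p5, p6, p7].Nodup)
    (hU : ∀ v ∈ [p0, p1, p2, p3, p4, p5, p6, p7], v ∈ U ∧ dg H U v ≤ 2)
    (a0 : H.Adj p0 p1) (a1 : H.Adj p1 p2) (a2 : H.Adj p2 p3) (a3 : H.Adj p3 p4) (a4 : H.Adj p4 p5)
    (a5 : H.Adj p5 p6) (a6 : H.Adj p6 p7) (a7 : H.Adj p7 p0) : False := by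
  have hnd := nd
  simp only [List.nodup_cons, List.mem_cons, List.not_mem_nil, or_false, not_or, not_false_iff,
    List.nodup_nil, and_true] at nd
  simp only [List.mem_cons, List.not_mem_nil, or_false, forall_eq_or_imp, forall_eq] at hU
  obtain ⟨⟨u0, d0⟩, ⟨u1, d1⟩, ⟨u2, d2⟩, ⟨u3, d3⟩, ⟨u4, d4⟩, ⟨u5, d5⟩, ⟨u6, d6⟩, ⟨u7, d7⟩⟩ := hU
  obtain ⟨⟨e01, e02, e03, e04, e05, e06, e07⟩, ⟨e12, e13, e14, e15, e16, e17⟩,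
    ⟨e23, e24, e25, e26, e27⟩, ⟨e34, e35, e36, e37⟩, ⟨e45, e46, e47⟩, ⟨e56, e57⟩, e67⟩ := nd
  have hK : ({p0, p1, p2, p3, p4, p5, p6, p7} : Finset V).card = 8 :=
    card_of_nodup (l := [p0, p1, p2, p3, p4, p5, p6, p7]) (by simp) hnd
  refine hg {p0, p1, p2, p3, p4, p5, p6, p7} ⟨?_, by simp, ?_, Or.inr ⟨hK, ?_⟩⟩
  · simp only [Finset.insert_subset_iff, Finset.singleton_subset_iff]
    exact ⟨u0, u1, u2, u3, u4, u5, u6, u7⟩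
  · intro x hx w hw hxw
    simp only [Finset.mem_insert, Finset.mem_singleton] at hx
    rcases hx with rfl | rfl | rfl | rfl | rfl | rfl | rfl | rfl
    · rcases dg_two_uniq d0 u1 u7 hw a0 a7.symm hxw e17 with rfl | rfl <;> simp
    · rcases dg_two_uniq d1 u0 u2 hw a0.symm a1 hxw e02 with rfl | rfl <;> simp
    · rcases dg_two_uniq d2 u1 u3 hw a1.symm a2 hxw e13 with rfl | rfl <;> simp
    · rcases dg_two_uniq d3 u2 u4 hw a2.symm a3 hxw e24 with rfl | rfl <;> simp
    · rcases dg_two_uniq d4 u3 u5 hw a3.symm a4 hxw e35 with rfl | rfl <;> simp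
    · rcases dg_two_uniq d5 u4 u6 hw a4.symm a5 hxw e46 with rfl | rfl <;> simp
    · rcases dg_two_uniq d6 u5 u7 hw a5.symm a6 hxw e57 with rfl | rfl <;> simp
    · rcases dg_two_uniq d7 u6 u0 hw a6.symm a7 hxw (Ne.symm e06) with rfl | rfl <;> simp
  · simp only [Finset.mem_insert, Finset.mem_singleton, forall_eq_or_imp, forall_eq]
    exact ⟨dg_two_eq d0 u1 u7 e17 a0 a7.symm, dg_two_eq d1 u0 u2 e02 a0.symm a1,
      dg_two_eq d2 u1 u3 e13 a1.symm a2, dg_two_eq d3 u2 u4 e24 a2.symm a3,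
      dg_two_eq d4 u3 u5 e35 a3.symm a4, dg_two_eq d5 u4 u6 e46 a4.symm a5,
      dg_two_eq d6 u5 u7 e57 a5.symm a6, dg_two_eq d7 u6 u0 (Ne.symm e06) a6.symm a7⟩

/-- A path on five vertices of degree at most 2. -/
structure P5 (H : SimpleGraph V) (U : Finset V) (p1 p2 p3 p4 p5 : V) : Prop where
  nodup : [p1, p2, p3, p4, p5].Nodup
  mem : ∀ v ∈ [p1, p2, p3, p4, p5], v ∈ U ∧ dg H U v ≤ 2
  a1 : H.Adj p1 p2
  a2 : H.Adj p2 p3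
  a3 : H.Adj p3 p4
  a4 : H.Adj p4 p5

lemma P5.symm {p1 p2 p3 p4 p5 : V} (p : P5 H U p1 p2 p3 p4 p5) : P5 H U p5 p4 p3 p2 p1 := by
  refine ⟨?_, ?_, p.a4.symm, p.a3.symm, p.a2.symm, p.a1.symm⟩
  · have := List.nodup_reverse.2 p.nodup
    simpa using this
  · intro v hv
    apply p.mem
    simp only [List.mem_cons, List.not_mem_nil, or_false] at hv ⊢
    tauto

/-- Extending a path by three vertices outside it and cutting back to length five. -/
lemma P5.shift {p1 p2 p3 p4 p5 a b c : V} (p : P5 H U p1 p2 p3 p4 p5)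
    (ha : a ∈ U ∧ dg H U a ≤ 2) (hb : b ∈ U ∧ dg H U b ≤ 2) (hc : c ∈ U ∧ dg H U c ≤ 2)
    (ha' : a ≠ p1 ∧ a ≠ p2) (hb' : b ≠ p1 ∧ b ≠ p2) (hc' : c ≠ p1 ∧ c ≠ p2) (hac : a ≠ c)
    (h1 : H.Adj p1 a) (h2 : H.Adj a b) (h3 : H.Adj b c) : P5 H U c b a p1 p2 := by
  refine ⟨?_, ?_, h3.symm, h2.symm, h1.symm, p.a1⟩
  · simp only [List.nodup_cons, List.mem_cons, List.not_mem_nil, or_false, not_or, not_false_iff,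
      List.nodup_nil, and_true]
    exact ⟨⟨h3.ne', hac.symm, hc'⟩, ⟨h2.ne', hb'⟩, ha', p.a1.ne⟩
  · have := p.mem
    simp only [List.mem_cons, List.not_mem_nil, or_false, forall_eq_or_imp, forall_eq] at this ⊢
    exact ⟨hc, hb, ha, this.1, this.2.1⟩

/-- The three inner vertices of a five-vertex path as a hub with the two ends as legs. -/
lemma P5.hub (g : G5 H) {p1 p2 p3 p4 p5 : V} (p : P5 H U p1 p2 p3 p4 p5) {lam : ℕ}
    (hphi : 2 * wt H U ({p2, p3, p4} ∪ {p1, p5}) +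
      lam * (legs H {p1, p5} ∅ (U \ ({p2, p3, p4} ∪ {p1, p5}))).card ≤ 14) (hl : 2 ≤ lam)
    (hp3 : 4 ≤ lam ∨ ∀ y ∈ ({p1, p5} : Finset V), ∀ a ∈ U, ∀ b ∈ U, ∀ c ∈ U,
      a ∉ ({p2, p3, p4} ∪ {p1, p5} : Finset V) → b ∉ ({p2, p3, p4} ∪ {p1, p5} : Finset V) →
      c ∉ ({p2, p3, p4} ∪ {p1, p5} : Finset V) → a ≠ c → H.Adj y a → H.Adj a b → H.Adj b c →
      dg H U a = 2 → dg H U b = 2 →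
      (dg H U c = 1 ∨ (dg H U c = 2 ∧ ∃ y' ∈ ({p1, p5} : Finset V), y' ≠ y ∧ H.Adj c y')) →
      False) :
    Hub H U lam {p2, p3, p4} {p1, p5} {p1, p5} ∅ ∅ := by
  have nd := p.nodup
  have hU := p.mem
  simp only [List.nodup_cons, List.mem_cons, List.not_mem_nil, or_false, not_or, not_false_iff,
    List.nodup_nil, and_true] at nd
  simp only [List.mem_cons, List.not_mem_nil, or_false, forall_eq_or_imp, forall_eq] at hU
  obtain ⟨⟨u1, d1⟩, ⟨u2, d2⟩, ⟨u3, d3⟩, ⟨u4, d4⟩, ⟨u5, d5⟩⟩ := hU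
  obtain ⟨⟨e12, e13, e14, e15⟩, ⟨e23, e24, e25⟩, ⟨e34, e35⟩, e45⟩ := nd
  have hmem : ∀ v, v ∈ ({p2, p3, p4} ∪ {p1, p5} : Finset V) ↔
      (v = p2 ∨ v = p3 ∨ v = p4) ∨ v = p1 ∨ v = p5 := fun v => by
    simp only [Finset.mem_union, Finset.mem_insert, Finset.mem_singleton]
  refine ⟨?_, by simp, ?_, subset_rfl, by simp, ?_, by simp, by simp, ?_, ?_, hl, hp3⟩
  · intro v hv
    rcases (hmem v).1 hv with (rfl | rfl | rfl) | rfl | rfl <;> assumption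
  · have key : ∀ c ∈ ({p2, p3, p4} : Finset V), H.Adj p1 c → H.Adj p5 c → False := by
      intro c hc h1 h5
      simp only [Finset.mem_insert, Finset.mem_singleton] at hc
      rcases hc with rfl | rfl | rfl
      · exact g.no4 c p3 p4 p5 e24 e35 p.a2 p.a3 p.a4 h5
      · exact g.no3 p1 p2 c p.a1 p.a2 h1
      · exact g.no4 p1 p2 p3 c e13 e24 p.a1 p.a2 p.a3 h1.symm
    refine ⟨?_, ?_, ?_, ?_⟩
    · rw [Finset.disjoint_right]
      simp only [Finset.mem_insert, Finset.mem_singleton, not_or]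
      rintro v (rfl | rfl)
      · exact ⟨e12, e13, e14⟩
      · exact ⟨Ne.symm e25, Ne.symm e35, Ne.symm e45⟩
    · simp only [Finset.mem_insert, Finset.mem_singleton, forall_eq_or_imp, forall_eq]
      exact ⟨⟨p2, by simp, p.a1⟩, ⟨p4, by simp, p.a4.symm⟩⟩
    · intro d hd e he c hcc hde hdc hec
      simp only [Finset.mem_insert, Finset.mem_singleton] at hd he
      rcases hd with rfl | rfl <;> rcases he with rfl | rfl
      · exact absurd rfl hde
      · exact (key c hcc hdc hec).elim
      · exact (key c hcc hec hdc).elim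
      · exact absurd rfl hde
    · intro c hc
      simp only [Finset.mem_insert, Finset.mem_singleton] at hc
      rcases hc with rfl | rfl | rfl
      · exact Or.inr ⟨p3, by simp, p4, by simp, p.a2, p.a3, Ne.symm e24⟩
      · exact Or.inl ⟨p2, by simp, p4, by simp, e24, p.a2.symm, p.a3⟩
      · exact Or.inr ⟨p3, by simp, p2, by simp, p.a3.symm, p.a2.symm, e24⟩
  · intro e he a ha b hb ha' hb' hea heb
    simp only [Finset.mem_insert, Finset.mem_singleton, Finset.notMem_empty, or_false] at he
    have ha2 : a ≠ p2 := fun hh => ha' ((hmem a).2 (by simp [hh]))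
    have hb2 : b ≠ p2 := fun hh => hb' ((hmem b).2 (by simp [hh]))
    have ha4 : a ≠ p4 := fun hh => ha' ((hmem a).2 (by simp [hh]))
    have hb4 : b ≠ p4 := fun hh => hb' ((hmem b).2 (by simp [hh]))
    rcases he with rfl | rfl
    · exact ((dg_two_uniq d1 ha u2 hb hea p.a1 heb ha2).resolve_right hb2).symm
    · exact ((dg_two_uniq d5 ha u4 hb hea p.a4.symm heb ha4).resolve_right hb4).symm
  · intro s hs r hr hr' hrs
    simp only [Finset.notMem_empty, or_false, Finset.mem_insert, Finset.mem_singleton]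
    have hrm : ∀ q, q = p1 ∨ q = p2 ∨ q = p3 ∨ q = p4 ∨ q = p5 → r ≠ q := fun q hq hh => hr'
      ((hmem r).2 (by rw [hh]; tauto))
    rcases (hmem s).1 hs with (rfl | rfl | rfl) | hh
    · rcases dg_two_uniq d2 u1 u3 hr p.a1.symm p.a2 hrs.symm e13 with hh | hh
      · exact absurd hh (hrm _ (by tauto))
      · exact absurd hh (hrm _ (by tauto))
    · rcases dg_two_uniq d3 u2 u4 hr p.a2.symm p.a3 hrs.symm e24 with hh | hh
      · exact absurd hh (hrm _ (by tauto))
      · exact absurd hh (hrm _ (by tauto))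
    · rcases dg_two_uniq d4 u3 u5 hr p.a3.symm p.a4 hrs.symm e35 with hh | hh
      · exact absurd hh (hrm _ (by tauto))
      · exact absurd hh (hrm _ (by tauto))
    · exact hh
  · rw [Finset.card_pair e15]
    exact hphi

/-- If one end of the path is a leaf, there is only one charged leg, which leaves room for a charge
of 4. -/
lemma Cex.no_leaf_path (h : Cex H U) {p1 p2 p3 p4 p5 : V} (p : P5 H U p1 p2 p3 p4 p5)
    (h1 : dg H U p1 = 1) : False := by
  have u2 : p2 ∈ U := (p.mem p2 (by simp)).1
  refine (p.hub h.g (lam := 4) ?_ (by norm_num) (Or.inl le_rfl)).false h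
  have hw : wt H U ({p2, p3, p4} ∪ {p1, p5}) ≤ 4 := by
    have : ({p2, p3, p4, p5} : Finset V).card ≤ 4 := Finset.card_le_four
    refine (Finset.card_le_card ?_).trans this
    intro v hv
    rw [Finset.mem_filter] at hv
    simp only [Finset.mem_union, Finset.mem_insert, Finset.mem_singleton] at hv ⊢
    rcases hv with ⟨(rfl | rfl | rfl) | rfl | rfl, hv⟩
    · tauto
    · tauto
    · tauto
    · omega
    · tauto
  have hl : (legs H {p1, p5} ∅ (U \ ({p2, p3, p4} ∪ {p1, p5}))).card ≤ 1 := by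
    rw [← Finset.card_singleton p5]
    apply Finset.card_le_card
    intro e he
    unfold legs at he
    rw [Finset.union_empty, Finset.mem_filter] at he
    obtain ⟨he, r, hr, her⟩ := he
    rw [Finset.mem_sdiff] at hr
    simp only [Finset.mem_insert, Finset.mem_singleton] at he
    rw [Finset.mem_singleton]
    rcases he with rfl | rfl
    · have := dg_one_uniq h1.le hr.1 u2 her p.a1
      exact absurd (by simp [this]) hr.2
    · rfl
  omega

/-- In a minimal counterexample no five vertices of degree at most 2 form a path. -/
lemma Cex.no_path (h : Cex H U) {p1 p2 p3 p4 p5 : V} (p : P5 H U p1 p2 p3 p4 p5) : False := by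
  have key : ∀ {p1 p2 p3 p4 p5 a b c : V}, P5 H U p1 p2 p3 p4 p5 → a ∈ U → b ∈ U → c ∈ U →
      a ∉ ({p2, p3, p4} ∪ {p1, p5} : Finset V) → b ∉ ({p2, p3, p4} ∪ {p1, p5} : Finset V) →
      c ∉ ({p2, p3, p4} ∪ {p1, p5} : Finset V) → a ≠ c → H.Adj p1 a → H.Adj a b → H.Adj b c →
      dg H U a = 2 → dg H U b = 2 → (dg H U c = 1 ∨ (dg H U c = 2 ∧ H.Adj c p5)) → False := by
    intro p1 p2 p3 p4 p5 a b c p ha hb hc ha' hb' hc' hac h1 h2 h3 hda hdb hdc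
    simp only [Finset.mem_union, Finset.mem_insert, Finset.mem_singleton, not_or] at ha' hb' hc'
    have hc2 : dg H U c ≤ 2 := by omega
    rcases hdc with hdc | ⟨hdc, hcp⟩
    · exact h.no_leaf_path (p.shift ⟨ha, hda.le⟩ ⟨hb, hdb.le⟩ ⟨hc, hc2⟩ ⟨ha'.2.1, ha'.1.1⟩
        ⟨hb'.2.1, hb'.1.1⟩ ⟨hc'.2.1, hc'.1.1⟩ hac h1 h2 h3) hdc
    · refine h.good.no_cycle8 (p0 := c) (p1 := b) (p2 := a) (p3 := p1) (p4 := p2) (p5 := p3)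
        (p6 := p4) (p7 := p5) ?_ ?_ h3.symm h2.symm h1.symm p.a1 p.a2 p.a3 p.a4 hcp.symm
      · have := p.nodup
        rw [List.nodup_cons, List.nodup_cons, List.nodup_cons]
        refine ⟨?_, ?_, ?_, this⟩
        · simp only [List.mem_cons, List.not_mem_nil, or_false, not_or]
          exact ⟨h3.ne', hac.symm, hc'.2.1, hc'.1.1, hc'.1.2.1, hc'.1.2.2, hc'.2.2⟩
        · simp only [List.mem_cons, List.not_mem_nil, or_false, not_or]
          exact ⟨h2.ne', hb'.2.1, hb'.1.1, hb'.1.2.1, hb'.1.2.2, hb'.2.2⟩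
        · simp only [List.mem_cons, List.not_mem_nil, or_false, not_or]
          exact ⟨ha'.2.1, ha'.1.1, ha'.1.2.1, ha'.1.2.2, ha'.2.2⟩
      · have := p.mem
        simp only [List.mem_cons, List.not_mem_nil, or_false, forall_eq_or_imp, forall_eq]
          at this ⊢
        exact ⟨⟨hc, hc2⟩, ⟨hb, hdb.le⟩, ⟨ha, hda.le⟩, this⟩
  refine (p.hub h.g (lam := 2) ?_ le_rfl (Or.inr ?_)).false h
  · have h1 : wt H U ({p2, p3, p4} ∪ {p1, p5}) ≤ 5 :=
      (wt_le _).trans ((Finset.card_union_le _ _).trans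
        (add_le_add Finset.card_le_three Finset.card_le_two))
    have h2 : (legs H {p1, p5} ∅ (U \ ({p2, p3, p4} ∪ {p1, p5}))).card ≤ 2 := by
      refine (Finset.card_filter_le _ _).trans ?_
      rw [Finset.union_empty]
      exact Finset.card_le_two
    omega
  · intro y hy a ha b hb c hc ha' hb' hc' hac h1 h2 h3 hda hdb hdc
    have hs : ({p4, p3, p2} ∪ {p5, p1} : Finset V) = {p2, p3, p4} ∪ {p1, p5} := by
      ext v
      simp only [Finset.mem_union, Finset.mem_insert, Finset.mem_singleton]
      tauto
    simp only [Finset.mem_insert, Finset.mem_singleton] at hy hdc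
    rcases hy with rfl | rfl
    · refine key p ha hb hc ha' hb' hc' hac h1 h2 h3 hda hdb (hdc.imp_right ?_)
      rintro ⟨hd, y', rfl | rfl, hne, hcy⟩
      · exact absurd rfl hne
      · exact ⟨hd, hcy⟩
    · refine key p.symm ha hb hc (hs ▸ ha') (hs ▸ hb') (hs ▸ hc') hac h1 h2 h3 hda hdb
        (hdc.imp_right ?_)
      rintro ⟨hd, y', rfl | rfl, hne, hcy⟩
      · exact ⟨hd, hcy⟩
      · exact absurd rfl hne

end Girth5Codes

/-! ### Neighbourhoods of vertices of large degree -/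

section Girth5Codes
open Classical
variable {V : Type*}
variable {H : SimpleGraph V} {U : Finset V}

/-- Neighbours of `u` with degree at least 2 all of whose neighbours have degree at least 3. -/
noncomputable def core (H : SimpleGraph V) (U : Finset V) (u : V) : Finset V :=
  (nb H U u).filter (fun x => 2 ≤ dg H U x ∧ ∀ w ∈ U, H.Adj x w → 3 ≤ dg H U w)

/-- Vertices of degree at most 2 at distance 2 from `u`. -/
noncomputable def feet (H : SimpleGraph V) (U : Finset V) (u : V) : Finset V :=
  U.filter (fun y => y ≠ u ∧ dg H U y ≤ 2 ∧ ∃ x ∈ nb H U u, H.Adj y x)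

/-- Neighbours of `u` with degree at least 2 having a neighbour of degree at most 2. -/
noncomputable def knees (H : SimpleGraph V) (U : Finset V) (u : V) : Finset V :=
  (nb H U u).filter (fun x => 2 ≤ dg H U x ∧ ¬ ∀ w ∈ U, H.Adj x w → 3 ≤ dg H U w)

/-- Distinct knees are adjacent to distinct feet, since otherwise there would be a 4-cycle. -/
lemma knees_le_feet (g : G5 H) {u : V} (hu : u ∈ U) (h3 : 3 ≤ dg H U u) :
    (knees H U u).card ≤ (feet H U u).card := by
  have : ∀ x ∈ knees H U u, ∃ y ∈ feet H U u, H.Adj y x := by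
    intro x hx
    unfold knees at hx
    obtain ⟨hx, -, h⟩ := Finset.mem_filter.1 hx
    push Not at h
    obtain ⟨w, hw, hxw, hd⟩ := h
    refine ⟨w, Finset.mem_filter.2 ⟨hw, ?_, by omega, x, hx, hxw.symm⟩, hxw.symm⟩
    rintro rfl
    omega
  choose! f hf hf' using this
  refine Finset.card_le_card_of_injOn f hf ?_
  intro x hx x' hx' hxx
  by_contra hne
  have hy := (Finset.mem_filter.1 (hf x hx)).2.1
  have h1 := (mem_nb.1 (Finset.mem_filter.1 hx).1).2
  have h2 := (mem_nb.1 (Finset.mem_filter.1 hx').1).2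
  have h4 := hf' x' hx'
  rw [← hxx] at h4
  exact g.no4 u x (f x) x' hy.symm hne h1 (hf' x hx).symm h4 h2.symm

/-- A vertex `u` of degree at least 3 with its neighbours as the code, and the vertices behind them
as legs. At most one neighbour `O` of `u` may be moved to the complement. -/
lemma Cex.spider (h : Cex H U) {u : V} (hu : u ∈ U) (h3 : 3 ≤ dg H U u) {O : Finset V}
    (hO : O ⊆ nb H U u) (hO' : ∀ x ∈ O, x ∈ core H U u ∨ dg H U x ≤ 1) (hO1 : O.card ≤ 1)
    (hcount : 2 + 2 * (core H U u).card + 2 * (O.filter (fun x => 2 ≤ dg H U x)).card +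
      2 * (knees H U u).card ≤ 3 * (feet H U u).card + 7 * O.card) : False := by
  have hX2 : ∀ x ∈ nb H U u, dg H U x ≤ 2 := by
    intro x hx
    rw [mem_nb] at hx
    by_contra hh
    exact h.indep hu hx.1 h3 (by omega) hx.2
  have hXu : ∀ x ∈ nb H U u, x ∈ U ∧ H.Adj u x := fun x hx => mem_nb.1 hx
  have hYX : ∀ y ∈ feet H U u, y ∉ nb H U u := by
    intro y hy hyX
    obtain ⟨_, _, _, x, hx, hyx⟩ := Finset.mem_filter.1 hy
    exact h.g.no3 u x y (hXu x hx).2 hyx.symm (hXu y hyX).2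
  have hYO : Disjoint (feet H U u) O := Finset.disjoint_left.2 fun y hy hyO => hYX y hy (hO hyO)
  have huX : u ∉ nb H U u := fun hh => (hXu u hh).2.ne rfl
  have hmem : ∀ v, v ∈ insert u (nb H U u \ O) ∪ (feet H U u ∪ O) ↔
      v = u ∨ v ∈ nb H U u ∨ v ∈ feet H U u := by
    intro v
    simp only [Finset.mem_union, Finset.mem_insert, Finset.mem_sdiff]
    have := @hO v
    by_cases hv : v ∈ O
    · simp only [hv, this hv]
      tauto
    · simp only [hv]
      tauto
  have hXO : ∀ x, ∃ x' ∈ nb H U u \ O, x' ≠ x := by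
    intro x
    have h1 : 2 ≤ (nb H U u \ O).card := by
      have := Finset.card_sdiff_of_subset hO
      unfold dg at h3
      omega
    obtain ⟨a, ha, b, hb, hab⟩ := Finset.one_lt_card.1 h1
    by_cases hax : a = x
    · exact ⟨b, hb, fun hh => hab (hax.trans hh.symm)⟩
    · exact ⟨a, ha, hax⟩
  have hub : Hub H U 2 (insert u (nb H U u \ O)) (feet H U u ∪ O) (feet H U u)
      (core H U u \ O) O := by
    refine ⟨?_, ⟨u, by simp⟩, ⟨?_, ?_, ?_, ?_⟩, Finset.subset_union_left, ?_, ?_, ?_, ?_, ?_, ?_,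
      le_rfl, Or.inr ?_⟩
    · intro v hv
      rcases (hmem v).1 hv with rfl | hv | hv
      · exact hu
      · exact (hXu v hv).1
      · exact (Finset.mem_filter.1 hv).1
    · rw [Finset.disjoint_left]
      intro v hv hv'
      rw [Finset.mem_insert, Finset.mem_sdiff] at hv
      rw [Finset.mem_union] at hv'
      rcases hv with rfl | ⟨hv, hvO⟩
      · rcases hv' with hv' | hv'
        · exact (Finset.mem_filter.1 hv').2.1 rfl
        · exact huX (hO hv')
      · exact hYX v (hv'.resolve_right hvO) hv
    · intro d hd
      rcases Finset.mem_union.1 hd with hd | hd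
      · obtain ⟨hdU, hdu, hd2, x, hx, hdx⟩ := Finset.mem_filter.1 hd
        refine ⟨x, ?_, hdx⟩
        rw [Finset.mem_insert, Finset.mem_sdiff]
        refine Or.inr ⟨hx, fun hxO => ?_⟩
        rcases hO' x hxO with hh | hh
        · have := (Finset.mem_filter.1 hh).2.2 d hdU hdx.symm
          omega
        · exact hdu (dg_one_uniq hh hdU hu hdx.symm (hXu x hx).2.symm)
      · exact ⟨u, by simp, (hXu d (hO hd)).2.symm⟩
    · intro d hd e he c hc hde hdc hec
      rw [Finset.mem_insert, Finset.mem_sdiff] at hc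
      have hdU : ∀ d ∈ feet H U u ∪ O, d ∈ U ∧ d ≠ u := by
        intro d hd
        rcases Finset.mem_union.1 hd with hd | hd
        · exact ⟨(Finset.mem_filter.1 hd).1, (Finset.mem_filter.1 hd).2.1⟩
        · exact ⟨(hXu d (hO hd)).1, (hXu d (hO hd)).2.ne'⟩
      rcases hc with rfl | ⟨hc, _⟩
      · have hdO : ∀ d ∈ feet H U c ∪ O, H.Adj d c → d ∈ O := fun d hd hdc =>
          (Finset.mem_union.1 hd).resolve_left fun hh =>
            hYX d hh (mem_nb.2 ⟨(hdU d hd).1, hdc.symm⟩)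
        exact absurd (Finset.card_le_one.1 hO1 d (hdO d hd hdc) e (hdO e he hec)) hde
      · have := dg_three_le (hdU d hd).1 (hdU e he).1 hu hde (hdU d hd).2 (hdU e he).2 hdc.symm
          hec.symm (hXu c hc).2.symm
        have := hX2 c hc
        omega
    · intro c hc
      rw [Finset.mem_insert] at hc
      obtain ⟨x, hx, hxc⟩ := hXO c
      have hxu := (hXu x (Finset.mem_sdiff.1 hx).1).2
      rcases hc with rfl | hc
      · obtain ⟨x', hx', hxx⟩ := hXO x
        exact Or.inl ⟨x', Finset.mem_insert_of_mem hx', x, Finset.mem_insert_of_mem hx, hxx,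
          (hXu x' (Finset.mem_sdiff.1 hx').1).2, hxu⟩
      · exact Or.inr ⟨u, Finset.mem_insert_self _ _, x, Finset.mem_insert_of_mem hx,
          (hXu c (Finset.mem_sdiff.1 hc).1).2.symm, hxu, hxc⟩
    · intro x hx
      rw [Finset.mem_sdiff] at hx
      exact Finset.mem_insert_of_mem (Finset.mem_sdiff.2 ⟨(Finset.mem_filter.1 hx.1).1, hx.2⟩)
    · intro e he a ha b hb ha' hb' hea heb
      have : dg H U e ≤ 2 ∧ ∃ s ∈ U, s ∈ insert u (nb H U u \ O) ∪ (feet H U u ∪ O) ∧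
          H.Adj e s := by
        have hx : ∀ x ∈ nb H U u, dg H U x ≤ 2 ∧ ∃ s ∈ U,
            s ∈ insert u (nb H U u \ O) ∪ (feet H U u ∪ O) ∧ H.Adj x s := fun x hx =>
          ⟨hX2 x hx, u, hu, (hmem u).2 (Or.inl rfl), (hXu x hx).2.symm⟩
        rcases he with he | he | he
        · obtain ⟨_, _, hd2, x, hx, hdx⟩ := Finset.mem_filter.1 he
          exact ⟨hd2, x, (hXu x hx).1, (hmem x).2 (Or.inr (Or.inl hx)), hdx⟩
        · exact hx e (Finset.mem_filter.1 (Finset.mem_sdiff.1 he).1).1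
        · exact hx e (hO he)
      obtain ⟨hd, s, hs, hsS, hes⟩ := this
      have h1 : a ≠ s := fun hh => ha' (hh ▸ hsS)
      have h2 : b ≠ s := fun hh => hb' (hh ▸ hsS)
      exact ((dg_two_uniq hd ha hs hb hea hes heb h1).resolve_right h2).symm
    · intro r hr hr' e he hre
      have : e ∈ core H U u ∨ dg H U e ≤ 1 := by
        rcases he with he | he
        · exact Or.inl (Finset.mem_sdiff.1 he).1
        · exact hO' e he
      have heX : e ∈ nb H U u := by
        rcases he with he | he
        · exact (Finset.mem_filter.1 (Finset.mem_sdiff.1 he).1).1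
        · exact hO he
      rcases this with hh | hh
      · exact (Finset.mem_filter.1 hh).2.2 r hr hre.symm
      · have := dg_one_uniq hh hr hu hre.symm (hXu e heX).2.symm
        exact absurd ((hmem r).2 (Or.inl this)) hr'
    · intro r hr hr' e f he hf hre hrf
      have hX : ∀ e, (e ∈ core H U u \ O ∨ e ∈ O) → e ∈ nb H U u := by
        rintro e (he | he)
        · exact (Finset.mem_filter.1 (Finset.mem_sdiff.1 he).1).1
        · exact hO he
      by_contra hne
      refine h.g.no4 u e r f ?_ hne (hXu e (hX e he)).2 hre.symm hrf (hXu f (hX f hf)).2.symm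
      intro hh
      exact hr' ((hmem r).2 (Or.inl hh.symm))
    · intro s hs r hr hr' hrs
      rcases (hmem s).1 hs with rfl | hs | hs
      · exact absurd ((hmem r).2 (Or.inr (Or.inl (mem_nb.2 ⟨hr, hrs.symm⟩)))) hr'
      · have hru : r ≠ u := fun hh => hr' ((hmem r).2 (Or.inl hh))
        by_cases hsO : s ∈ O
        · exact Or.inr (Or.inr hsO)
        · refine Or.inr (Or.inl (Finset.mem_sdiff.2 ⟨?_, hsO⟩))
          have hsu := (hXu s hs).2.symm
          have h2 := dg_two_le hr hu hru hrs.symm hsu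
          refine Finset.mem_filter.2 ⟨hs, h2, ?_⟩
          intro w hw hsw
          by_contra hlt
          rcases dg_two_uniq (hX2 s hs) hr hu hw hrs.symm hsu hsw hru with rfl | rfl
          · refine hr' ((hmem w).2 (Or.inr (Or.inr (Finset.mem_filter.2
              ⟨hr, hru, by omega, s, hs, hrs⟩))))
          · exact hlt h3
      · exact Or.inl hs
    · have e1 : insert u (nb H U u \ O) ∪ (feet H U u ∪ O) = {u} ∪ (nb H U u ∪ feet H U u) := by
        ext v
        rw [hmem]
        simp only [Finset.mem_union, Finset.mem_singleton]
      have w1 : wt H U ({u} ∪ (nb H U u ∪ feet H U u)) ≤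
          1 + ((core H U u).card + (knees H U u).card + (feet H U u).card) := by
        have e3 : wt H U (nb H U u) = (core H U u).card + (knees H U u).card := by
          unfold wt core knees
          rw [← Finset.card_filter_add_card_filter_not (s := (nb H U u).filter (fun v => 2 ≤ dg H U v))
            (fun x => ∀ w ∈ U, H.Adj x w → 3 ≤ dg H U w), Finset.filter_filter,
            Finset.filter_filter]
        rw [wt_union (Finset.disjoint_singleton_left.2 (by
          rw [Finset.mem_union, not_or]
          exact ⟨huX, fun hh => (Finset.mem_filter.1 hh).2.1 rfl⟩)),
          wt_union (Finset.disjoint_right.2 hYX), e3]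
        have e4 := wt_le (H := H) (U := U) {u}
        rw [Finset.card_singleton] at e4
        have e5 := wt_le (H := H) (U := U) (feet H U u)
        omega
      have l1 : (legs H (feet H U u) O (U \ ({u} ∪ (nb H U u ∪ feet H U u)))).card ≤
          (feet H U u).card + (O.filter (fun x => 2 ≤ dg H U x)).card := by
        refine (Finset.card_le_card ?_).trans (Finset.card_union_le _ _)
        intro e he
        unfold legs at he
        obtain ⟨he, r, hr, her⟩ := Finset.mem_filter.1 he
        rw [Finset.mem_union] at he ⊢
        refine he.imp_right fun he => Finset.mem_filter.2 ⟨he, ?_⟩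
        rw [Finset.mem_sdiff, Finset.mem_union, Finset.mem_singleton, not_or] at hr
        exact dg_two_le hr.1 hu hr.2.1 her (hXu e (hO he)).2.symm
      rw [e1, Finset.card_union_of_disjoint hYO]
      omega
    · intro y hy a ha b hb c hc ha' hb' hc' hac hya hab hbc hda hdb hdc
      obtain ⟨hyU, hyu, hy2, x, hx, hyx⟩ := Finset.mem_filter.1 hy
      have hyS := (hmem y).2 (Or.inr (Or.inr hy))
      have hxS := (hmem x).2 (Or.inr (Or.inl hx))
      have hne : ∀ p q, p ∉ insert u (nb H U u \ O) ∪ (feet H U u ∪ O) →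
          q ∈ insert u (nb H U u \ O) ∪ (feet H U u ∪ O) → p ≠ q := fun p q hp hq hh =>
        hp (hh ▸ hq)
      refine h.no_path (p1 := c) (p2 := b) (p3 := a) (p4 := y) (p5 := x)
        ⟨?_, ?_, hbc.symm, hab.symm, hya.symm, hyx⟩
      · simp only [List.nodup_cons, List.mem_cons, List.not_mem_nil, or_false, not_or,
          not_false_iff, List.nodup_nil, and_true]
        exact ⟨⟨hbc.ne', hac.symm, hne c y hc' hyS, hne c x hc' hxS⟩,
          ⟨hab.ne', hne b y hb' hyS, hne b x hb' hxS⟩, ⟨hya.ne', hne a x ha' hxS⟩, hyx.ne⟩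
      · simp only [List.mem_cons, List.not_mem_nil, or_false, forall_eq_or_imp, forall_eq]
        refine ⟨⟨hc, ?_⟩, ⟨hb, hdb.le⟩, ⟨ha, hda.le⟩, ⟨hyU, hy2⟩, ⟨(hXu x hx).1, hX2 x hx⟩⟩
        rcases hdc with hh | hh
        · omega
        · exact hh.1.le
  exact hub.false h

/-- In a minimal counterexample every vertex of degree at least 3 has at least three neighbours of
degree 2 all of whose neighbours have degree at least 3. -/
lemma Cex.inner_three (h : Cex H U) {u : V} (hu : u ∈ U) (h3 : 3 ≤ dg H U u) :
    3 ≤ (core H U u).card := by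
  by_contra hlt
  have hkf := knees_le_feet h.g hu h3
  have hX : (core H U u).card + (knees H U u).card +
      ((nb H U u).filter (fun x => ¬ 2 ≤ dg H U x)).card = (nb H U u).card := by
    rw [← Finset.card_filter_add_card_filter_not (s := nb H U u) (fun v => 2 ≤ dg H U v),
      ← Finset.card_filter_add_card_filter_not (s := (nb H U u).filter (fun v => 2 ≤ dg H U v))
        (fun x => ∀ w ∈ U, H.Adj x w → 3 ≤ dg H U w), Finset.filter_filter, Finset.filter_filter]
    rfl
  change 3 ≤ (nb H U u).card at h3
  by_cases hL : ∃ x ∈ nb H U u, dg H U x ≤ 1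
  · obtain ⟨x, hx, hx1⟩ := hL
    refine h.spider hu h3 (O := {x}) (by simpa using hx) ?_ (by simp) ?_
    · intro x' hx'
      rw [Finset.mem_singleton.1 hx']
      exact Or.inr hx1
    · have : ({x} : Finset V).filter (fun x => 2 ≤ dg H U x) = ∅ := by
        rw [Finset.filter_singleton, if_neg (by omega)]
      rw [this, Finset.card_singleton, Finset.card_empty]
      omega
  · have hL0 : ((nb H U u).filter (fun x => ¬ 2 ≤ dg H U x)).card = 0 := by
      rw [Finset.card_eq_zero, Finset.filter_eq_empty_iff]
      intro x hx hh
      exact hL ⟨x, hx, by omega⟩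
    by_cases hI : (core H U u).Nonempty
    · obtain ⟨x, hx⟩ := hI
      refine h.spider hu h3 (O := {x}) ?_ ?_ (by simp) ?_
      · rw [Finset.singleton_subset_iff]
        exact (Finset.mem_filter.1 hx).1
      · intro x' hx'
        rw [Finset.mem_singleton.1 hx']
        exact Or.inl hx
      · have h1 := Finset.card_filter_le ({x} : Finset V) (fun x => 2 ≤ dg H U x)
        rw [Finset.card_singleton] at h1 ⊢
        omega
    · rw [Finset.not_nonempty_iff_eq_empty] at hI
      have hI0 : (core H U u).card = 0 := by rw [hI, Finset.card_empty]
      refine h.spider hu h3 (O := ∅) (by simp) (by simp) (by simp) ?_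
      rw [Finset.filter_empty, Finset.card_empty]
      omega

end Girth5Codes

/-! ### Absorbing the remaining short paths -/

section Girth5Codes
open Classical
variable {V : Type*}
variable {H : SimpleGraph V} {U C D : Finset V}

/-- Walks without backtracking on at most five vertices are paths, by the girth condition. -/
lemma Cex.no_walk (h : Cex H U) {p1 p2 p3 p4 p5 : V}
    (u : ∀ v ∈ [p1, p2, p3, p4, p5], v ∈ U ∧ dg H U v ≤ 2)
    (a1 : H.Adj p1 p2) (a2 : H.Adj p2 p3) (a3 : H.Adj p3 p4) (a4 : H.Adj p4 p5)
    (n1 : p1 ≠ p3) (n2 : p2 ≠ p4) (n3 : p3 ≠ p5) : False := by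
  refine h.no_path (p1 := p1) (p2 := p2) (p3 := p3) (p4 := p4) (p5 := p5) ⟨?_, u, a1, a2, a3, a4⟩
  have e1 : p1 ≠ p4 := by
    rintro rfl
    exact h.g.no3 _ _ _ a1 a2 a3.symm
  have e2 : p2 ≠ p5 := by
    rintro rfl
    exact h.g.no3 _ _ _ a2 a3 a4.symm
  have e3 : p1 ≠ p5 := by
    rintro rfl
    exact h.g.no4 _ _ _ _ n1 n2 a1 a2 a3 a4
  simp only [List.nodup_cons, List.mem_cons, List.not_mem_nil, or_false, not_or, not_false_iff,
      List.nodup_nil, and_true]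
  exact ⟨⟨a1.ne, n1, e1, e3⟩, ⟨a2.ne, n2, e2⟩, ⟨a3.ne, n3⟩, a4.ne⟩

/-- A partially built strong code `C`, with complement `D` in `C ∪ D`: all vertices of degree at
least 3 are in `C`, the vertices of degree 2 between them are in `C ∪ D`, only vertices of degree at
least 3 may have neighbours outside `C ∪ D`, and `D` is large enough. -/
structure St (H : SimpleGraph V) (U C D : Finset V) : Prop where
  sub : C ∪ D ⊆ U
  sc : SC H C D
  big : ∀ u ∈ U, 3 ≤ dg H U u → u ∈ C
  mid : ∀ m ∈ U, dg H U m = 2 → (∀ w ∈ U, H.Adj m w → 3 ≤ dg H U w) → m ∈ C ∪ D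
  out : ∀ t ∈ C ∪ D, ∀ r ∈ U, r ∉ C ∪ D → H.Adj t r → 3 ≤ dg H U t
  phi : 2 * wt H U (C ∪ D) ≤ 7 * D.card

/-- A strong code of a further set, dominating its own complement and with no new outside
neighbours of small degree, can be added to the partial code. -/
lemma St.add (s : St H U C D) {C₂ D₂ : Finset V} (h1 : ∀ x ∈ C₂ ∪ D₂, x ∈ U ∧ x ∉ C ∪ D)
    (hd2 : Disjoint C₂ D₂) (hdom : ∀ d ∈ D₂, ∃ c ∈ C₂, H.Adj d c)
    (hpriv : ∀ d ∈ D₂, ∀ e ∈ D₂, ∀ c ∈ C₂, d ≠ e → H.Adj d c → H.Adj e c →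
      (∃ b ∈ C ∪ C₂, b ≠ c ∧ H.Adj d b) ∨ (∃ b ∈ C ∪ C₂, b ≠ c ∧ H.Adj e b))
    (hcomp : ∀ c ∈ C₂, InP3 H (C ∪ C₂) c)
    (hout : ∀ x ∈ C₂ ∪ D₂, ∀ w ∈ U, H.Adj x w → 3 ≤ dg H U w ∨ w ∈ C₂ ∪ D₂)
    (hw : 2 * wt H U (C₂ ∪ D₂) ≤ 7 * D₂.card) : St H U (C ∪ C₂) (D ∪ D₂) := by
  have hdis : Disjoint (C ∪ D) (C₂ ∪ D₂) := Finset.disjoint_right.2 fun x hx => (h1 x hx).2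
  have he : C ∪ C₂ ∪ (D ∪ D₂) = (C ∪ D) ∪ (C₂ ∪ D₂) := Finset.union_union_union_comm _ _ _ _
  refine ⟨?_, s.sc.glue hdis hd2 hdom hpriv hcomp, ?_, ?_, ?_, ?_⟩
  · rw [he]
    exact Finset.union_subset s.sub fun x hx => (h1 x hx).1
  · intro u hu h3
    exact Finset.mem_union_left _ (s.big u hu h3)
  · rw [he]
    intro m hm h2 h3
    exact Finset.mem_union_left _ (s.mid m hm h2 h3)
  · rw [he]
    intro t ht r hr hrT htr
    rw [Finset.mem_union, not_or] at hrT
    rcases Finset.mem_union.1 ht with ht | ht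
    · exact s.out t ht r hr hrT.1 htr
    · rcases hout t ht r hr htr with h3 | h3
      · exact absurd (Finset.mem_union_left _ (s.big r hr h3)) hrT.1
      · exact absurd h3 hrT.2
  · rw [he, wt_union hdis, Finset.card_union_of_disjoint]
    · have := s.phi
      omega
    · exact (hdis.mono_left Finset.subset_union_right).mono_right Finset.subset_union_right

lemma wt_four (a b c d : V) : wt H U ({a, b} ∪ {c, d}) ≤ 4 :=
  (wt_le _).trans ((Finset.card_union_le _ _).trans (add_le_add Finset.card_le_two Finset.card_le_two))

set_option maxHeartbeats 1000000 in
/-- The remaining components are paths with at most four vertices hanging off vertices of large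
degree; each of them can be added. -/
lemma Cex.grow (h : Cex H U) (s : St H U C D) (hne : (C ∪ D).Nonempty) (hT : C ∪ D ≠ U) :
    ∃ C' D', St H U C' D' ∧ C ∪ D ⊂ C' ∪ D' := by
  obtain ⟨t, ht, p1, hp1, hn1, ht1⟩ : ∃ t ∈ C ∪ D, ∃ r ∈ U, r ∉ C ∪ D ∧ H.Adj t r := by
    by_contra hno
    push Not at hno
    refine hT (h.conn s.sub hne fun a ha b hb hab => ?_)
    by_contra hbT
    exact hno a ha b hb hbT hab
  have htC : t ∈ C := s.big t (s.sub ht) (s.out t ht p1 hp1 hn1 ht1)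
  have done : ∀ {C₂ D₂ : Finset V}, p1 ∈ C₂ → St H U (C ∪ C₂) (D ∪ D₂) →
      ∃ C' D', St H U C' D' ∧ C ∪ D ⊂ C' ∪ D' := by
    intro C₂ D₂ hp hs
    refine ⟨_, _, hs, ?_⟩
    rw [Finset.union_union_union_comm]
    refine Finset.ssubset_iff_subset_ne.2 ⟨Finset.subset_union_left, fun he => hn1 ?_⟩
    rw [he]
    exact Finset.mem_union_right _ (Finset.mem_union_left _ hp)
  have small : ∀ r ∈ U, r ∉ C ∪ D → dg H U r ≤ 2 := by
    intro r hr hrT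
    by_contra hh
    exact hrT (Finset.mem_union_left _ (s.big r hr (by omega)))
  -- a low-degree neighbour of an outside vertex lies outside
  have next : ∀ r ∈ U, r ∉ C ∪ D → ∀ w ∈ U, H.Adj r w → ¬ 3 ≤ dg H U w → w ∉ C ∪ D := by
    intro r hr hrT w hw hrw h3 hwT
    exact h3 (s.out w hwT r hr hrT hrw.symm)
  have d1 := small p1 hp1 hn1
  have n1C : p1 ∉ C := fun hc => hn1 (Finset.mem_union_left _ hc)
  have ht3 : 3 ≤ dg H U t := s.out t ht p1 hp1 hn1 ht1
  obtain ⟨y, hy, hty⟩ := s.sc.nbr htC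
  by_cases k1 : ∀ w ∈ U, H.Adj p1 w → 3 ≤ dg H U w
  · have hd : ¬ 2 ≤ dg H U p1 := fun h2 => hn1 (s.mid p1 hp1 (by omega) k1)
    refine done (C₂ := {p1}) (D₂ := ∅) (by simp) (s.add ?_ (by simp) (by simp) (by simp) ?_ ?_ ?_)
    · simpa using ⟨hp1, by simpa using hn1⟩
    · intro c hc
      rw [Finset.mem_singleton.1 hc]
      exact s.sc.attach Finset.subset_union_left htC n1C ht1.symm
    · intro x hx w hw hxw
      simp only [Finset.union_empty, Finset.mem_singleton] at hx
      subst hx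
      exact Or.inl (k1 w hw hxw)
    · rw [Finset.union_empty, wt_single, if_neg hd]
      simp
  push Not at k1
  obtain ⟨p2, hp2, a12, hd2⟩ := k1
  have hn2 := next p1 hp1 hn1 p2 hp2 a12 (by omega)
  have d2 := small p2 hp2 hn2
  have t2 : t ≠ p2 := by
    rintro rfl
    omega
  -- the neighbours of `p1`
  have N1 : ∀ w ∈ U, H.Adj p1 w → w = t ∨ w = p2 :=
    fun w hw hw1 => (dg_two_uniq d1 (s.sub ht) hp2 hw ht1.symm a12 hw1 t2)
  by_cases k2 : ∀ w ∈ U, H.Adj p2 w → 3 ≤ dg H U w ∨ w = p1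
  · refine done (C₂ := {p1}) (D₂ := {p2}) (by simp) (s.add ?_ ?_ ?_ ?_ ?_ ?_ ?_)
    · intro x hx
      simp only [Finset.mem_union, Finset.mem_singleton] at hx
      rcases hx with rfl | rfl
      · exact ⟨hp1, hn1⟩
      · exact ⟨hp2, hn2⟩
    · simpa using a12.ne
    · simpa using a12.symm
    · intro d hd e he c _ hde
      exact absurd ((Finset.mem_singleton.1 hd).trans (Finset.mem_singleton.1 he).symm) hde
    · intro c hc
      rw [Finset.mem_singleton.1 hc]
      exact s.sc.attach Finset.subset_union_left htC n1C ht1.symm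
    · intro x hx w hw hxw
      simp only [Finset.mem_union, Finset.mem_singleton] at hx ⊢
      rcases hx with rfl | rfl
      · rcases N1 w hw hxw with rfl | rfl
        · exact Or.inl ht3
        · exact Or.inr (Or.inr rfl)
      · exact (k2 w hw hxw).imp_right Or.inl
    · have h1 : wt H U ({p1} ∪ {p2}) ≤ 2 := (wt_le _).trans (Finset.card_union_le _ _)
      rw [Finset.card_singleton]
      omega
  push Not at k2
  obtain ⟨p3, hp3, a23, hd3, n13⟩ := k2
  have hn3 := next p2 hp2 hn2 p3 hp3 a23 (by omega)
  have d3 := small p3 hp3 hn3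
  have N2 : ∀ w ∈ U, H.Adj p2 w → w = p1 ∨ w = p3 :=
    fun w hw hw1 => (dg_two_uniq d2 hp1 hp3 hw a12.symm a23 hw1 n13.symm)
  by_cases k3 : ∀ w ∈ U, H.Adj p3 w → 3 ≤ dg H U w ∨ w = p2
  · refine done (C₂ := {p1, p2}) (D₂ := {p3}) (by simp) (s.add ?_ ?_ ?_ ?_ ?_ ?_ ?_)
    · intro x hx
      simp only [Finset.mem_union, Finset.mem_insert, Finset.mem_singleton] at hx
      rcases hx with (rfl | rfl) | rfl
      · exact ⟨hp1, hn1⟩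
      · exact ⟨hp2, hn2⟩
      · exact ⟨hp3, hn3⟩
    · simpa using ⟨n13, a23.ne'⟩
    · intro d hd
      rw [Finset.mem_singleton.1 hd]
      exact ⟨p2, by simp, a23.symm⟩
    · intro d hd e he c _ hde
      exact absurd ((Finset.mem_singleton.1 hd).trans (Finset.mem_singleton.1 he).symm) hde
    · intro c hc
      simp only [Finset.mem_insert, Finset.mem_singleton] at hc
      rcases hc with rfl | rfl
      · exact s.sc.attach Finset.subset_union_left htC n1C ht1.symm
      · exact Or.inr ⟨p1, by simp, t, Finset.mem_union_left _ htC, a12.symm, ht1.symm, t2⟩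
    · intro x hx w hw hxw
      simp only [Finset.mem_union, Finset.mem_insert, Finset.mem_singleton] at hx ⊢
      rcases hx with (rfl | rfl) | rfl
      · rcases N1 w hw hxw with rfl | rfl
        · exact Or.inl ht3
        · exact Or.inr (Or.inl (Or.inr rfl))
      · rcases N2 w hw hxw with rfl | rfl
        · exact Or.inr (Or.inl (Or.inl rfl))
        · exact Or.inr (Or.inr rfl)
      · exact (k3 w hw hxw).imp_right fun h => Or.inl (Or.inr h)
    · have h1 : wt H U ({p1, p2} ∪ {p3}) ≤ 3 := (wt_le _).trans
        ((Finset.card_union_le _ _).trans (add_le_add Finset.card_le_two le_rfl))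
      rw [Finset.card_singleton]
      omega
  push Not at k3
  obtain ⟨p4, hp4, a34, hd4, n24⟩ := k3
  have hn4 := next p3 hp3 hn3 p4 hp4 a34 (by omega)
  have d4 := small p4 hp4 hn4
  have N3 : ∀ w ∈ U, H.Adj p3 w → w = p2 ∨ w = p4 :=
    fun w hw hw1 => (dg_two_uniq d3 hp2 hp4 hw a23.symm a34 hw1 n24.symm)
  have n14 : p4 ≠ p1 := by
    rintro rfl
    exact h.g.no3 _ _ _ a12 a23 a34.symm
  have k4 : ∀ w ∈ U, H.Adj p4 w → 3 ≤ dg H U w ∨ w = p3 := by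
    intro w hw hw4
    by_contra hh
    rw [not_or] at hh
    refine h.no_walk (p1 := p1) (p2 := p2) (p3 := p3) (p4 := p4) (p5 := w) ?_ a12 a23 a34 hw4
      n13.symm n24.symm (Ne.symm hh.2)
    simp only [List.mem_cons, List.not_mem_nil, or_false, forall_eq_or_imp, forall_eq]
    exact ⟨⟨hp1, d1⟩, ⟨hp2, d2⟩, ⟨hp3, d3⟩, ⟨hp4, d4⟩, hw, by omega⟩
  have hout : ∀ x, x = p1 ∨ x = p2 ∨ x = p3 ∨ x = p4 → ∀ w ∈ U, H.Adj x w →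
      3 ≤ dg H U w ∨ (w = p1 ∨ w = p2 ∨ w = p3 ∨ w = p4) := by
    rintro x (rfl | rfl | rfl | rfl) w hw hxw
    · rcases N1 w hw hxw with rfl | rfl
      · exact Or.inl ht3
      · exact Or.inr (Or.inr (Or.inl rfl))
    · rcases N2 w hw hxw with rfl | rfl
      · exact Or.inr (Or.inl rfl)
      · exact Or.inr (Or.inr (Or.inr (Or.inl rfl)))
    · rcases N3 w hw hxw with rfl | rfl
      · exact Or.inr (Or.inr (Or.inl rfl))
      · exact Or.inr (Or.inr (Or.inr (Or.inr rfl)))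
    · exact (k4 w hw hxw).imp_right fun h => Or.inr (Or.inr (Or.inl h))
  have hin : ∀ x, x = p1 ∨ x = p2 ∨ x = p3 ∨ x = p4 → x ∈ U ∧ x ∉ C ∪ D := by
    rintro x (rfl | rfl | rfl | rfl)
    exacts [⟨hp1, hn1⟩, ⟨hp2, hn2⟩, ⟨hp3, hn3⟩, ⟨hp4, hn4⟩]
  by_cases k : dg H U p4 ≤ 1
  · have hm : ∀ x, x ∈ ({p1, p2, p3} ∪ {p4} : Finset V) ↔ x = p1 ∨ x = p2 ∨ x = p3 ∨ x = p4 := by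
      intro x
      simp only [Finset.mem_union, Finset.mem_insert, Finset.mem_singleton, or_assoc]
    refine done (C₂ := {p1, p2, p3}) (D₂ := {p4}) (by simp) (s.add ?_ ?_ ?_ ?_ ?_ ?_ ?_)
    · exact fun x hx => hin x ((hm x).1 hx)
    · simpa using ⟨n14, n24, a34.ne'⟩
    · intro d hd
      rw [Finset.mem_singleton.1 hd]
      exact ⟨p3, by simp, a34.symm⟩
    · intro d hd e he c _ hde
      exact absurd ((Finset.mem_singleton.1 hd).trans (Finset.mem_singleton.1 he).symm) hde
    · intro c hc
      simp only [Finset.mem_insert, Finset.mem_singleton] at hc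
      rcases hc with rfl | rfl | rfl
      · exact s.sc.attach Finset.subset_union_left htC n1C ht1.symm
      · exact Or.inr ⟨p1, by simp, t, Finset.mem_union_left _ htC, a12.symm, ht1.symm, t2⟩
      · exact Or.inr ⟨p2, by simp, p1, by simp, a23.symm, a12.symm, n13.symm⟩
    · intro x hx w hw hxw
      rw [hm]
      exact hout x ((hm x).1 hx) w hw hxw
    · have h1 : wt H U ({p1, p2, p3} ∪ {p4}) ≤ 3 := by
        refine (Finset.card_le_card (t := {p1, p2, p3}) ?_).trans Finset.card_le_three
        intro x hx
        rw [Finset.mem_filter, Finset.mem_union] at hx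
        rcases hx.1 with h1 | h1
        · exact h1
        · rw [Finset.mem_singleton.1 h1] at hx
          exact absurd hx.2 (by omega)
      rw [Finset.card_singleton]
      omega
  · have hm : ∀ x, x ∈ ({p1, p4} ∪ {p2, p3} : Finset V) ↔ x = p1 ∨ x = p2 ∨ x = p3 ∨ x = p4 := by
      intro x
      simp only [Finset.mem_union, Finset.mem_insert, Finset.mem_singleton]
      tauto
    obtain ⟨b, hb, hb3, h4b, -⟩ := dg_two_of (show dg H U p4 = 2 by omega) hp3 a34.symm
    have hbC : b ∈ C := by
      rcases k4 b hb h4b with h3 | h3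
      · exact s.big b hb h3
      · exact absurd h3 hb3
    refine done (C₂ := {p1, p4}) (D₂ := {p2, p3}) (by simp) (s.add ?_ ?_ ?_ ?_ ?_ ?_ ?_)
    · exact fun x hx => hin x ((hm x).1 hx)
    · simpa using ⟨⟨a12.ne', n24.symm⟩, n13, a34.ne⟩
    · intro d hd
      simp only [Finset.mem_insert, Finset.mem_singleton] at hd
      rcases hd with rfl | rfl
      · exact ⟨p1, by simp, a12.symm⟩
      · exact ⟨p4, by simp, a34⟩
    · intro d hd e he c _ hde hdc hec
      simp only [Finset.mem_insert, Finset.mem_singleton] at hd he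
      have hadj : H.Adj d e := by
        rcases hd with rfl | rfl <;> rcases he with rfl | rfl
        exacts [absurd rfl hde, a23, a23.symm, absurd rfl hde]
      exact (h.g.no3 _ _ _ hadj hec hdc).elim
    · intro c hc
      simp only [Finset.mem_insert, Finset.mem_singleton] at hc
      rcases hc with rfl | rfl
      · exact s.sc.attach Finset.subset_union_left htC n1C ht1.symm
      · exact s.sc.attach Finset.subset_union_left hbC
          (fun hc => hn4 (Finset.mem_union_left _ hc)) h4b
    · intro x hx w hw hxw
      rw [hm]
      exact hout x ((hm x).1 hx) w hw hxw
    · have h1 := wt_four (H := H) (U := U) p1 p4 p2 p3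
      have h2 : ({p2, p3} : Finset V).card = 2 := Finset.card_pair a23.ne
      rw [h2]
      omega

/-- A nonempty partial code can be enlarged until it is a strong code of all of `U`. -/
lemma Cex.no_state (h : Cex H U) (s : St H U C D) (hne : (C ∪ D).Nonempty) : False := by
  obtain ⟨n, hn⟩ : ∃ n, n = (U \ (C ∪ D)).card := ⟨_, rfl⟩
  induction n using Nat.strong_induction_on generalizing C D with
  | _ n ih =>
    by_cases hT : C ∪ D = U
    · refine h.full hT s.sc ?_
      have := s.phi
      rwa [hT] at this
    · obtain ⟨C', D', s', hss⟩ := h.grow s hne hT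
      refine ih _ ?_ s' (hne.mono hss.1) rfl
      have h1 := Finset.card_lt_card hss
      have h2 := Finset.card_le_card s'.sub
      rw [hn, Finset.card_sdiff_of_subset s'.sub, Finset.card_sdiff_of_subset s.sub]
      omega
end Girth5Codes

/-! ### The discharging argument -/

section Girth5Codes
open Classical
variable {V : Type*}
variable {H : SimpleGraph V} {U : Finset V}

/-- Some vertex has degree at least 3: otherwise the graph would be a short path or a cycle. -/
lemma Cex.exists_big (h : Cex H U) : ∃ u ∈ U, 3 ≤ dg H U u := by
  by_contra hno
  push Not at hno
  have small : ∀ u ∈ U, dg H U u ≤ 2 := fun u hu => by have := hno u hu; omega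
  have step : ∀ v ∈ U, ∀ a, dg H U v = 2 → a ∈ U → H.Adj v a → ∃ b ∈ U, b ≠ a ∧ H.Adj v b := by
    intro v _ a h2 ha hva
    obtain ⟨b, hb, hba, hvb, -⟩ := dg_two_of h2 ha hva
    exact ⟨b, hb, hba, hvb⟩
  have h4 := h.four_le
  by_cases hleaf : ∃ p ∈ U, dg H U p ≤ 1
  · obtain ⟨p1, hp1, d1⟩ := hleaf
    -- each stage: the path found so far is not a union of components
    obtain ⟨p2, hp2, a12⟩ : ∃ w ∈ U, H.Adj p1 w := by
      by_contra hh
      push Not at hh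
      have := h.conn (K := {p1}) (by simpa using hp1) (by simp) (by
        intro a ha b hb hab
        rw [Finset.mem_singleton.1 ha] at hab
        exact absurd hab (hh b hb))
      rw [← this] at h4
      simp at h4
    have N1 : ∀ w ∈ U, H.Adj p1 w → w = p2 := fun w hw hw1 => dg_one_uniq d1 hw hp2 hw1 a12
    obtain ⟨p3, hp3, a23, n13⟩ : ∃ w ∈ U, H.Adj p2 w ∧ w ≠ p1 := by
      by_contra hh
      push Not at hh
      have := h.conn (K := {p1, p2}) (by simp [Finset.insert_subset_iff, hp1, hp2]) (by simp) (by
        intro a ha b hb hab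
        simp only [Finset.mem_insert, Finset.mem_singleton] at ha ⊢
        rcases ha with rfl | rfl
        · exact Or.inr (N1 b hb hab)
        · exact Or.inl (hh b hb hab))
      rw [← this] at h4
      have := Finset.card_le_two (a := p1) (b := p2)
      omega
    have N2 : ∀ w ∈ U, H.Adj p2 w → w = p1 ∨ w = p3 :=
      fun w hw hw1 => dg_two_uniq (small p2 hp2) hp1 hp3 hw a12.symm a23 hw1 n13.symm
    obtain ⟨p4, hp4, a34, n24⟩ : ∃ w ∈ U, H.Adj p3 w ∧ w ≠ p2 := by
      by_contra hh
      push Not at hh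
      have := h.conn (K := {p1, p2, p3}) (by simp [Finset.insert_subset_iff, hp1, hp2, hp3])
        (by simp) (by
        intro a ha b hb hab
        simp only [Finset.mem_insert, Finset.mem_singleton] at ha ⊢
        rcases ha with rfl | rfl | rfl
        · exact Or.inr (Or.inl (N1 b hb hab))
        · exact (N2 b hb hab).imp_right Or.inr
        · exact Or.inr (Or.inl (hh b hb hab)))
      rw [← this] at h4
      have := Finset.card_le_three (a := p1) (b := p2) (c := p3)
      omega
    have N3 : ∀ w ∈ U, H.Adj p3 w → w = p2 ∨ w = p4 :=
      fun w hw hw1 => dg_two_uniq (small p3 hp3) hp2 hp4 hw a23.symm a34 hw1 n24.symm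
    have N4 : ∀ w ∈ U, H.Adj p4 w → w = p3 := by
      intro w hw hw4
      by_contra hh
      refine h.no_walk (p1 := p1) (p2 := p2) (p3 := p3) (p4 := p4) (p5 := w) ?_ a12 a23 a34 hw4
        n13.symm n24.symm (Ne.symm hh)
      simp only [List.mem_cons, List.not_mem_nil, or_false, forall_eq_or_imp, forall_eq]
      exact ⟨⟨hp1, small p1 hp1⟩, ⟨hp2, small p2 hp2⟩, ⟨hp3, small p3 hp3⟩, ⟨hp4, small p4 hp4⟩,
        hw, small w hw⟩
    have n14 : p4 ≠ p1 := by
      rintro rfl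
      exact h.g.no3 _ _ _ a12 a23 a34.symm
    have hU : ({p1, p2, p3} ∪ {p4} : Finset V) = U := by
      refine h.conn ?_ (by simp) ?_
      · simp only [Finset.union_subset_iff, Finset.insert_subset_iff, Finset.singleton_subset_iff]
        exact ⟨⟨hp1, hp2, hp3⟩, hp4⟩
      · intro a ha b hb hab
        simp only [Finset.mem_union, Finset.mem_insert, Finset.mem_singleton] at ha ⊢
        rcases ha with (rfl | rfl | rfl) | rfl
        · exact Or.inl (Or.inr (Or.inl (N1 b hb hab)))
        · exact Or.inl ((N2 b hb hab).imp_right Or.inr)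
        · rcases N3 b hb hab with h1 | h1
          · exact Or.inl (Or.inr (Or.inl h1))
          · exact Or.inr h1
        · exact Or.inl (Or.inr (Or.inr (N4 b hb hab)))
    refine h.full hU ⟨?_, ?_, ?_, ?_⟩ ?_
    · simpa using ⟨n14, n24, a34.ne'⟩
    · intro d hd
      rw [Finset.mem_singleton.1 hd]
      exact ⟨p3, by simp, a34.symm⟩
    · intro d hd e he c _ hde
      exact absurd ((Finset.mem_singleton.1 hd).trans (Finset.mem_singleton.1 he).symm) hde
    · intro c hc
      simp only [Finset.mem_insert, Finset.mem_singleton] at hc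
      rcases hc with rfl | rfl | rfl
      · exact Or.inr ⟨p2, by simp, p3, by simp, a12, a23, n13⟩
      · exact Or.inl ⟨p1, by simp, p3, by simp, n13.symm, a12.symm, a23⟩
      · exact Or.inr ⟨p2, by simp, p1, by simp, a23.symm, a12.symm, n13.symm⟩
    · have h1 : wt H U U ≤ 3 := by
        refine (Finset.card_le_card (t := {p2, p3, p4}) ?_).trans Finset.card_le_three
        intro x hx
        rw [Finset.mem_filter] at hx
        obtain ⟨hx, hx2⟩ := hx
        have hx' : x ∈ ({p1, p2, p3} ∪ {p4} : Finset V) := by rwa [hU]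
        simp only [Finset.mem_union, Finset.mem_insert, Finset.mem_singleton] at hx' ⊢
        rcases hx' with (rfl | h1 | h1) | h1
        · omega
        exacts [Or.inl h1, Or.inr (Or.inl h1), Or.inr (Or.inr h1)]
      rw [Finset.card_singleton]
      omega
  · push Not at hleaf
    have two : ∀ u ∈ U, dg H U u = 2 := fun u hu => by
      have := small u hu
      have := hleaf u hu
      omega
    obtain ⟨p1, hp1⟩ : U.Nonempty := Finset.card_pos.1 (by omega)
    obtain ⟨p2, hp2, a12⟩ := dg_pos (show 1 ≤ dg H U p1 by rw [two p1 hp1]; omega)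
    obtain ⟨p3, hp3, n13, a23⟩ := step p2 hp2 p1 (two p2 hp2) hp1 a12.symm
    obtain ⟨p4, hp4, n24, a34⟩ := step p3 hp3 p2 (two p3 hp3) hp2 a23.symm
    obtain ⟨p5, hp5, n35, a45⟩ := step p4 hp4 p3 (two p4 hp4) hp3 a34.symm
    refine h.no_walk (p1 := p1) (p2 := p2) (p3 := p3) (p4 := p4) (p5 := p5) ?_ a12 a23 a34 a45
        n13.symm n24.symm n35.symm
    simp only [List.mem_cons, List.not_mem_nil, or_false, forall_eq_or_imp, forall_eq]
    exact ⟨⟨hp1, small p1 hp1⟩, ⟨hp2, small p2 hp2⟩, ⟨hp3, small p3 hp3⟩, ⟨hp4, small p4 hp4⟩,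
      hp5, small p5 hp5⟩

/-- Vertices of degree 2 both of whose neighbours have degree at least 3. -/
noncomputable def mids (H : SimpleGraph V) (U : Finset V) : Finset V :=
  U.filter (fun m => dg H U m = 2 ∧ ∀ w ∈ U, H.Adj m w → 3 ≤ dg H U w)

/-- Vertices of degree at least 3. -/
noncomputable def bigs (H : SimpleGraph V) (U : Finset V) : Finset V :=
  U.filter (fun u => 3 ≤ dg H U u)

lemma mem_mids {m : V} : m ∈ mids H U ↔
    m ∈ U ∧ dg H U m = 2 ∧ ∀ w ∈ U, H.Adj m w → 3 ≤ dg H U w := by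
  unfold mids
  rw [Finset.mem_filter]

lemma mem_bigs {u : V} : u ∈ bigs H U ↔ u ∈ U ∧ 3 ≤ dg H U u := by
  unfold bigs
  rw [Finset.mem_filter]

/-- Double counting of the edges between `bigs` and a set of `mids`. -/
lemma sum_bigs {F : Finset V} (hF : F ⊆ mids H U) :
    ∑ u ∈ bigs H U, (F.filter (fun m => H.Adj u m)).card = 2 * F.card := by
  have := Finset.sum_card_bipartiteAbove_eq_sum_card_bipartiteBelow (s := bigs H U) (t := F)
    (fun u m => H.Adj u m)
  unfold Finset.bipartiteAbove Finset.bipartiteBelow at this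
  rw [this, mul_comm, ← smul_eq_mul]
  refine Finset.sum_const_nat ?_
  intro m hm
  obtain ⟨-, h2, h3⟩ := mem_mids.1 (hF hm)
  rw [← h2]
  unfold dg
  congr 1
  ext w
  rw [Finset.mem_filter, mem_bigs, mem_nb]
  exact ⟨fun h => ⟨h.1.1, h.2.symm⟩, fun h => ⟨⟨h.1, h3 w h.1 h.2⟩, h.2.symm⟩⟩

/-- A minimal set `F` of `mids` dominating `bigs`. Each `f ∈ F` is the only `F`-neighbour of some
vertex of `bigs`; charging 11 to that vertex and 3 to the other neighbour of `f` gives the count. -/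
lemma Cex.exists_link (h : Cex H U) : ∃ F ⊆ mids H U, (∀ u ∈ bigs H U, ∃ f ∈ F, H.Adj u f) ∧
    14 * F.card + 4 * (bigs H U).card ≤ 10 * (mids H U).card := by
  have core_le : ∀ u ∈ bigs H U, 3 ≤ ((mids H U).filter (fun m => H.Adj u m)).card := by
    intro u hu
    rw [mem_bigs] at hu
    refine (h.inner_three hu.1 hu.2).trans (Finset.card_le_card fun m hm => ?_)
    unfold core at hm
    rw [Finset.mem_filter, mem_nb] at hm
    rw [Finset.mem_filter, mem_mids]
    refine ⟨⟨hm.1.1, le_antisymm ?_ hm.2.1, hm.2.2⟩, hm.1.2⟩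
    by_contra hh
    exact h.indep hu.1 hm.1.1 hu.2 (by omega) hm.1.2
  obtain ⟨P, hP⟩ : ∃ P : Finset V → Prop, ∀ F, P F ↔ ∀ u ∈ bigs H U, ∃ f ∈ F, H.Adj u f :=
    ⟨_, fun _ => Iff.rfl⟩
  obtain ⟨F, hF, hmin⟩ := Finset.exists_min_image ((mids H U).powerset.filter P) Finset.card
    ⟨mids H U, by
      rw [Finset.mem_filter, Finset.mem_powerset, hP]
      refine ⟨subset_rfl, fun u hu => ?_⟩
      obtain ⟨f, hf⟩ := Finset.card_pos.1 (show 0 < _ from lt_of_lt_of_le (by norm_num) (core_le u hu))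
      exact ⟨f, (Finset.mem_filter.1 hf).1, (Finset.mem_filter.1 hf).2⟩⟩
  rw [Finset.mem_filter, Finset.mem_powerset, hP] at hF
  obtain ⟨hFM, hdom⟩ := hF
  refine ⟨F, hFM, hdom, ?_⟩
  have priv : ∀ f ∈ F, ∃ u ∈ bigs H U, H.Adj u f ∧ ∀ f' ∈ F, H.Adj u f' → f' = f := by
    intro f hf
    by_contra hno
    push Not at hno
    have h1 := hmin (F.erase f) (by
      rw [Finset.mem_filter, Finset.mem_powerset, hP]
      refine ⟨(F.erase_subset f).trans hFM, fun u hu => ?_⟩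
      obtain ⟨g, hg, hug⟩ := hdom u hu
      by_cases hgf : g = f
      · subst hgf
        obtain ⟨f', hf', huf', hne⟩ := hno u hu hug
        exact ⟨f', Finset.mem_erase.2 ⟨hne, hf'⟩, huf'⟩
      · exact ⟨g, Finset.mem_erase.2 ⟨hgf, hg⟩, hug⟩)
    have h2 := Finset.card_erase_lt_of_mem hf
    omega
  choose! p hpB hpa hpu using priv
  have hPB : F.image p ⊆ bigs H U := by
    intro u hu
    obtain ⟨f, hf, rfl⟩ := Finset.mem_image.1 hu
    exact hpB f hf
  have hPc : (F.image p).card = F.card := by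
    apply Finset.card_image_of_injOn
    intro f hf g hg hfg
    exact hpu g hg f hf (hfg ▸ hpa f hf)
  have hP1 : ∀ u ∈ F.image p, (F.filter (fun m => H.Adj u m)).card ≤ 1 := by
    intro u hu
    obtain ⟨f, hf, rfl⟩ := Finset.mem_image.1 hu
    rw [Finset.card_le_one]
    intro a ha b hb
    rw [Finset.mem_filter] at ha hb
    rw [hpu f hf a ha.1 ha.2, hpu f hf b hb.1 hb.2]
  have hsum : ∑ u ∈ bigs H U, (8 * (if u ∈ F.image p then 1 else 0) +
      3 * (F.filter (fun m => H.Adj u m)).card + 4) ≤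
      ∑ u ∈ bigs H U, 5 * ((mids H U).filter (fun m => H.Adj u m)).card := by
    refine Finset.sum_le_sum fun u hu => ?_
    have h1 := core_le u hu
    have h2 : (F.filter (fun m => H.Adj u m)).card ≤
        ((mids H U).filter (fun m => H.Adj u m)).card :=
      Finset.card_le_card (Finset.filter_subset_filter _ hFM)
    split_ifs with hp
    · have := hP1 u hp
      omega
    · omega
  rw [Finset.sum_add_distrib, Finset.sum_add_distrib, ← Finset.mul_sum, ← Finset.mul_sum,
    ← Finset.mul_sum, sum_bigs hFM, sum_bigs subset_rfl, Finset.sum_const, smul_eq_mul,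
    ← Finset.card_filter, Finset.filter_mem_eq_inter, Finset.inter_eq_right.2 hPB, hPc] at hsum
  omega

/-- The code that starts the enlargement consists of `bigs` and of the set `F` of `Cex.exists_link`,
with the remaining `mids` as complement. -/
lemma Cex.false (h : Cex H U) : False := by
  obtain ⟨F, hF, hdom, hcount⟩ := h.exists_link
  obtain ⟨u, hu, hu3⟩ := h.exists_big
  have hdis : Disjoint (bigs H U) (mids H U) := by
    rw [Finset.disjoint_left]
    intro v hv hv'
    have := (mem_bigs.1 hv).2
    have := (mem_mids.1 hv').2.1
    omega
  have two : ∀ m ∈ mids H U, ∃ a ∈ bigs H U, ∃ b ∈ bigs H U, a ≠ b ∧ H.Adj m a ∧ H.Adj m b := by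
    intro m hm
    obtain ⟨-, h2, h3⟩ := mem_mids.1 hm
    obtain ⟨a, ha, b, hb, hab, h4, h5⟩ := dg_two h2.ge
    exact ⟨a, mem_bigs.2 ⟨ha, h3 a ha h4⟩, b, mem_bigs.2 ⟨hb, h3 b hb h5⟩, hab, h4, h5⟩
  have other : ∀ m ∈ mids H U, ∀ c, ∃ b ∈ bigs H U, b ≠ c ∧ H.Adj m b := by
    intro m hm c
    obtain ⟨a, ha, b, hb, hab, h4, h5⟩ := two m hm
    by_cases hac : a = c
    · exact ⟨b, hb, fun h => hab (hac.trans h.symm), h5⟩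
    · exact ⟨a, ha, hac, h4⟩
  have he : bigs H U ∪ F ∪ (mids H U \ F) = bigs H U ∪ mids H U := by
    rw [Finset.union_assoc, Finset.union_sdiff_of_subset hF]
  have hs : St H U (bigs H U ∪ F) (mids H U \ F) := by
    refine ⟨?_, ⟨?_, ?_, ?_, ?_⟩, ?_, ?_, ?_, ?_⟩
    · rw [he]
      exact Finset.union_subset (fun v hv => (mem_bigs.1 hv).1) (fun v hv => (mem_mids.1 hv).1)
    · rw [Finset.disjoint_union_left]
      exact ⟨hdis.mono_right Finset.sdiff_subset, Finset.disjoint_sdiff⟩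
    · intro d hd
      obtain ⟨b, hb, -, hdb⟩ := other d (Finset.mem_sdiff.1 hd).1 d
      exact ⟨b, Finset.mem_union_left _ hb, hdb⟩
    · intro d hd e _ c _ _ _ _
      obtain ⟨b, hb, hbc, hdb⟩ := other d (Finset.mem_sdiff.1 hd).1 c
      exact Or.inl ⟨b, Finset.mem_union_left _ hb, hbc, hdb⟩
    · intro c hc
      rcases Finset.mem_union.1 hc with hc | hc
      · obtain ⟨f, hf, hcf⟩ := hdom c hc
        obtain ⟨b, hb, hbc, hfb⟩ := other f (hF hf) c
        exact Or.inr ⟨f, Finset.mem_union_right _ hf, b, Finset.mem_union_left _ hb, hcf, hfb, hbc⟩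
      · obtain ⟨a, ha, b, hb, hab, h4, h5⟩ := two c (hF hc)
        exact Or.inl ⟨a, Finset.mem_union_left _ ha, b, Finset.mem_union_left _ hb, hab, h4, h5⟩
    · intro v hv h3
      exact Finset.mem_union_left _ (mem_bigs.2 ⟨hv, h3⟩)
    · intro m hm h2 h3
      rw [he]
      exact Finset.mem_union_right _ (mem_mids.2 ⟨hm, h2, h3⟩)
    · rw [he]
      intro t ht r hr hrT htr
      rcases Finset.mem_union.1 ht with ht | ht
      · exact (mem_bigs.1 ht).2
      · exact absurd (Finset.mem_union_left _ (mem_bigs.2 ⟨hr, (mem_mids.1 ht).2.2 r hr htr⟩)) hrT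
    · rw [he, Finset.card_sdiff_of_subset hF]
      have h1 : wt H U (bigs H U ∪ mids H U) ≤ (bigs H U).card + (mids H U).card :=
        (wt_le _).trans (Finset.card_union_le _ _)
      omega
  refine h.no_state hs ⟨u, ?_⟩
  exact Finset.mem_union_left _ (Finset.mem_union_left _ (mem_bigs.2 ⟨hu, hu3⟩))

/-- Without exceptional components there is a strong code with large complement. The induction is on
the number of vertices plus the degree sum, so that it covers deletion of vertices and of edges. -/
theorem col_of_good (g : G5 H) (hg : Good H U) : Col H U := by
  obtain ⟨n, hn⟩ : ∃ n, n = U.card + ∑ v ∈ U, dg H U v := ⟨_, rfl⟩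
  induction n using Nat.strong_induction_on generalizing H U with
  | _ n ih =>
    by_contra hcol
    refine Cex.false (H := H) (U := U) ⟨g, hg, hcol, ?_, ?_⟩
    · intro R hR hgR
      refine ih _ ?_ g hgR rfl
      rw [hn]
      have h1 := Finset.card_lt_card hR
      have h2 : ∑ v ∈ R, dg H R v ≤ ∑ v ∈ U, dg H U v :=
        (Finset.sum_le_sum fun v _ => dg_le hR.1 v).trans
          (Finset.sum_le_sum_of_subset hR.1)
      omega
    · rintro H' hH ⟨u, hu, v, hv, huv, hno⟩ hg'
      refine ih _ ?_ (g.mono hH) hg' rfl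
      rw [hn]
      refine Nat.add_lt_add_left (Finset.sum_lt_sum (fun w _ => ?_) ⟨u, hu, ?_⟩) _
      · refine Finset.card_le_card fun x hx => ?_
        rw [mem_nb] at hx ⊢
        exact ⟨hx.1, hH hx.2⟩
      · refine Finset.card_lt_card (Finset.ssubset_iff_of_subset (fun x hx => ?_) |>.2 ⟨v, ?_, ?_⟩)
        · rw [mem_nb] at hx ⊢
          exact ⟨hx.1, hH hx.2⟩
        · exact mem_nb.2 ⟨hv, huv⟩
        · exact fun h => hno (mem_nb.1 h).2

end Girth5Codes

/-! ### Weak codes and identifying codes -/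

section Girth5Codes
open Classical
variable {V : Type*}
variable {H : SimpleGraph V} {U : Finset V}

/-- A weakening of `SC` which still yields identifying codes: a code vertex may also be isolated in
the graph induced by `C`, provided it is not the only code neighbour of a vertex of `D`. -/
structure WC (H : SimpleGraph V) (C D : Finset V) : Prop where
  disj : Disjoint C D
  dom : ∀ d ∈ D, ∃ c ∈ C, H.Adj d c
  priv : ∀ d ∈ D, ∀ e ∈ D, ∀ c ∈ C, d ≠ e → H.Adj d c → H.Adj e c →
    (∃ b ∈ C, b ≠ c ∧ H.Adj d b) ∨ (∃ b ∈ C, b ≠ c ∧ H.Adj e b)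
  comp : ∀ c ∈ C, InP3 H C c ∨
    ((∀ a ∈ C, ¬ H.Adj c a) ∧ ∀ d ∈ D, H.Adj d c → ∃ b ∈ C, b ≠ c ∧ H.Adj d b)

/-- The analogue of `Col` for weak codes. -/
def WCol (H : SimpleGraph V) (U : Finset V) : Prop :=
  ∃ C D, C ∪ D = U ∧ WC H C D ∧ 2 * wt H U U ≤ 7 * D.card

lemma Col.wcol (h : Col H U) : WCol H U := by
  obtain ⟨C, D, he, hs, hw⟩ := h
  exact ⟨C, D, he, ⟨hs.disj, hs.dom, hs.priv, fun c hc => Or.inl (hs.comp c hc)⟩, hw⟩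

/-- An independent set in which every other vertex has two neighbours. -/
lemma WC.of_indep {C D : Finset V} (hd : Disjoint C D) (hC : ∀ a ∈ C, ∀ b ∈ C, ¬ H.Adj a b)
    (h2 : ∀ d ∈ D, ∃ a ∈ C, ∃ b ∈ C, a ≠ b ∧ H.Adj d a ∧ H.Adj d b) : WC H C D := by
  have other : ∀ d ∈ D, ∀ c, ∃ b ∈ C, b ≠ c ∧ H.Adj d b := by
    intro m hm c
    obtain ⟨a, ha, b, hb, hab, h4, h5⟩ := h2 m hm
    by_cases hac : a = c
    · exact ⟨b, hb, fun h => hab (hac.trans h.symm), h5⟩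
    · exact ⟨a, ha, hac, h4⟩
  refine ⟨hd, fun d hd => ?_, fun d hd e _ c _ _ _ _ => Or.inl (other d hd c),
    fun c hc => Or.inr ⟨hC c hc, fun d hd _ => other d hd c⟩⟩
  obtain ⟨b, hb, -, h⟩ := other d hd d
  exact ⟨b, hb, h⟩

/-- Weak codes of a union of components and of the rest together form a weak code. -/
lemma WCol.union {K : Finset V} (h : ClosedIn H U K) (hK : K ⊆ U) (h1 : WCol H K)
    (h2 : WCol H (U \ K)) : WCol H U := by
  obtain ⟨C, D, rfl, hs, hw⟩ := h1
  obtain ⟨C', D', he, hs', hw'⟩ := h2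
  have hdis : Disjoint (C ∪ D) (C' ∪ D') := by rw [he]; exact Finset.disjoint_sdiff
  have hU : C ∪ D ∪ (C' ∪ D') = U := by
    rw [he]
    exact Finset.union_sdiff_of_subset hK
  -- there are no edges between the two parts
  have hno : ∀ x ∈ C ∪ D, ∀ y ∈ C' ∪ D', ¬ H.Adj x y := by
    intro x hx y hy hxy
    have hyU : y ∈ U := hU ▸ Finset.mem_union_right _ hy
    exact Finset.disjoint_left.1 hdis (h x hx y hyU hxy) hy
  have l1 : ∀ x ∈ C, x ∈ C ∪ D := fun x hx => Finset.mem_union_left _ hx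
  have l2 : ∀ x ∈ D, x ∈ C ∪ D := fun x hx => Finset.mem_union_right _ hx
  have r1 : ∀ x ∈ C', x ∈ C' ∪ D' := fun x hx => Finset.mem_union_left _ hx
  have r2 : ∀ x ∈ D', x ∈ C' ∪ D' := fun x hx => Finset.mem_union_right _ hx
  refine ⟨C ∪ C', D ∪ D', ?_, ⟨?_, ?_, ?_, ?_⟩, ?_⟩
  · rw [Finset.union_union_union_comm, hU]
  · rw [Finset.disjoint_union_left, Finset.disjoint_union_right, Finset.disjoint_union_right]
    exact ⟨⟨hs.disj, hdis.mono (fun x hx => l1 x hx) (fun x hx => r2 x hx)⟩,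
      (hdis.mono (fun x hx => l2 x hx) (fun x hx => r1 x hx)).symm, hs'.disj⟩
  · intro d hd
    rcases Finset.mem_union.1 hd with hd | hd
    · obtain ⟨c, hc, h3⟩ := hs.dom d hd
      exact ⟨c, Finset.mem_union_left _ hc, h3⟩
    · obtain ⟨c, hc, h3⟩ := hs'.dom d hd
      exact ⟨c, Finset.mem_union_right _ hc, h3⟩
  · intro d hd e he' c hc hde h3 h4
    rcases Finset.mem_union.1 hc with hc | hc
    · rcases Finset.mem_union.1 hd with hd | hd
      · rcases Finset.mem_union.1 he' with he' | he'
        · rcases hs.priv d hd e he' c hc hde h3 h4 with ⟨b, hb, h5⟩ | ⟨b, hb, h5⟩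
          · exact Or.inl ⟨b, Finset.mem_union_left _ hb, h5⟩
          · exact Or.inr ⟨b, Finset.mem_union_left _ hb, h5⟩
        · exact absurd h4.symm (hno c (l1 c hc) e (r2 e he'))
      · exact absurd h3.symm (hno c (l1 c hc) d (r2 d hd))
    · rcases Finset.mem_union.1 hd with hd | hd
      · exact absurd h3 (hno d (l2 d hd) c (r1 c hc))
      · rcases Finset.mem_union.1 he' with he' | he'
        · exact absurd h4 (hno e (l2 e he') c (r1 c hc))
        · rcases hs'.priv d hd e he' c hc hde h3 h4 with ⟨b, hb, h5⟩ | ⟨b, hb, h5⟩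
          · exact Or.inl ⟨b, Finset.mem_union_right _ hb, h5⟩
          · exact Or.inr ⟨b, Finset.mem_union_right _ hb, h5⟩
  · intro c hc
    rcases Finset.mem_union.1 hc with hc | hc
    · rcases hs.comp c hc with h3 | ⟨h3, h4⟩
      · exact Or.inl (h3.mono le_rfl Finset.subset_union_left)
      · refine Or.inr ⟨fun a ha hca => ?_, fun d hd hdc => ?_⟩
        · rcases Finset.mem_union.1 ha with ha | ha
          · exact h3 a ha hca
          · exact hno c (l1 c hc) a (r1 a ha) hca
        · rcases Finset.mem_union.1 hd with hd | hd
          · obtain ⟨b, hb, h5⟩ := h4 d hd hdc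
            exact ⟨b, Finset.mem_union_left _ hb, h5⟩
          · exact absurd hdc.symm (hno c (l1 c hc) d (r2 d hd))
    · rcases hs'.comp c hc with h3 | ⟨h3, h4⟩
      · exact Or.inl (h3.mono le_rfl Finset.subset_union_right)
      · refine Or.inr ⟨fun a ha hca => ?_, fun d hd hdc => ?_⟩
        · rcases Finset.mem_union.1 ha with ha | ha
          · exact hno a (l1 a ha) c (r1 c hc) hca.symm
          · exact h3 a ha hca
        · rcases Finset.mem_union.1 hd with hd | hd
          · exact absurd hdc (hno d (l2 d hd) c (r1 c hc))
          · obtain ⟨b, hb, h5⟩ := h4 d hd hdc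
            exact ⟨b, Finset.mem_union_right _ hb, h5⟩
  · have e1 : wt H U (C ∪ D) = wt H (C ∪ D) (C ∪ D) := wt_congr fun v hv => (h.dg hK hv).symm
    have e2 : wt H U (U \ (C ∪ D)) = wt H (U \ (C ∪ D)) (U \ (C ∪ D)) :=
      wt_congr fun v hv => ((h.compl hK).dg Finset.sdiff_subset hv).symm
    have e3 := wt_union (H := H) (U := U) (Finset.disjoint_sdiff (s := C ∪ D) (t := U))
    rw [Finset.union_sdiff_of_subset hK] at e3
    have e4 : (D ∪ D').card = D.card + D'.card := by
      apply Finset.card_union_of_disjoint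
      exact (hdis.mono_left Finset.subset_union_right).mono_right Finset.subset_union_right
    omega

/-- Every second vertex of an 8-cycle is taken. -/
lemma wcol_oct (g : G5 H) {K : Finset V} (hKU : K ⊆ U) (hc : ClosedIn H U K) (h8 : K.card = 8)
    (h2 : ∀ v ∈ K, dg H U v = 2) : WCol H K := by
  obtain ⟨z, hz⟩ : K.Nonempty := Finset.card_pos.1 (by omega)
  obtain ⟨c1, c2, c3, c4, c5, c6, c7, o⟩ := oct_exists g hKU hc h8 h2 hz
  have nd := o.nodup
  simp only [List.nodup_cons, List.mem_cons, List.not_mem_nil, or_false, not_or, not_false_iff,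
    List.nodup_nil, and_true] at nd
  obtain ⟨⟨n01, n02, n03, n04, n05, n06, n07⟩, ⟨n12, n13, n14, n15, n16, n17⟩,
    ⟨n23, n24, n25, n26, n27⟩, ⟨n34, n35, n36, n37⟩, ⟨n45, n46, n47⟩, ⟨n56, n57⟩, n67⟩ := nd
  have hdis : Disjoint ({z, c2, c4, c6} : Finset V) {c1, c3, c5, c7} := by
    rw [Finset.disjoint_left]
    intro x hx hx'
    simp only [Finset.mem_insert, Finset.mem_singleton] at hx hx'
    rcases hx with rfl | rfl | rfl | rfl
    · rcases hx' with h | h | h | h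
      exacts [n01 h, n03 h, n05 h, n07 h]
    · rcases hx' with h | h | h | h
      exacts [n12 h.symm, n23 h, n25 h, n27 h]
    · rcases hx' with h | h | h | h
      exacts [n14 h.symm, n34 h.symm, n45 h, n47 h]
    · rcases hx' with h | h | h | h
      exacts [n16 h.symm, n36 h.symm, n56 h.symm, n67 h]
  have hsub : ({z, c2, c4, c6} : Finset V) ⊆ U := by
    refine subset_trans ?_ hKU
    rw [o.eq]
    intro x hx
    simp only [Finset.mem_insert, Finset.mem_singleton] at hx ⊢
    rcases hx with rfl | rfl | rfl | rfl <;> simp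
  refine ⟨{z, c2, c4, c6}, {c1, c3, c5, c7}, ?_, WC.of_indep hdis ?_ ?_, ?_⟩
  · rw [o.eq]
    ext x
    simp only [Finset.mem_union, Finset.mem_insert, Finset.mem_singleton]
    tauto
  · intro a ha b hb hab
    have hbU := hsub hb
    refine Finset.disjoint_left.1 hdis hb ?_
    simp only [Finset.mem_insert, Finset.mem_singleton] at ha ⊢
    rcases ha with rfl | rfl | rfl | rfl
    · rcases o.n0 b hbU hab with h | h <;> simp [h]
    · rcases o.n2 b hbU hab with h | h <;> simp [h]
    · rcases o.n4 b hbU hab with h | h <;> simp [h]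
    · rcases o.n6 b hbU hab with h | h <;> simp [h]
  · intro d hd
    simp only [Finset.mem_insert, Finset.mem_singleton] at hd
    rcases hd with rfl | rfl | rfl | rfl
    · exact ⟨z, by simp, c2, by simp, n02, o.a01.symm, o.a12⟩
    · exact ⟨c2, by simp, c4, by simp, n24, o.a23.symm, o.a34⟩
    · exact ⟨c4, by simp, c6, by simp, n46, o.a45.symm, o.a56⟩
    · exact ⟨c6, by simp, z, by simp, Ne.symm n06, o.a67.symm, o.a70⟩
  · have h1 : ({c1, c3, c5, c7} : Finset V).card = 4 :=
      card_of_nodup (l := [c1, c3, c5, c7]) (by simp) (by simp [n13, n15, n17, n35, n37, n57])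
    have h3 := wt_le (H := H) (U := K) K
    omega

/-- A union of components without isolated vertices and `K₂` components has a good weak code:
the exceptional components are now three-vertex paths and 8-cycles. -/
lemma wcol (g : G5 H) (hiso : ∀ v, ∃ w, H.Adj v w)
    (htw : ∀ a b, H.Adj a b → ∃ w, w ≠ a ∧ w ≠ b ∧ (H.Adj a w ∨ H.Adj b w))
    (U : Finset V) (hU : ∀ v ∈ U, ∀ w, H.Adj v w → w ∈ U) : WCol H U := by
  obtain ⟨n, hn⟩ : ∃ n, n = U.card := ⟨_, rfl⟩
  induction n using Nat.strong_induction_on generalizing U with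
  | _ n ih =>
    by_cases hg : Good H U
    · exact (col_of_good g hg).wcol
    unfold Good at hg
    push Not at hg
    obtain ⟨K₀, hK₀⟩ := hg
    obtain ⟨K, hK, hmin⟩ := Finset.exists_min_image (U.powerset.filter (BadSet H U)) Finset.card
      ⟨K₀, Finset.mem_filter.2 ⟨Finset.mem_powerset.2 hK₀.1, hK₀⟩⟩
    have hK := (Finset.mem_filter.1 hK).2
    obtain ⟨hKU, hne, hc, -⟩ := id hK
    have hKc : ∀ v ∈ K, ∀ w, H.Adj v w → w ∈ K := fun v hv w hvw =>
      hc v hv w (hU v (hKU hv) w hvw) hvw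
    refine WCol.union hc hKU ?_ (ih (U \ K).card ?_ (U \ K) ?_ rfl)
    · rcases bad_shape g hK (fun L hL =>
        hmin L (Finset.mem_filter.2 ⟨Finset.mem_powerset.2 hL.1, hL⟩)) with
        ⟨z, rfl⟩ | ⟨a, b, -, rfl, hab⟩ | ⟨a, b, c, hab, hac, hbc, rfl, h1, h2, h3⟩ | ⟨h8, h2⟩
      · obtain ⟨w, hw⟩ := hiso z
        have := hKc z (by simp) w hw
        exact absurd (Finset.mem_singleton.1 this) hw.ne'
      · obtain ⟨w, hwa, hwb, hw⟩ := htw a b hab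
        have : w ∈ ({a, b} : Finset V) := hw.elim (hKc a (by simp) w) (hKc b (by simp) w)
        simp [hwa, hwb] at this
      · refine ⟨{a, c}, {b}, ?_, WC.of_indep ?_ ?_ ?_, ?_⟩
        · ext x
          simp only [Finset.mem_union, Finset.mem_insert, Finset.mem_singleton]
          tauto
        · simpa using ⟨hab.symm, hbc⟩
        · intro x hx y hy hxy
          simp only [Finset.mem_insert, Finset.mem_singleton] at hx hy
          rcases hx with rfl | rfl <;> rcases hy with rfl | rfl
          exacts [hxy.ne rfl, h3 hxy, h3 hxy.symm, hxy.ne rfl]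
        · intro d hd
          rw [Finset.mem_singleton.1 hd]
          exact ⟨a, by simp, c, by simp, hac, h1.symm, h2⟩
        · have h4 := wt_le (H := H) (U := {a, b, c}) {a, b, c}
          have h5 := Finset.card_le_three (a := a) (b := b) (c := c)
          rw [Finset.card_singleton]
          omega
      · exact wcol_oct g hKU hc h8 h2
    · rw [hn]
      exact Finset.card_lt_card (Finset.sdiff_ssubset hKU hne)
    · intro v hv w hvw
      exact hc.compl hKU v hv w (hU v (Finset.mem_sdiff.1 hv).1 w hvw) hvw

/-- Weak codes separate: `u` and `v` with the same code vertices in their closed neighbourhoods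
agree. Two code vertices with the same trace would be adjacent and, with the third vertex of a path
in `C`, create a triangle; two complement vertices sharing two code neighbours would create a
4-cycle. -/
lemma WC.sep (g : G5 H) {C D : Finset V} (hs : WC H C D) (hCD : ∀ v, v ∈ C ∪ D) {u v : V}
    (h : ∀ x ∈ C, (x = u ∨ H.Adj u x) ↔ (x = v ∨ H.Adj v x)) : u = v := by
  have mixed : ∀ u v : V, u ∈ C → u ≠ v →
      (∀ x ∈ C, (x = u ∨ H.Adj u x) ↔ (x = v ∨ H.Adj v x)) → False := by
    intro u v hu huv h
    have hvu : H.Adj v u := ((h u hu).1 (Or.inl rfl)).resolve_left huv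
    -- a code neighbour of `u` other than `v` closes a triangle
    have tri : ∀ a ∈ C, a ≠ v → ¬ H.Adj u a := by
      intro a ha hav hua
      exact g.no3 _ _ _ hvu hua (((h a ha).1 (Or.inr hua)).resolve_left hav)
    rcases hs.comp u hu with (⟨a, ha, b, hb, hab, h1, h2⟩ | ⟨a, ha, b, hb, h1, h2, h3⟩) | ⟨h1, h2⟩
    · by_cases hav : a = v
      · exact tri b hb (fun hbv => hab (hav.trans hbv.symm)) h2
      · exact tri a ha hav h1
    · by_cases hav : a = v
      · subst hav
        exact tri b hb h2.ne' (((h b hb).2 (Or.inr h2)).resolve_left h3)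
      · exact tri a ha hav h1
    · rcases Finset.mem_union.1 (hCD v) with hv | hv
      · exact h1 v hv hvu.symm
      · obtain ⟨b, hb, hbu, hvb⟩ := h2 v hv hvu
        exact h1 b hb (((h b hb).2 (Or.inr hvb)).resolve_left hbu)
  by_contra huv
  rcases Finset.mem_union.1 (hCD u) with hu | hu
  · exact mixed u v hu huv h
  rcases Finset.mem_union.1 (hCD v) with hv | hv
  · exact mixed v u hv (Ne.symm huv) fun x hx => (h x hx).symm
  have nu : ∀ x ∈ C, x ≠ u := fun x hx he => Finset.disjoint_left.1 hs.disj hx (he ▸ hu)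
  have nv : ∀ x ∈ C, x ≠ v := fun x hx he => Finset.disjoint_left.1 hs.disj hx (he ▸ hv)
  have h' : ∀ x ∈ C, H.Adj u x ↔ H.Adj v x := by
    intro x hx
    have := h x hx
    simpa [nu x hx, nv x hx] using this
  obtain ⟨c, hc, huc⟩ := hs.dom u hu
  have hvc := (h' c hc).1 huc
  rcases hs.priv u hu v hv c hc huv huc hvc with ⟨b, hb, hbc, h1⟩ | ⟨b, hb, hbc, h1⟩
  · exact g.no4 u c v b huv hbc.symm huc hvc.symm ((h' b hb).1 h1) h1.symm
  · exact g.no4 u c v b huv hbc.symm huc hvc.symm h1 ((h' b hb).2 h1).symm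

/-- A triangle or a 4-cycle is a closed walk that is a cycle, of length less than 5. -/
lemma g5_of_girth (G : SimpleGraph V) (h : 5 ≤ G.egirth) : G5 G := by
  rw [SimpleGraph.le_egirth] at h
  constructor
  · intro a b c h1 h2 h3
    have := h a (.cons h1 (.cons h2 (.cons h3.symm .nil))) (by
      rw [SimpleGraph.Walk.cons_isCycle_iff]
      simp [h1.ne, h2.ne, h3.ne, h1.ne', h3.ne'])
    simp at this
    norm_cast at this
  · intro a b c d hac hbd h1 h2 h3 h4
    have := h a (.cons h1 (.cons h2 (.cons h3 (.cons h4 .nil)))) (by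
      rw [SimpleGraph.Walk.cons_isCycle_iff]
      simp [h1.ne, h2.ne, h3.ne, h1.ne', h4.ne, h4.ne', hac, hbd, hac.symm])
    simp at this
    norm_cast at this

end Girth5Codes

theorem stmt_9 {V : Type*} [Fintype V] (G : SimpleGraph V)
    (hid : Identifiable G) (hgirth : 5 ≤ G.egirth)
    (hiso : ∀ v : V, (G.neighborSet v).Nonempty) :
    ∃ C : Set V, IsIdCode G C ∧
      (C.ncard : ℝ) ≤ (5 * Fintype.card V + 2 * (leaves G).ncard) / 7 := by
  classical
  have g := g5_of_girth G hgirth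
  obtain ⟨C, D, hCD, hs, hw⟩ := wcol g (fun v => hiso v) (by
    intro a b hab
    by_contra hno
    push Not at hno
    refine hab.ne (hid a b ?_)
    ext x
    simp only [closedNbr, Set.mem_insert_iff, SimpleGraph.mem_neighborSet]
    constructor
    · rintro (rfl | hx)
      · exact Or.inr hab.symm
      · by_contra hh
        rw [not_or] at hh
        exact (hno x hx.ne' hh.1).1 hx
    · rintro (rfl | hx)
      · exact Or.inr hab
      · by_contra hh
        rw [not_or] at hh
        exact (hno x hh.1 hx.ne').2 hx) Finset.univ (fun _ _ _ _ => Finset.mem_univ _)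
  have hall : ∀ v, v ∈ C ∪ D := fun v => hCD ▸ Finset.mem_univ v
  refine ⟨C, ⟨fun v => ?_, fun u v huv => hs.sep g hall fun x hx => ?_⟩, ?_⟩
  · rcases Finset.mem_union.1 (hall v) with hv | hv
    · exact ⟨v, Set.mem_insert _ _, hv⟩
    · obtain ⟨c, hc, hvc⟩ := hs.dom v hv
      exact ⟨c, Set.mem_insert_of_mem _ hvc, hc⟩
  · have := Set.ext_iff.1 huv x
    simpa [closedNbr, hx] using this
  · have hcard : C.card + D.card = Fintype.card V := by
      rw [← Finset.card_union_of_disjoint hs.disj, hCD, Finset.card_univ]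
    have hdg : ∀ v, dg G Finset.univ v = (G.neighborSet v).ncard := by
      intro v
      unfold dg
      rw [← Set.ncard_coe_finset]
      congr 1
      ext w
      simp [nb]
    -- without isolated vertices, the vertices of degree less than 2 are the leaves
    have hleaf : wt G Finset.univ Finset.univ + (leaves G).ncard = Fintype.card V := by
      have h1 : leaves G = ((Finset.univ.filter fun v => ¬ 2 ≤ dg G Finset.univ v : Finset V) :
          Set V) := by
        ext v
        have h2 : 1 ≤ (G.neighborSet v).ncard := (Set.ncard_pos (Set.toFinite _)).2 (hiso v)
        simp only [leaves, IsLeaf, Set.mem_setOf_eq, Finset.coe_filter, Finset.mem_univ, true_and,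
          hdg]
        omega
      rw [h1, Set.ncard_coe_finset, ← Finset.card_univ, wt]
      convert Finset.card_filter_add_card_filter_not (s := Finset.univ)
        (fun v => 2 ≤ dg G Finset.univ v)
    rw [Set.ncard_coe_finset, le_div_iff₀ (by norm_num)]
    have h7 : C.card * 7 ≤ 5 * Fintype.card V + 2 * (leaves G).ncard := by omega
    exact_mod_cast h7
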